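/- arXiv:1608.01359 — 2 statements merged into one kernel-verified Lean document; each statement's English description precedes it below -/
import Mathlib

section
/- Hopf-type lemma for supersolutions in half-balls. Fix an integer n ≥ 2, reals 0 < λ ≤ Λ, and an exponent q > n. Let b : B₂⁺ → ℝ be continuous with b ≥ 0 and ‖b‖_{L^q(B₂⁺)} < ∞, and let v be a C² function on B₂⁺ with v > 0 in B₂⁺ and 𝓜⁻(D²v(x)) − b(x)|Dv(x)| ≤ 0 for all x ∈ B₂⁺. Then inf_{x ∈ B₁⁺} v(x)/x_n > 0. -/
/-!
Set `β = n Λ / λ`. Near a point `x₀` of the flat boundary, work in the cylinder of radius `r` and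
height `r / (2 β)` standing on `x_n = 0`, and suppose that `v ≥ α x_n - δ r` there, with `δ` small
compared with `α`. Adding to `v` the quadratic polynomial
`(3 β δ - α) x_n + (δ / r) (|x - x₀|² - β x_n²)` produces a function that is nonnegative on the
boundary of the cylinder. At a contact point with an affine function of small slope its Hessian is
positive semidefinite with trace at most a multiple of `b |Dv|`, and `|Dv|` is bounded by the
gradient of the polynomial. The Aleksandrov–Bakelman–Pucci estimate, together with the decay
`r ^ (1 - n / q)` of the `Lⁿ` norm of `b` on cylinders of radius `r`, then gives
`v ≥ (α - 3 β δ) x_n - (δ / 4) ρ r` on the cylinder of radius `ρ r`.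
When this is iterated, the losses of slope are summable while the error decays faster than the
scale, so `v` grows at least linearly along the axis of the cylinder. Away from the flat boundary
`v` is bounded below by compactness.
-/

open MeasureTheory
open scoped ENNReal

/-- The Pucci minimal extremal operator `𝓜⁻(M)` with ellipticity constants `lam ≤ Lam`:
the infimum of `tr(A*M)` over symmetric matrices `A` with `lam•I ≤ A ≤ Lam•I`. -/
noncomputable def pucciMinus (n : ℕ) (lam Lam : ℝ) (M : Matrix (Fin n) (Fin n) ℝ) : ℝ :=
  sInf { t : ℝ | ∃ A : Matrix (Fin n) (Fin n) ℝ, A.IsSymm ∧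
    (A - lam • (1 : Matrix (Fin n) (Fin n) ℝ)).PosSemidef ∧
    (Lam • (1 : Matrix (Fin n) (Fin n) ℝ) - A).PosSemidef ∧ t = (A * M).trace }

/-- The Pucci maximal extremal operator `𝓜⁺(M)`. -/
noncomputable def pucciPlus (n : ℕ) (lam Lam : ℝ) (M : Matrix (Fin n) (Fin n) ℝ) : ℝ :=
  sSup { t : ℝ | ∃ A : Matrix (Fin n) (Fin n) ℝ, A.IsSymm ∧
    (A - lam • (1 : Matrix (Fin n) (Fin n) ℝ)).PosSemidef ∧
    (Lam • (1 : Matrix (Fin n) (Fin n) ℝ) - A).PosSemidef ∧ t = (A * M).trace }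

/-- The Hessian matrix `D²u(x)` of `u` at `x`. -/
noncomputable def hess (n : ℕ) (u : EuclideanSpace ℝ (Fin n) → ℝ)
    (x : EuclideanSpace ℝ (Fin n)) : Matrix (Fin n) (Fin n) ℝ :=
  fun i j => fderiv ℝ (fun y => fderiv ℝ u y (EuclideanSpace.single j (1 : ℝ))) x
    (EuclideanSpace.single i (1 : ℝ))

/-- The euclidean norm `|Du(x)|` of the gradient of `u` at `x`. -/
noncomputable def gradNorm (n : ℕ) (u : EuclideanSpace ℝ (Fin n) → ℝ)
    (x : EuclideanSpace ℝ (Fin n)) : ℝ := ‖fderiv ℝ u x‖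

/-- The `L^p` norm `(∫_E |g|^p)^(1/p)`, as a Lebesgue integral valued in `[0,∞]`. -/
noncomputable def LpNormE (n : ℕ) (p : ℝ) (g : EuclideanSpace ℝ (Fin n) → ℝ)
    (E : Set (EuclideanSpace ℝ (Fin n))) : ℝ≥0∞ :=
  (∫⁻ x in E, ENNReal.ofReal (|g x| ^ p)) ^ (1 / p)

/-- The last (`n`-th) coordinate `x_n` of a point of `ℝⁿ`. -/
def lastC (n : ℕ) (hn : 1 ≤ n) (x : EuclideanSpace ℝ (Fin n)) : ℝ := x ⟨n - 1, by omega⟩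

/-- The open half-ball `B_R⁺ = {|x| < R, x_n > 0}`. -/
def halfBall (n : ℕ) (hn : 1 ≤ n) (R : ℝ) : Set (EuclideanSpace ℝ (Fin n)) :=
  {x | ‖x‖ < R ∧ 0 < lastC n hn x}

/-- The flat boundary part `B_R⁰ = {|x| ≤ R, x_n = 0}`. -/
def flatB (n : ℕ) (hn : 1 ≤ n) (R : ℝ) : Set (EuclideanSpace ℝ (Fin n)) :=
  {x | ‖x‖ ≤ R ∧ lastC n hn x = 0}

/-- The norm `‖g‖_{L^{p,q}(B_R⁺)} = ‖g‖_{L^p(B_R⁺)} + ‖g‖_{L^q(B_R⁺ ∩ {x_n < d0})}`. -/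
noncomputable def LpqNormHB (n : ℕ) (hn : 1 ≤ n) (p q d0 R : ℝ)
    (g : EuclideanSpace ℝ (Fin n) → ℝ) : ℝ≥0∞ :=
  LpNormE n p g (halfBall n hn R) +
    LpNormE n q g {x ∈ halfBall n hn R | lastC n hn x < d0}

/-- The open cube `Q_ρ` of side `ρ` centered at `(0,…,0,ρ/2)`. -/
def cubeQ (n : ℕ) (hn : 1 ≤ n) (ρ : ℝ) : Set (EuclideanSpace ℝ (Fin n)) :=
  {x | (∀ i : Fin n, i.1 ≠ n - 1 → |x i| < ρ / 2) ∧ 0 < lastC n hn x ∧ lastC n hn x < ρ}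

/-- The norm `‖g‖_{L^{p,q}(Q₂)} = ‖g‖_{L^p(Q₂)} + ‖g‖_{L^q(Q₂ ∩ {x_n < d0})}`. -/
noncomputable def LpqNormQ (n : ℕ) (hn : 1 ≤ n) (p q d0 : ℝ)
    (g : EuclideanSpace ℝ (Fin n) → ℝ) : ℝ≥0∞ :=
  LpNormE n p g (cubeQ n hn 2) +
    LpNormE n q g {x ∈ cubeQ n hn 2 | lastC n hn x < d0}

section Matrix

variable {ι : Type*}

open scoped MatrixOrder in
theorem trace_mul_nonneg_of_posSemidef [Fintype ι] {P Q : Matrix ι ι ℝ} (hP : P.PosSemidef)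
    (hQ : Q.PosSemidef) : 0 ≤ (P * Q).trace := by
  classical
  obtain ⟨B, rfl⟩ := CStarAlgebra.nonneg_iff_eq_star_mul_self.1 hQ.nonneg
  rw [← mul_assoc, Matrix.trace_mul_comm, ← mul_assoc]
  exact (hP.mul_mul_conjTranspose_same B).trace_nonneg

theorem det_le_trace_pow_of_posSemidef [Fintype ι] [DecidableEq ι] {P : Matrix ι ι ℝ}
    (hP : P.PosSemidef) : P.det ≤ P.trace ^ Fintype.card ι := by
  rw [hP.isHermitian.det_eq_prod_eigenvalues, hP.isHermitian.trace_eq_sum_eigenvalues]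
  calc ∏ i, hP.isHermitian.eigenvalues i
      ≤ ∏ _i : ι, ∑ j, hP.isHermitian.eigenvalues j :=
        Finset.prod_le_prod (fun i _ => hP.eigenvalues_nonneg i) fun i hi =>
          Finset.single_le_sum (fun j _ => hP.eigenvalues_nonneg j) hi
    _ = _ := Finset.prod_const _

theorem isClosed_posSemidef [Finite ι] : IsClosed {M : Matrix ι ι ℝ | M.PosSemidef} := by
  have := Fintype.ofFinite ι
  simp only [Matrix.posSemidef_iff_dotProduct_mulVec, Set.ofPred_and, Set.ofPred_forall,
    Matrix.IsHermitian]
  exact (isClosed_eq (by fun_prop) continuous_id).inter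
    (isClosed_iInter fun x => isClosed_le continuous_const (by fun_prop))

end Matrix

section Pucci

variable {n : ℕ} {lam Lam : ℝ}

theorem le_pucciMinus (hLam : lam ≤ Lam) {M : Matrix (Fin n) (Fin n) ℝ} {c : ℝ}
    (h : ∀ A : Matrix (Fin n) (Fin n) ℝ,
      (A - lam • (1 : Matrix (Fin n) (Fin n) ℝ)).PosSemidef →
      (Lam • (1 : Matrix (Fin n) (Fin n) ℝ) - A).PosSemidef → c ≤ (A * M).trace) :
    c ≤ pucciMinus n lam Lam M := by
  refine le_csInf ⟨_, lam • 1, Matrix.isSymm_one.smul lam, ?_, ?_, rfl⟩ ?_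
  · simpa using Matrix.PosSemidef.zero
  · rw [← sub_smul]
    exact Matrix.PosSemidef.one.smul (sub_nonneg.2 hLam)
  · rintro _ ⟨A, -, hA, hA', rfl⟩
    exact h A hA hA'

theorem mul_trace_add_le_pucciMinus (hLam : lam ≤ Lam) {M N : Matrix (Fin n) (Fin n) ℝ}
    (hMN : (M + N).PosSemidef)
    (hN : ∀ A : Matrix (Fin n) (Fin n) ℝ,
      (A - lam • (1 : Matrix (Fin n) (Fin n) ℝ)).PosSemidef →
      (Lam • (1 : Matrix (Fin n) (Fin n) ℝ) - A).PosSemidef → (A * N).trace ≤ 0) :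
    lam * (M + N).trace ≤ pucciMinus n lam Lam M := by
  refine le_pucciMinus hLam fun A hA hA' => ?_
  have h_nonneg := trace_mul_nonneg_of_posSemidef hA hMN
  simp only [sub_mul, smul_mul_assoc, one_mul, Matrix.trace_sub, Matrix.trace_smul, smul_eq_mul,
    mul_add, Matrix.trace_add] at h_nonneg ⊢
  linarith [hN A hA hA']

end Pucci

section Hessian

open scoped Gradient

theorem deriv_deriv_nonneg_of_isLocalMin {f : ℝ → ℝ} {x : ℝ} (hf : ContinuousAt f x)
    (hmin : IsLocalMin f x) : 0 ≤ deriv (deriv f) x := by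
  by_contra! hneg
  have hmax := isLocalMax_of_deriv_deriv_neg hneg hmin.deriv_eq_zero hf
  have hconst : f =ᶠ[nhds x] fun _ => f x := by
    filter_upwards [hmin, hmax] with y hy hy' using le_antisymm hy' hy
  simp [hconst.deriv.deriv_eq] at hneg

theorem differentiableAt_fderiv {E : Type*} [NormedAddCommGroup E] [NormedSpace ℝ E] {u : E → ℝ}
    {x : E} (hu : ContDiffAt ℝ 2 u x) : DifferentiableAt ℝ (fderiv ℝ u) x :=
  (hu.fderiv_right (m := 1) (by norm_num)).differentiableAt (by norm_num)

theorem fderiv_fderiv_apply_self_nonneg_of_isLocalMin {E : Type*} [NormedAddCommGroup E]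
    [NormedSpace ℝ E] {u : E → ℝ} {x : E} (hu : ContDiffAt ℝ 2 u x) (hmin : IsLocalMin u x)
    (w : E) : 0 ≤ fderiv ℝ (fderiv ℝ u) x w w := by
  have hline (t : ℝ) : HasDerivAt (fun t : ℝ => x + t • w) w t := by
    simpa using ((hasDerivAt_id t).smul_const w).const_add x
  have hlim : Filter.Tendsto (fun t : ℝ => x + t • w) (nhds 0) (nhds x) := by
    simpa using (hline 0).continuousAt.tendsto
  have hderiv : deriv (fun t : ℝ => u (x + t • w)) =ᶠ[nhds 0]
      fun t => fderiv ℝ u (x + t • w) w := by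
    filter_upwards [hlim.eventually (hu.eventually (by simp))] with t ht
    exact ((ht.differentiableAt (by norm_num)).hasFDerivAt.comp_hasDerivAt t (hline t)).deriv
  have hderiv2 : HasDerivAt (fun t : ℝ => fderiv ℝ u (x + t • w))
      (fderiv ℝ (fderiv ℝ u) x w) 0 :=
    (differentiableAt_fderiv hu).hasFDerivAt.comp_hasDerivAt_of_eq 0 (hline 0) (by simp)
  have hcont : ContinuousAt (fun t : ℝ => u (x + t • w)) 0 :=
    ContinuousAt.comp_of_eq hu.continuousAt (hline 0).continuousAt (by simp)
  have hmin' : IsLocalMin (fun t : ℝ => u (x + t • w)) 0 := by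
    simpa [IsLocalMin, IsMinFilter] using hlim.eventually hmin
  have hnonneg := deriv_deriv_nonneg_of_isLocalMin hcont hmin'
  rwa [hderiv.deriv_eq, (hderiv2.clm_apply (hasDerivAt_const 0 w)).deriv, map_zero,
    add_zero] at hnonneg

theorem differentiableAt_gradient {E : Type*} [NormedAddCommGroup E] [InnerProductSpace ℝ E]
    [CompleteSpace E] {u : E → ℝ} {x : E} (hu : ContDiffAt ℝ 2 u x) :
    DifferentiableAt ℝ (∇ u) x :=
  let toDualSymm : StrongDual ℝ E →L[ℝ] E :=
    (InnerProductSpace.toDual ℝ E).symm.toContinuousLinearEquiv.toContinuousLinearMap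
  toDualSymm.differentiableAt.comp x (differentiableAt_fderiv hu)

theorem inner_fderiv_gradient_apply {E : Type*} [NormedAddCommGroup E] [InnerProductSpace ℝ E]
    [CompleteSpace E] {u : E → ℝ} {x : E} (hu : ContDiffAt ℝ 2 u x) (w w' : E) :
    inner ℝ (fderiv ℝ (∇ u) x w) w' = fderiv ℝ (fderiv ℝ u) x w w' := by
  have hinner : HasFDerivAt (fun y => inner ℝ (∇ u y) w') _ x :=
    (differentiableAt_gradient hu).hasFDerivAt.inner ℝ (hasFDerivAt_const w' x)
  have happly : HasFDerivAt (fun y => fderiv ℝ u y w') _ x :=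
    (differentiableAt_fderiv hu).hasFDerivAt.clm_apply (hasFDerivAt_const w' x)
  simp only [inner_gradient_left] at hinner
  simpa using DFunLike.congr_fun (hinner.unique happly) w

variable {n : ℕ} {u g : EuclideanSpace ℝ (Fin n) → ℝ} {x : EuclideanSpace ℝ (Fin n)}

theorem hess_apply (hu : ContDiffAt ℝ 2 u x) (i j : Fin n) :
    hess n u x i j = fderiv ℝ (fderiv ℝ u) x (EuclideanSpace.single i 1)
      (EuclideanSpace.single j 1) := by
  simp [hess, fderiv_clm_apply (differentiableAt_fderiv hu) (differentiableAt_const _)]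

theorem hess_eq_toMatrix (hu : ContDiffAt ℝ 2 u x) :
    hess n u x = LinearMap.toMatrix (EuclideanSpace.basisFun (Fin n) ℝ).toBasis
      (EuclideanSpace.basisFun (Fin n) ℝ).toBasis (fderiv ℝ (∇ u) x).toLinearMap := by
  ext i j
  rw [hess_apply hu, hu.isSymmSndFDerivAt (by simp), ← inner_fderiv_gradient_apply hu]
  simp [LinearMap.toMatrix_apply, EuclideanSpace.inner_single_right]

theorem det_hess (hu : ContDiffAt ℝ 2 u x) : (hess n u x).det = (fderiv ℝ (∇ u) x).det := by
  rw [hess_eq_toMatrix hu, LinearMap.det_toMatrix]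

theorem posSemidef_hess_of_isLocalMin (hu : ContDiffAt ℝ 2 u x) (hmin : IsLocalMin u x) :
    (hess n u x).PosSemidef := by
  rw [hess_eq_toMatrix hu, LinearMap.posSemidef_toMatrix_iff, LinearMap.isPositive_iff]
  refine ⟨fun w w' => ?_, fun w => ?_⟩
  · simp only [ContinuousLinearMap.coe_coe,
      real_inner_comm (fderiv ℝ (∇ u) x w') w, inner_fderiv_gradient_apply hu]
    exact hu.isSymmSndFDerivAt (by simp) w w'
  · simpa only [ContinuousLinearMap.coe_coe, inner_fderiv_gradient_apply hu] using
      fderiv_fderiv_apply_self_nonneg_of_isLocalMin hu hmin w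

theorem hess_add (hu : ContDiffAt ℝ 2 u x) (hg : ContDiffAt ℝ 2 g x) :
    hess n (u + g) x = hess n u x + hess n g x := by
  have hfderiv : fderiv ℝ (u + g) =ᶠ[nhds x] fderiv ℝ u + fderiv ℝ g := by
    filter_upwards [hu.eventually (by simp), hg.eventually (by simp)] with y hy hy'
    exact fderiv_add (hy.differentiableAt (by norm_num)) (hy'.differentiableAt (by norm_num))
  ext i j
  rw [Matrix.add_apply, hess_apply hu, hess_apply hg, hess_apply (u := u + g) (hu.add hg),
    hfderiv.fderiv_eq, fderiv_add (differentiableAt_fderiv hu) (differentiableAt_fderiv hg)]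
  rfl

theorem hess_clm (ℓ : EuclideanSpace ℝ (Fin n) →L[ℝ] ℝ) : hess n ℓ x = 0 := by
  ext i j
  simp [hess]

theorem continuousOn_hess {Ω : Set (EuclideanSpace ℝ (Fin n))} (hΩ : IsOpen Ω)
    (hu : ContDiffOn ℝ 2 u Ω) : ContinuousOn (hess n u) Ω := by
  have hfderiv2 : ContinuousOn (fderiv ℝ (fderiv ℝ u)) Ω :=
    (hu.fderiv_of_isOpen (m := 1) hΩ (by norm_num)).continuousOn_fderiv_of_isOpen hΩ (by norm_num)
  refine continuousOn_pi.2 fun i => continuousOn_pi.2 fun j => ?_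
  exact ((hfderiv2.clm_apply continuousOn_const).clm_apply continuousOn_const).congr
    fun x hx => hess_apply (hu.contDiffAt (hΩ.mem_nhds hx)) i j

end Hessian

section LpNorm

variable {n : ℕ} {p q : ℝ} {g : EuclideanSpace ℝ (Fin n) → ℝ}
  {D D' W : Set (EuclideanSpace ℝ (Fin n))}

theorem lpNormE_mono_set (hp : 0 ≤ p) (hD : D ⊆ D') : LpNormE n p g D ≤ LpNormE n p g D' :=
  ENNReal.rpow_le_rpow (lintegral_mono_set hD) (by positivity)

theorem lpNormE_const_mul {c : ℝ} (hc : 0 ≤ c) (hp : 0 < p) :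
    LpNormE n p (fun x => c * g x) D = ENNReal.ofReal c * LpNormE n p g D := by
  have hpow (x : EuclideanSpace ℝ (Fin n)) : ENNReal.ofReal (|c * g x| ^ p) =
      ENNReal.ofReal (c ^ p) * ENNReal.ofReal (|g x| ^ p) := by
    rw [abs_mul, abs_of_nonneg hc, Real.mul_rpow hc (abs_nonneg _),
      ENNReal.ofReal_mul (by positivity)]
  simp only [LpNormE, hpow]
  rw [lintegral_const_mul' _ _ ENNReal.ofReal_ne_top,
    ENNReal.mul_rpow_of_nonneg _ _ (by positivity),
    ENNReal.ofReal_rpow_of_nonneg (by positivity) (by positivity), one_div,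
    Real.rpow_rpow_inv hc hp.ne']

/-- The constant `ω_n ^ (1 / n)`, where `ω_n` is the volume of the unit ball of `ℝⁿ`. It is kept in
`ℝ≥0∞`, where `LpNormE` takes its values. -/
noncomputable def unitBallVolumeRoot (n : ℕ) : ℝ≥0∞ :=
  volume (Metric.ball (0 : EuclideanSpace ℝ (Fin n)) 1) ^ (1 / (n : ℝ))

theorem unitBallVolumeRoot_ne_zero (n : ℕ) : unitBallVolumeRoot n ≠ 0 :=
  (ENNReal.rpow_pos (Metric.measure_ball_pos _ _ one_pos) measure_ball_lt_top.ne).ne'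

theorem unitBallVolumeRoot_ne_top (n : ℕ) : unitBallVolumeRoot n ≠ ⊤ :=
  ENNReal.rpow_ne_top_of_nonneg (by positivity) measure_ball_lt_top.ne

theorem volume_ball_rpow_one_div (hn : n ≠ 0) (x : EuclideanSpace ℝ (Fin n)) {r : ℝ} (hr : 0 ≤ r) :
    volume (Metric.ball x r) ^ (1 / (n : ℝ)) = ENNReal.ofReal r * unitBallVolumeRoot n := by
  have : Nonempty (Fin n) := Fin.pos_iff_nonempty.1 (Nat.pos_of_ne_zero hn)
  rw [Measure.addHaar_ball volume x hr, finrank_euclideanSpace_fin,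
    ENNReal.mul_rpow_of_nonneg _ _ (by positivity), ENNReal.ofReal_rpow_of_nonneg (by positivity)
    (by positivity), one_div, Real.pow_rpow_inv_natCast hr hn, unitBallVolumeRoot, one_div]

theorem lpNormE_le_mul_volume_rpow (hp : 0 < p) (hpq : p ≤ q)
    (D : Set (EuclideanSpace ℝ (Fin n))) :
    LpNormE n p g D ≤ LpNormE n q g D * volume D ^ (1 / p - 1 / q) := by
  -- `g` need not be measurable, so its `p`-th power is replaced by a measurable minorant `G`.
  obtain ⟨G, hG, hG_le, hG_eq⟩ := exists_measurable_le_lintegral_eq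
    (μ := volume.restrict D) fun x => ENNReal.ofReal (|g x| ^ p)
  have hroot_le (x : EuclideanSpace ℝ (Fin n)) : G x ^ (1 / p) ≤ ENNReal.ofReal |g x| := by
    rw [one_div, ENNReal.rpow_inv_le_iff hp, ENNReal.ofReal_rpow_of_nonneg (abs_nonneg _) hp.le]
    exact hG_le x
  have hroot_pow (x : EuclideanSpace ℝ (Fin n)) : (G x ^ (1 / p)) ^ p = G x := by
    rw [one_div, ENNReal.rpow_inv_rpow hp.ne']
  have hHolder := eLpNorm'_le_eLpNorm'_mul_rpow_measure_univ (μ := volume.restrict D) hp hpq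
    (hG.pow_const (1 / p)).aestronglyMeasurable
  simp only [eLpNorm'_eq_lintegral_enorm, enorm_eq_self, hroot_pow,
    Measure.restrict_apply_univ] at hHolder
  rw [LpNormE, hG_eq]
  refine hHolder.trans (mul_le_mul_left (ENNReal.rpow_le_rpow (lintegral_mono fun x => ?_) ?_) _)
  · calc (G x ^ (1 / p)) ^ q ≤ ENNReal.ofReal |g x| ^ q :=
          ENNReal.rpow_le_rpow (hroot_le x) (hp.le.trans hpq)
      _ = ENNReal.ofReal (|g x| ^ q) :=
          ENNReal.ofReal_rpow_of_nonneg (abs_nonneg _) (hp.le.trans hpq)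
  · exact one_div_nonneg.2 (hp.le.trans hpq)

theorem exists_lpNormE_le_mul_rpow (hn : n ≠ 0) (hq : n < q) (hg : LpNormE n q g W < ⊤) :
    ∃ C : ℝ, 0 ≤ C ∧ ∀ D ⊆ W, ∀ x r, 0 ≤ r → D ⊆ Metric.ball x r →
      LpNormE n n g D ≤ ENNReal.ofReal (C * r ^ (1 - n / q)) * unitBallVolumeRoot n := by
  have hn0 : (0 : ℝ) < n := Nat.cast_pos.2 (Nat.pos_of_ne_zero hn)
  have hσ : 0 ≤ 1 - n / q := sub_nonneg.2 ((div_le_one (hn0.trans hq)).2 hq.le)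
  set ω := unitBallVolumeRoot n
  have hω : ω ^ (1 - n / q) ≠ ⊤ :=
    ENNReal.rpow_ne_top_of_nonneg hσ (unitBallVolumeRoot_ne_top n)
  set K := LpNormE n q g W * ω ^ (1 - n / q) / ω with hK
  have hK_top : K ≠ ⊤ :=
    ENNReal.div_ne_top (ENNReal.mul_ne_top hg.ne hω) (unitBallVolumeRoot_ne_zero n)
  refine ⟨K.toReal, ENNReal.toReal_nonneg, fun D hD x r hr hDx => ?_⟩
  have hvol : volume D ^ (1 / (n : ℝ) - 1 / q) ≤
      ENNReal.ofReal (r ^ (1 - n / q)) * ω ^ (1 - n / q) := by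
    have hexp : 1 / (n : ℝ) - 1 / q = 1 / n * (1 - n / q) := by field_simp
    rw [hexp, ENNReal.rpow_mul, ← ENNReal.ofReal_rpow_of_nonneg hr hσ,
      ← ENNReal.mul_rpow_of_nonneg _ _ hσ, ← volume_ball_rpow_one_div hn x hr]
    gcongr
  calc LpNormE n n g D ≤ LpNormE n q g D * volume D ^ (1 / (n : ℝ) - 1 / q) :=
        lpNormE_le_mul_volume_rpow hn0 hq.le D
    _ ≤ LpNormE n q g W * (ENNReal.ofReal (r ^ (1 - n / q)) * ω ^ (1 - n / q)) :=
        mul_le_mul' (lpNormE_mono_set (hn0.trans hq).le hD) hvol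
    _ = K * ω * ENNReal.ofReal (r ^ (1 - n / q)) := by
        rw [hK, ENNReal.div_mul_cancel (unitBallVolumeRoot_ne_zero n)
          (unitBallVolumeRoot_ne_top n)]
        ring
    _ = ENNReal.ofReal (K.toReal * r ^ (1 - n / q)) * ω := by
        rw [ENNReal.ofReal_mul ENNReal.toReal_nonneg, ENNReal.ofReal_toReal hK_top]
        ring

end LpNorm

section AleksandrovBakelmanPucci

open scoped Gradient

theorem exists_isLocalMin_sub_inner {E : Type*} [NormedAddCommGroup E] [InnerProductSpace ℝ E]
    [ProperSpace E] {Ω : Set E} {u : E → ℝ} {x₀ p : E} (hΩ : IsOpen Ω)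
    (hΩb : Bornology.IsBounded Ω) (hu : ContinuousOn u Ω)
    (hbdry : ∀ z ∈ frontier Ω, ∀ ε > 0, ∀ᶠ x in nhdsWithin z Ω, -ε < u x)
    (hx₀ : x₀ ∈ Ω) (hlow : u x₀ < -(‖p‖ * Metric.diam Ω)) :
    ∃ x ∈ Ω, IsLocalMin (fun y => u y - inner ℝ p y) x := by
  set K : Set E := {x ∈ Ω | u x - inner ℝ p x ≤ u x₀ - inner ℝ p x₀}
  have hKΩ : K ⊆ Ω := Set.sep_subset _ _
  have hcont : ContinuousOn (fun y => u y - inner ℝ p y) Ω := hu.sub (by fun_prop)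
  have u_le_of_mem {x : E} (hx : x ∈ K) : u x ≤ u x₀ + ‖p‖ * Metric.diam Ω := by
    have hinner : inner ℝ p (x - x₀) ≤ ‖p‖ * Metric.diam Ω :=
      (real_inner_le_norm _ _).trans (mul_le_mul_of_nonneg_left
        (dist_eq_norm x x₀ ▸ Metric.dist_le_diam_of_mem hΩb hx.1 hx₀) (norm_nonneg p))
    rw [inner_sub_right] at hinner
    linarith [hx.2]
  have hclosed : IsClosed K := by
    refine isClosed_of_closure_subset fun z hz => ?_
    have hzΩ : z ∈ Ω := by
      by_contra hzΩ
      have hfrontier : z ∈ frontier Ω := ⟨closure_mono hKΩ hz, by rwa [hΩ.interior_eq]⟩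
      have hev := (hbdry z hfrontier (-(u x₀ + ‖p‖ * Metric.diam Ω)) (by linarith)).filter_mono
        (nhdsWithin_mono z hKΩ)
      have := mem_closure_iff_nhdsWithin_neBot.1 hz
      obtain ⟨x, hx, hxK⟩ := (hev.and self_mem_nhdsWithin).exists
      linarith [u_le_of_mem hxK]
    exact ⟨hzΩ, ((hcont z hzΩ).mono hKΩ).closure_le hz continuousWithinAt_const fun y hy => hy.2⟩
  obtain ⟨x, hxK, hxmin⟩ := (Metric.isCompact_of_isClosed_isBounded hclosed
    (hΩb.subset hKΩ)).exists_isMinOn ⟨x₀, hx₀, le_rfl⟩ (hcont.mono hKΩ)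
  refine ⟨x, hKΩ hxK, ?_⟩
  filter_upwards [hΩ.mem_nhds (hKΩ hxK)] with y hy
  by_cases hyK : y ∈ K
  · exact hxmin hyK
  · exact hxK.2.trans (not_le.1 fun hle => hyK ⟨hy, hle⟩).le

variable {n : ℕ} {Ω : Set (EuclideanSpace ℝ (Fin n))} {u f : EuclideanSpace ℝ (Fin n) → ℝ} {s : ℝ}

theorem gradient_eq_and_posSemidef_hess {x p : EuclideanSpace ℝ (Fin n)} (hu : ContDiffAt ℝ 2 u x)
    (hmin : IsLocalMin (fun y => u y - inner ℝ p y) x) :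
    ∇ u x = p ∧ (hess n u x).PosSemidef := by
  have hsub : (fun y => u y - inner ℝ p y) = u + ⇑(innerSL ℝ (-p)) := by
    ext y
    simp [sub_eq_add_neg]
  rw [hsub] at hmin
  have hlin : ContDiffAt ℝ 2 (innerSL ℝ (-p)) x := (innerSL ℝ (-p)).contDiff.contDiffAt
  constructor
  · have hcrit := hmin.fderiv_eq_zero
    rw [fderiv_add (hu.differentiableAt (by norm_num)) (hlin.differentiableAt (by norm_num)),
      ContinuousLinearMap.fderiv] at hcrit
    refine ext_inner_right ℝ fun w => ?_
    simpa [sub_eq_zero, ← sub_eq_add_neg] using DFunLike.congr_fun hcrit w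
  · have hpsd := posSemidef_hess_of_isLocalMin (u := u + ⇑(innerSL ℝ (-p))) (hu.add hlin) hmin
    rwa [hess_add hu hlin, hess_clm, add_zero] at hpsd

/-- The points of `Ω` at which the first and second order conditions allow an affine function of
slope less than `s` to touch `u` from below. The second order condition is weaker than actual
touching, which makes the set measurable. -/
def contactSet (n : ℕ) (u : EuclideanSpace ℝ (Fin n) → ℝ) (Ω : Set (EuclideanSpace ℝ (Fin n)))
    (s : ℝ) : Set (EuclideanSpace ℝ (Fin n)) :=
  {x ∈ Ω | (hess n u x).PosSemidef ∧ ‖fderiv ℝ u x‖ < s}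

theorem measurableSet_contactSet (hΩ : IsOpen Ω) (hu : ContDiffOn ℝ 2 u Ω) (s : ℝ) :
    MeasurableSet (contactSet n u Ω s) := by
  obtain ⟨C, hC, hCΩ⟩ := continuousOn_iff_isClosed.1 (continuousOn_hess hΩ hu) _
    isClosed_posSemidef
  have hopen : IsOpen (Ω ∩ (fun x => ‖fderiv ℝ u x‖) ⁻¹' Set.Iio s) :=
    (hu.continuousOn_fderiv_of_isOpen hΩ (by norm_num)).norm.isOpen_inter_preimage hΩ isOpen_Iio
  convert (hC.measurableSet.inter hΩ.measurableSet).inter hopen.measurableSet using 1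
  rw [← hCΩ]
  ext x
  simp only [contactSet, Set.mem_ofPred_eq, Set.mem_inter_iff, Set.mem_preimage, Set.mem_Iio]
  tauto

theorem ball_subset_gradient_image_contactSet (hΩ : IsOpen Ω) (hΩb : Bornology.IsBounded Ω)
    (hu : ContDiffOn ℝ 2 u Ω)
    (hbdry : ∀ z ∈ frontier Ω, ∀ ε > 0, ∀ᶠ x in nhdsWithin z Ω, -ε < u x)
    {x₀ : EuclideanSpace ℝ (Fin n)} (hx₀ : x₀ ∈ Ω) (hlow : u x₀ < -(s * Metric.diam Ω)) :
    Metric.ball 0 s ⊆ ∇ u '' contactSet n u Ω s := by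
  intro p hp
  rw [mem_ball_zero_iff] at hp
  have hlow_p : u x₀ < -(‖p‖ * Metric.diam Ω) := hlow.trans_le <| neg_le_neg <|
    mul_le_mul_of_nonneg_right hp.le Metric.diam_nonneg
  obtain ⟨x, hx, hmin⟩ := exists_isLocalMin_sub_inner hΩ hΩb hu.continuousOn hbdry hx₀ hlow_p
  obtain ⟨hgrad, hpsd⟩ := gradient_eq_and_posSemidef_hess (hu.contDiffAt (hΩ.mem_nhds hx)) hmin
  refine ⟨x, ⟨hx, hpsd, ?_⟩, hgrad⟩
  rwa [← toDual_gradient, LinearIsometryEquiv.norm_map, hgrad]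

theorem volume_gradient_image_le (hΩ : IsOpen Ω) (hu : ContDiffOn ℝ 2 u Ω)
    (htrace : ∀ x ∈ contactSet n u Ω s, (hess n u x).trace ≤ |f x|) :
    volume (∇ u '' contactSet n u Ω s) ≤
      ∫⁻ x in Ω, ENNReal.ofReal (|f x| ^ (n : ℝ)) := by
  have hmeas := measurableSet_contactSet hΩ hu s
  have hcontDiff {x} (hx : x ∈ contactSet n u Ω s) : ContDiffAt ℝ 2 u x :=
    hu.contDiffAt (hΩ.mem_nhds hx.1)
  have abs_det_le {x} (hx : x ∈ contactSet n u Ω s) :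
      |(fderiv ℝ (∇ u) x).det| ≤ |f x| ^ (n : ℝ) := by
    rw [← det_hess (hcontDiff hx), abs_of_nonneg hx.2.1.det_nonneg, Real.rpow_natCast]
    calc (hess n u x).det ≤ (hess n u x).trace ^ n := by
          simpa using det_le_trace_pow_of_posSemidef hx.2.1
      _ ≤ |f x| ^ n := pow_le_pow_left₀ hx.2.1.trace_nonneg (htrace x hx) n
  calc volume (∇ u '' contactSet n u Ω s)
      ≤ ∫⁻ x in contactSet n u Ω s, ENNReal.ofReal |(fderiv ℝ (∇ u) x).det| :=
        addHaar_image_le_lintegral_abs_det_fderiv volume hmeas fun x hx =>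
          (differentiableAt_gradient (hcontDiff hx)).hasFDerivAt.hasFDerivWithinAt
    _ ≤ ∫⁻ x in contactSet n u Ω s, ENNReal.ofReal (|f x| ^ (n : ℝ)) :=
        setLIntegral_mono' hmeas fun x hx => ENNReal.ofReal_le_ofReal (abs_det_le hx)
    _ ≤ ∫⁻ x in Ω, ENNReal.ofReal (|f x| ^ (n : ℝ)) := lintegral_mono_set (Set.sep_subset _ _)

theorem neg_mul_diam_le_of_trace_hess_le (hn : n ≠ 0) (hΩ : IsOpen Ω)
    (hΩb : Bornology.IsBounded Ω) (hu : ContDiffOn ℝ 2 u Ω)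
    (hbdry : ∀ z ∈ frontier Ω, ∀ ε > 0, ∀ᶠ x in nhdsWithin z Ω, -ε < u x)
    (htrace : ∀ x ∈ contactSet n u Ω s, (hess n u x).trace ≤ |f x|)
    (hf : LpNormE n n f Ω < ENNReal.ofReal s * unitBallVolumeRoot n) :
    ∀ x ∈ Ω, -(s * Metric.diam Ω) ≤ u x := by
  intro x₀ hx₀
  by_contra! hlow
  have hs : 0 < s := by
    by_contra! hs
    simp [ENNReal.ofReal_of_nonpos hs] at hf
  rw [← volume_ball_rpow_one_div hn 0 hs.le] at hf
  refine hf.not_ge (ENNReal.rpow_le_rpow ?_ (by positivity))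
  exact (measure_mono (ball_subset_gradient_image_contactSet hΩ hΩb hu hbdry hx₀ hlow)).trans
    (volume_gradient_image_le hΩ hu htrace)

end AleksandrovBakelmanPucci

section Barrier

variable {n : ℕ} {l : Fin n} {x₀ : EuclideanSpace ℝ (Fin n)} {β κ c lam Lam : ℝ}

/-- The quadratic polynomial `c y_l + κ (|y - x₀|² - β y_l²)` in the normal coordinate `y_l`; for
`κ ≥ 0` and `n Λ ≤ β λ` its negative second derivative in the direction `l` makes it satisfy
`tr (A D²) ≤ 0` for all `λ I ≤ A ≤ Λ I`. -/
noncomputable def barrier (l : Fin n) (x₀ : EuclideanSpace ℝ (Fin n)) (β c κ : ℝ)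
    (y : EuclideanSpace ℝ (Fin n)) : ℝ :=
  c * y l + κ * (‖y - x₀‖ ^ 2 - β * y l ^ 2)

theorem contDiff_barrier : ContDiff ℝ 2 (barrier l x₀ β c κ) := by
  unfold barrier
  have hnorm : ContDiff ℝ 2 fun y : EuclideanSpace ℝ (Fin n) => ‖y - x₀‖ ^ 2 :=
    (contDiff_id.sub contDiff_const).norm_sq ℝ
  fun_prop

theorem hasFDerivAt_barrier (y : EuclideanSpace ℝ (Fin n)) :
    HasFDerivAt (barrier l x₀ β c κ)
      ((c - 2 * κ * β * y l) • EuclideanSpace.proj l + (2 * κ) • innerSL ℝ (y - x₀)) y := by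
  have hcoord : HasFDerivAt (fun z : EuclideanSpace ℝ (Fin n) => z l)
      (EuclideanSpace.proj (𝕜 := ℝ) l) y := (EuclideanSpace.proj (𝕜 := ℝ) l).hasFDerivAt
  have hnorm : HasFDerivAt (fun z : EuclideanSpace ℝ (Fin n) => ‖z - x₀‖ ^ 2) _ y :=
    ((hasFDerivAt_id y).sub_const x₀).norm_sq
  refine ((hcoord.const_mul c).add
    ((hnorm.sub ((hcoord.pow 2).const_mul β)).const_mul κ)).congr_fderiv ?_
  ext w
  simp
  ring

theorem norm_fderiv_barrier_le (y : EuclideanSpace ℝ (Fin n)) :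
    ‖fderiv ℝ (barrier l x₀ β c κ) y‖ ≤ |c - 2 * κ * β * y l| + 2 * |κ| * ‖y - x₀‖ := by
  have hproj : ‖(EuclideanSpace.proj l : EuclideanSpace ℝ (Fin n) →L[ℝ] ℝ)‖ ≤ 1 :=
    ContinuousLinearMap.opNorm_le_bound _ zero_le_one fun w => by
      simpa using PiLp.norm_apply_le w l
  rw [(hasFDerivAt_barrier y).fderiv]
  refine (norm_add_le _ _).trans (add_le_add ?_ ?_)
  · rw [norm_smul, Real.norm_eq_abs]
    exact mul_le_of_le_one_right (abs_nonneg _) hproj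
  · rw [norm_smul, innerSL_apply_norm, Real.norm_eq_abs, abs_mul, abs_two]

theorem hess_barrier (y : EuclideanSpace ℝ (Fin n)) :
    hess n (barrier l x₀ β c κ) y =
      (2 * κ) • (1 - β • Matrix.single l l 1 : Matrix (Fin n) (Fin n) ℝ) := by
  ext i j
  have hderiv (z : EuclideanSpace ℝ (Fin n)) :
      fderiv ℝ (barrier l x₀ β c κ) z (EuclideanSpace.single j 1) =
        (c - 2 * κ * β * z l) * (if l = j then 1 else 0) + 2 * κ * (z j - x₀ j) := by
    rw [(hasFDerivAt_barrier z).fderiv]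
    simp [EuclideanSpace.inner_single_right]
  have hcoord (k : Fin n) : HasFDerivAt (fun z : EuclideanSpace ℝ (Fin n) => z k)
      (EuclideanSpace.proj (𝕜 := ℝ) k) y := (EuclideanSpace.proj (𝕜 := ℝ) k).hasFDerivAt
  have hderiv2 : HasFDerivAt (fun z : EuclideanSpace ℝ (Fin n) =>
      (c - 2 * κ * β * z l) * (if l = j then 1 else 0) + 2 * κ * (z j - x₀ j)) _ y :=
    ((((hcoord l).const_mul (2 * κ * β)).const_sub c).mul_const _).add
      (((hcoord j).sub_const (x₀ j)).const_mul (2 * κ))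
  simp only [hess, hderiv, hderiv2.fderiv]
  simp only [Matrix.smul_apply, Matrix.sub_apply, Matrix.one_apply,
    Matrix.single_apply]
  by_cases hi : l = i <;> by_cases hj : l = j <;> by_cases hij : i = j <;> simp_all
  ring

theorem trace_mul_hess_barrier_nonpos (hβ : n * Lam ≤ β * lam) (hκ : 0 ≤ κ)
    {A : Matrix (Fin n) (Fin n) ℝ}
    (hA : (A - lam • (1 : Matrix (Fin n) (Fin n) ℝ)).PosSemidef)
    (hA' : (Lam • (1 : Matrix (Fin n) (Fin n) ℝ) - A).PosSemidef) (hβ0 : 0 ≤ β)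
    (y : EuclideanSpace ℝ (Fin n)) : (A * hess n (barrier l x₀ β c κ) y).trace ≤ 0 := by
  have hentry : lam ≤ A l l := by simpa using hA.diag_nonneg (i := l)
  have htrace : A.trace ≤ n * Lam := by simpa [mul_comm] using hA'.trace_nonneg
  have : (A * Matrix.single l l (1 : ℝ)).trace = A l l := by
    simp [Matrix.trace_mul_single]
  rw [hess_barrier, Matrix.mul_smul, Matrix.trace_smul, mul_sub, mul_one, Matrix.trace_sub,
    Matrix.mul_smul, Matrix.trace_smul, this, smul_eq_mul, smul_eq_mul]
  exact mul_nonpos_of_nonneg_of_nonpos (by positivity) (by nlinarith)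

end Barrier

section Cylinder

variable {n : ℕ} {l : Fin n} {x₀ y : EuclideanSpace ℝ (Fin n)} {α β δ r r' : ℝ}

/-- The cylinder of radius `r` and height `r / (2 β)` standing on the hyperplane `y_l = 0` with
axis through `x₀`, a point of that hyperplane; then `|y - x₀|² - y_l²` is the squared distance
to the axis. -/
def flatCylinder (l : Fin n) (x₀ : EuclideanSpace ℝ (Fin n)) (β r : ℝ) :
    Set (EuclideanSpace ℝ (Fin n)) :=
  {y | ‖y - x₀‖ ^ 2 - y l ^ 2 < r ^ 2 ∧ 0 < y l ∧ 2 * β * y l < r}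

theorem isOpen_flatCylinder : IsOpen (flatCylinder l x₀ β r) := by
  simp only [flatCylinder, Set.ofPred_and]
  exact (isOpen_lt (by fun_prop) continuous_const).inter
    ((isOpen_lt continuous_const (by fun_prop)).inter (isOpen_lt (by fun_prop) continuous_const))

theorem closure_flatCylinder_subset : closure (flatCylinder l x₀ β r) ⊆
    {y | ‖y - x₀‖ ^ 2 - y l ^ 2 ≤ r ^ 2 ∧ 0 ≤ y l ∧ 2 * β * y l ≤ r} :=
  closure_minimal (fun _ hy => ⟨hy.1.le, hy.2.1.le, hy.2.2.le⟩) <| by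
    simp only [Set.ofPred_and]
    exact (isClosed_le (by fun_prop) continuous_const).inter
      ((isClosed_le continuous_const (by fun_prop)).inter
        (isClosed_le (by fun_prop) continuous_const))

theorem flatCylinder_mono (hr : 0 ≤ r) (hrr' : r ≤ r') :
    flatCylinder l x₀ β r ⊆ flatCylinder l x₀ β r' := fun _ hy =>
  ⟨hy.1.trans_le (pow_le_pow_left₀ hr hrr' 2), hy.2.1, hy.2.2.trans_le hrr'⟩

theorem norm_sub_lt_of_mem_flatCylinder (hβ : 1 ≤ β) (hy : y ∈ flatCylinder l x₀ β r) :
    ‖y - x₀‖ < 2 * r := by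
  obtain ⟨hside, hpos, htop⟩ := hy
  have hyr : y l < r := by nlinarith
  exact lt_of_pow_lt_pow_left₀ 2 (by linarith) (by nlinarith)

theorem flatCylinder_subset_ball (hβ : 1 ≤ β) :
    flatCylinder l x₀ β r ⊆ Metric.ball x₀ (2 * r) := fun _ hy =>
  mem_ball_iff_norm.2 (norm_sub_lt_of_mem_flatCylinder hβ hy)

theorem diam_flatCylinder_le (hβ : 1 ≤ β) (hr : 0 ≤ r) :
    Metric.diam (flatCylinder l x₀ β r) ≤ 4 * r :=
  (Metric.diam_mono (flatCylinder_subset_ball hβ) Metric.isBounded_ball).trans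
    ((Metric.diam_ball (by positivity)).trans (by linarith))

theorem add_single_mem_flatCylinder {t : ℝ} (hx₀ : x₀ l = 0) (hr : 0 < r) (ht : 0 < t)
    (htr : 2 * β * t < r) : x₀ + EuclideanSpace.single l t ∈ flatCylinder l x₀ β r := by
  simp [flatCylinder, hx₀, ht, htr, hr.ne', sq_pos_iff]

theorem add_barrier_nonneg_of_mem_frontier (hβ : 1 ≤ β) (hx₀ : x₀ l = 0) (hr : 0 < r)
    (hδ : 0 < δ) (hy : y ∈ frontier (flatCylinder l x₀ β r)) :
    0 ≤ max 0 (α * y l - δ * r) + barrier l x₀ β (3 * β * δ - α) (δ / r) y := by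
  rw [isOpen_flatCylinder.frontier_eq] at hy
  obtain ⟨-, hbot, htop⟩ := closure_flatCylinder_subset hy.1
  have hcoord : y l ^ 2 ≤ ‖y - x₀‖ ^ 2 := by
    have := PiLp.norm_apply_le (y - x₀) l
    rw [PiLp.sub_apply, hx₀, sub_zero] at this
    simpa using pow_le_pow_left₀ (norm_nonneg _) this 2
  have hheight : β * y l ^ 2 ≤ y l * r / 2 := by nlinarith
  rcases hbot.eq_or_lt with hbot | hbot
  · refine add_nonneg (le_max_left _ _) ?_
    have : 0 ≤ δ / r * ‖y - x₀‖ ^ 2 := by positivity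
    simpa [barrier, ← hbot] using this
  · have hyr : y l * r ≤ β * y l * r := by
      gcongr
      exact le_mul_of_one_le_left hbot.le hβ
    have hmain : r ^ 2 ≤ 3 * β * y l * r + (‖y - x₀‖ ^ 2 - β * y l ^ 2) := by
      by_cases hlat : ‖y - x₀‖ ^ 2 - y l ^ 2 < r ^ 2
      · have htop' : r ≤ 2 * β * y l := not_lt.1 fun h => hy.2 ⟨hlat, hbot, h⟩
        nlinarith [mul_le_mul_of_nonneg_right htop' hr.le, sq_nonneg (y l)]
      · nlinarith [mul_pos hbot hr, sq_nonneg (y l)]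
    calc 0 ≤ δ / r * (3 * β * y l * r + (‖y - x₀‖ ^ 2 - β * y l ^ 2) - r ^ 2) :=
          mul_nonneg (by positivity) (sub_nonneg.2 hmain)
      _ = α * y l - δ * r + barrier l x₀ β (3 * β * δ - α) (δ / r) y := by
          rw [barrier]
          field_simp
          ring
      _ ≤ _ := add_le_add_left (le_max_right _ _) _

theorem norm_fderiv_barrier_le_of_mem_flatCylinder {a : ℝ} (hβ : 1 ≤ β) (hδ : 0 < δ)
    (hα : 0 ≤ α) (hαa : α ≤ a) (hδa : 8 * β * δ ≤ a) (hy : y ∈ flatCylinder l x₀ β r) :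
    ‖fderiv ℝ (barrier l x₀ β (3 * β * δ - α) (δ / r)) y‖ ≤ 2 * a := by
  have hdist := norm_sub_lt_of_mem_flatCylinder hβ hy
  obtain ⟨-, hpos, htop⟩ := hy
  have hr : 0 < r := lt_trans (by positivity) htop
  have hδβ : δ ≤ β * δ := le_mul_of_one_le_left hδ.le hβ
  have hlin : |3 * β * δ - α - 2 * (δ / r) * β * y l| ≤ a := by
    have hfrac : 2 * (δ / r) * β * y l = δ * (2 * β * y l / r) := by ring
    have hfrac_le : 2 * β * y l / r ≤ 1 := (div_le_one hr).2 htop.le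
    have hfrac_nonneg : 0 ≤ 2 * β * y l / r := by positivity
    rw [hfrac, abs_le]
    constructor <;> nlinarith
  have hquad : 2 * |δ / r| * ‖y - x₀‖ ≤ a := by
    rw [abs_of_pos (by positivity)]
    calc 2 * (δ / r) * ‖y - x₀‖ ≤ 2 * (δ / r) * (2 * r) := by gcongr
      _ = 4 * δ := by field_simp; ring
      _ ≤ a := by nlinarith
  linarith [norm_fderiv_barrier_le (l := l) (x₀ := x₀) (β := β) (c := 3 * β * δ - α) (κ := δ / r) y]

end Cylinder

section Flatness

variable {n : ℕ} {lam Lam : ℝ} {b v : EuclideanSpace ℝ (Fin n) → ℝ}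
  {Ω D : Set (EuclideanSpace ℝ (Fin n))} {l : Fin n} {x₀ y : EuclideanSpace ℝ (Fin n)}
  {a α β δ κ c r s ρ : ℝ}

/-- A classical solution `v` on `Ω` of the differential inequality `𝓜⁻(D²v) ≤ b |Dv|`. -/
structure IsPucciSupersolutionOn (lam Lam : ℝ) (b v : EuclideanSpace ℝ (Fin n) → ℝ)
    (Ω : Set (EuclideanSpace ℝ (Fin n))) : Prop where
  contDiffOn : ContDiffOn ℝ 2 v Ω
  pucciMinus_le : ∀ x ∈ Ω, pucciMinus n lam Lam (hess n v x) ≤ b x * gradNorm n v x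

theorem IsPucciSupersolutionOn.mono (h : IsPucciSupersolutionOn lam Lam b v Ω) (hD : D ⊆ Ω) :
    IsPucciSupersolutionOn lam Lam b v D :=
  ⟨h.contDiffOn.mono hD, fun x hx => h.pucciMinus_le x (hD hx)⟩

theorem IsPucciSupersolutionOn.mul_trace_hess_add_barrier_le
    (h : IsPucciSupersolutionOn lam Lam b v Ω) (hΩ : IsOpen Ω) (hLam : lam ≤ Lam)
    (hβ : 0 ≤ β) (hβL : n * Lam ≤ β * lam) (hκ : 0 ≤ κ) (hy : y ∈ Ω)
    (hpsd : (hess n (v + barrier l x₀ β c κ) y).PosSemidef) :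
    lam * (hess n (v + barrier l x₀ β c κ) y).trace ≤ b y * gradNorm n v y := by
  rw [hess_add (h.contDiffOn.contDiffAt (hΩ.mem_nhds hy)) contDiff_barrier.contDiffAt] at hpsd ⊢
  exact (mul_trace_add_le_pucciMinus hLam hpsd fun A hA hA' =>
    trace_mul_hess_barrier_nonpos hβL hκ hA hA' hβ y).trans (h.pucciMinus_le y hy)

theorem IsPucciSupersolutionOn.trace_hess_add_barrier_le_of_mem_contactSet
    (h : IsPucciSupersolutionOn lam Lam b v (flatCylinder l x₀ β r)) (hlam : 0 < lam)
    (hLam : lam ≤ Lam) (hβ : 1 ≤ β) (hβL : n * Lam ≤ β * lam) (hr : 0 < r) (hα : 0 ≤ α)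
    (hαa : α ≤ a) (hδ : 0 < δ) (hδa : 8 * β * δ ≤ a) (hsa : s ≤ a)
    (hy : y ∈ contactSet n (v + barrier l x₀ β (3 * β * δ - α) (δ / r))
      (flatCylinder l x₀ β r) s) :
    (hess n (v + barrier l x₀ β (3 * β * δ - α) (δ / r)) y).trace ≤ |3 * a / lam * b y| := by
  obtain ⟨hyΩ, hpsd, hgrad⟩ := hy
  have hgrad_v : gradNorm n v y ≤ 3 * a := by
    have hdiff : DifferentiableAt ℝ v y := (h.contDiffOn.contDiffAt
      (isOpen_flatCylinder.mem_nhds hyΩ)).differentiableAt (by norm_num)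
    rw [fderiv_add hdiff (hasFDerivAt_barrier y).differentiableAt] at hgrad
    have hbarrier := norm_fderiv_barrier_le_of_mem_flatCylinder hβ hδ hα hαa hδa hyΩ
    have := norm_le_add_norm_add (fderiv ℝ v y)
      (fderiv ℝ (barrier l x₀ β (3 * β * δ - α) (δ / r)) y)
    rw [gradNorm]
    linarith
  have ha : 0 ≤ a := hα.trans hαa
  rw [abs_mul, abs_of_nonneg (by positivity), div_mul_eq_mul_div, le_div_iff₀' hlam]
  calc lam * (hess n (v + barrier l x₀ β (3 * β * δ - α) (δ / r)) y).trace
      ≤ b y * gradNorm n v y :=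
        h.mul_trace_hess_add_barrier_le isOpen_flatCylinder hLam (by linarith) hβL
          (by positivity) hyΩ hpsd
    _ ≤ |b y| * (3 * a) :=
        mul_le_mul (le_abs_self _) hgrad_v (norm_nonneg _) (abs_nonneg _)
    _ = 3 * a * |b y| := mul_comm _ _

theorem eventually_neg_lt_add_barrier (hβ : 1 ≤ β) (hx₀ : x₀ l = 0) (hr : 0 < r) (hδ : 0 < δ)
    (hv0 : ∀ y ∈ flatCylinder l x₀ β r, 0 ≤ v y)
    (hv : ∀ y ∈ flatCylinder l x₀ β r, α * y l - δ * r ≤ v y)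
    {z : EuclideanSpace ℝ (Fin n)} (hz : z ∈ frontier (flatCylinder l x₀ β r))
    {ε : ℝ} (hε : 0 < ε) : ∀ᶠ y in nhdsWithin z (flatCylinder l x₀ β r),
      -ε < (v + barrier l x₀ β (3 * β * δ - α) (δ / r)) y := by
  have hcont : Continuous fun y : EuclideanSpace ℝ (Fin n) =>
      max 0 (α * y l - δ * r) + barrier l x₀ β (3 * β * δ - α) (δ / r) y :=
    Continuous.add (by fun_prop) contDiff_barrier.continuous
  have hz0 := add_barrier_nonneg_of_mem_frontier (α := α) hβ hx₀ hr hδ hz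
  filter_upwards [hcont.continuousWithinAt.eventually_const_lt ((neg_lt_zero.2 hε).trans_le hz0),
    self_mem_nhdsWithin] with y hlt hy
  exact hlt.trans_le (add_le_add_left (max_le (hv0 y hy) (hv y hy)) _)

theorem IsPucciSupersolutionOn.neg_barrier_sub_le
    (h : IsPucciSupersolutionOn lam Lam b v (flatCylinder l x₀ β r)) (hlam : 0 < lam)
    (hLam : lam ≤ Lam) (hβ : 1 ≤ β) (hβL : n * Lam ≤ β * lam) (hx₀ : x₀ l = 0) (hr : 0 < r)
    (hα : 0 ≤ α) (hαa : α ≤ a) (hδ : 0 < δ) (hδa : 8 * β * δ ≤ a) (hs : 0 ≤ s)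
    (hsa : s ≤ a) (hv0 : ∀ y ∈ flatCylinder l x₀ β r, 0 ≤ v y)
    (hv : ∀ y ∈ flatCylinder l x₀ β r, α * y l - δ * r ≤ v y)
    (hb : LpNormE n n b (flatCylinder l x₀ β r) <
      ENNReal.ofReal (lam * s / (3 * a)) * unitBallVolumeRoot n) :
    ∀ y ∈ flatCylinder l x₀ β r,
      -barrier l x₀ β (3 * β * δ - α) (δ / r) y - s * (4 * r) ≤ v y := by
  have ha : 0 < a := lt_of_lt_of_le (by positivity) hδa
  have hf : LpNormE n n (fun y => 3 * a / lam * b y) (flatCylinder l x₀ β r) <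
      ENNReal.ofReal s * unitBallVolumeRoot n := by
    have hn : (0 : ℝ) < n := Nat.cast_pos.2 l.pos
    have hs_eq : s = 3 * a / lam * (lam * s / (3 * a)) := by field_simp
    rw [lpNormE_const_mul (by positivity) hn, hs_eq, ENNReal.ofReal_mul (by positivity), mul_assoc]
    exact ENNReal.mul_lt_mul_right (by positivity) ENNReal.ofReal_ne_top hb
  intro y hy
  have hABP := neg_mul_diam_le_of_trace_hess_le l.pos.ne' isOpen_flatCylinder
    (Metric.isBounded_ball.subset (flatCylinder_subset_ball hβ))
    (h.contDiffOn.add contDiff_barrier.contDiffOn)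
    (fun z hz ε hε => eventually_neg_lt_add_barrier hβ hx₀ hr hδ hv0 hv hz hε)
    (fun x hx => h.trace_hess_add_barrier_le_of_mem_contactSet hlam hLam hβ hβL hr hα hαa hδ
      hδa hsa hx) hf y hy
  have hdiam := mul_le_mul_of_nonneg_left
    (diam_flatCylinder_le (l := l) (x₀ := x₀) hβ hr.le) hs
  linarith

theorem IsPucciSupersolutionOn.flatness_improvement
    (h : IsPucciSupersolutionOn lam Lam b v (flatCylinder l x₀ β r)) (hlam : 0 < lam)
    (hLam : lam ≤ Lam) (hβ : 1 ≤ β) (hβL : n * Lam ≤ β * lam) (hx₀ : x₀ l = 0) (hr : 0 < r)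
    (hα : 0 ≤ α) (hαa : α ≤ a) (hδ : 0 < δ) (hδa : 8 * β * δ ≤ a) (hρ : 0 < ρ)
    (hρ8 : ρ ≤ 1 / 8)
    (hv0 : ∀ y ∈ flatCylinder l x₀ β r, 0 ≤ v y)
    (hv : ∀ y ∈ flatCylinder l x₀ β r, α * y l - δ * r ≤ v y)
    (hb : LpNormE n n b (flatCylinder l x₀ β r) <
      ENNReal.ofReal (lam * ρ ^ 2 * δ / (12 * a)) * unitBallVolumeRoot n) :
    ∀ y ∈ flatCylinder l x₀ β (ρ * r), (α - 3 * β * δ) * y l - δ / 4 * (ρ * r) ≤ v y := by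
  intro y hy
  have hρr : ρ * r ≤ r := mul_le_of_le_one_left hr.le (by linarith)
  have hs : ρ ^ 2 * δ / 4 ≤ a := by
    have : ρ ^ 2 ≤ 1 := pow_le_one₀ hρ.le (by linarith)
    nlinarith
  have hconst : lam * (ρ ^ 2 * δ / 4) / (3 * a) = lam * ρ ^ 2 * δ / (12 * a) := by ring
  have hlower := h.neg_barrier_sub_le hlam hLam hβ hβL hx₀ hr hα hαa hδ hδa
    (by positivity) hs hv0 hv (hconst ▸ hb) y (flatCylinder_mono (by positivity) hρr hy)
  have hquad : δ / r * (‖y - x₀‖ ^ 2 - β * y l ^ 2) ≤ ρ ^ 2 * δ * r := by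
    calc δ / r * (‖y - x₀‖ ^ 2 - β * y l ^ 2) ≤ δ / r * (ρ * r) ^ 2 :=
          mul_le_mul_of_nonneg_left (by nlinarith [hy.1, sq_nonneg (y l)]) (by positivity)
      _ = ρ ^ 2 * δ * r := by field_simp
  have hsmall : 2 * (ρ ^ 2 * δ * r) ≤ δ / 4 * (ρ * r) := by
    nlinarith [mul_pos (mul_pos hρ hδ) hr]
  rw [barrier] at hlower
  linarith

theorem IsPucciSupersolutionOn.flatness_iterate
    (h : IsPucciSupersolutionOn lam Lam b v (flatCylinder l x₀ β r)) (hlam : 0 < lam)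
    (hLam : lam ≤ Lam) (hβ : 1 ≤ β) (hβL : n * Lam ≤ β * lam) (hx₀ : x₀ l = 0) (hr : 0 < r)
    (hδ : 0 < δ) (hδa : 8 * β * δ ≤ a) (hρ : 0 < ρ) (hρ8 : ρ ≤ 1 / 8)
    (hv0 : ∀ y ∈ flatCylinder l x₀ β r, 0 ≤ v y)
    (hv : ∀ y ∈ flatCylinder l x₀ β r, a * y l - δ * r ≤ v y)
    (hb : ∀ k : ℕ, LpNormE n n b (flatCylinder l x₀ β (ρ ^ k * r)) <
      ENNReal.ofReal (lam * ρ ^ 2 * (δ / 4 ^ k) / (12 * a)) * unitBallVolumeRoot n) (k : ℕ) :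
    ∀ y ∈ flatCylinder l x₀ β (ρ ^ k * r),
      (a / 2 + 4 * β * (δ / 4 ^ k)) * y l - δ / 4 ^ k * (ρ ^ k * r) ≤ v y := by
  induction k with
  | zero =>
    intro y hy
    rw [pow_zero, one_mul] at hy
    have hslope : (a / 2 + 4 * β * δ) * y l ≤ a * y l :=
      mul_le_mul_of_nonneg_right (by linarith) hy.2.1.le
    simpa using (sub_le_sub_right hslope _).trans (hv y hy)
  | succ k ih =>
    have hsub : flatCylinder l x₀ β (ρ ^ k * r) ⊆ flatCylinder l x₀ β r :=
      flatCylinder_mono (by positivity)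
        (mul_le_of_le_one_left hr.le (pow_le_one₀ hρ.le (by linarith)))
    have hδk : 8 * β * (δ / 4 ^ k) ≤ a := hδa.trans' <|
      mul_le_mul_of_nonneg_left (div_le_self hδ.le (one_le_pow₀ (by norm_num))) (by positivity)
    have ha : 0 < a := lt_of_lt_of_le (by positivity) hδa
    have hstep := (h.mono hsub).flatness_improvement (α := a / 2 + 4 * β * (δ / 4 ^ k)) hlam hLam
      hβ hβL hx₀ (by positivity) (by positivity) (by linarith) (by positivity) hδk hρ hρ8
      (fun y hy => hv0 y (hsub hy)) ih (hb k)
    rw [← mul_assoc, ← pow_succ'] at hstep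
    convert hstep using 4 <;> ring

theorem IsPucciSupersolutionOn.linear_growth
    (h : IsPucciSupersolutionOn lam Lam b v (flatCylinder l x₀ β r)) (hlam : 0 < lam)
    (hLam : lam ≤ Lam) (hβ : 1 ≤ β) (hβL : n * Lam ≤ β * lam) (hx₀ : x₀ l = 0) (hr : 0 < r)
    (ha : 0 < a) (hρ : 0 < ρ) (hρ8 : ρ ≤ 1 / 8)
    (hv0 : ∀ y ∈ flatCylinder l x₀ β r, 0 ≤ v y)
    (hv : ∀ y ∈ flatCylinder l x₀ β r, a * y l - a * ρ / (16 * β) * r ≤ v y)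
    (hb : ∀ k : ℕ, LpNormE n n b (flatCylinder l x₀ β (ρ ^ k * r)) <
      ENNReal.ofReal (lam * ρ ^ 3 / (192 * β) / 4 ^ k) * unitBallVolumeRoot n)
    {t : ℝ} (ht : 0 < t) (htr : 4 * β * t ≤ r) :
    a / 4 * t ≤ v (x₀ + EuclideanSpace.single l t) := by
  -- At the scale `ρ ^ k * r` comparable with `t`, the error is a fraction of `a * t`.
  obtain ⟨k, hk, hk'⟩ := exists_nat_pow_near_of_lt_one (x := 4 * β * t / r) (by positivity)
    ((div_le_one hr).2 htr) hρ (by linarith)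
  rw [lt_div_iff₀ hr, pow_succ] at hk
  rw [div_le_iff₀ hr] at hk'
  have hδa : 8 * β * (a * ρ / (16 * β)) ≤ a := by
    field_simp
    nlinarith
  have hβt : 0 < β * t := by positivity
  have hiter := h.flatness_iterate hlam hLam hβ hβL hx₀ hr (by positivity) hδa hρ hρ8 hv0 hv
    (fun k => by convert hb k using 3; field_simp; ring) k _
    (add_single_mem_flatCylinder hx₀ (by positivity) ht (by linarith))
  have hδk : a * ρ / (16 * β) / 4 ^ k ≤ a * ρ / (16 * β) :=
    div_le_self (by positivity) (one_le_pow₀ (by norm_num))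
  have herror : a * ρ / (16 * β) / 4 ^ k * (ρ ^ k * r) ≤ a / 4 * t := by
    calc a * ρ / (16 * β) / 4 ^ k * (ρ ^ k * r) ≤ a * ρ / (16 * β) * (ρ ^ k * r) := by
          gcongr
      _ = a / (16 * β) * (ρ ^ k * ρ * r) := by ring
      _ ≤ a / (16 * β) * (4 * β * t) := by gcongr
      _ = a / 4 * t := by field_simp; ring
  have hslope : a / 2 * t ≤ (a / 2 + 4 * β * (a * ρ / (16 * β) / 4 ^ k)) * t :=
    mul_le_mul_of_nonneg_right (le_add_of_nonneg_right (by positivity)) ht.le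
  have hcoord : (x₀ + EuclideanSpace.single l t) l = t := by simp [hx₀]
  rw [hcoord] at hiter
  linarith

end Flatness

section Scales

open Filter Topology

variable {n : ℕ} {b : EuclideanSpace ℝ (Fin n) → ℝ} {W : Set (EuclideanSpace ℝ (Fin n))}
  {C c σ ρ r q β η : ℝ}

theorem eventually_mul_rpow_lt (hσ : 0 < σ) (C : ℝ) (hc : 0 < c) :
    ∀ᶠ r in 𝓝[>] (0 : ℝ), C * r ^ σ < c := by
  have hcont : ContinuousAt (fun r : ℝ => C * r ^ σ) 0 :=
    continuousAt_const.mul (Real.continuousAt_rpow_const 0 σ (Or.inr hσ.le))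
  exact hcont.continuousWithinAt.eventually_lt_const (by simpa [Real.zero_rpow hσ.ne'] using hc)

theorem mul_pow_mul_rpow_lt (hρ : 0 ≤ ρ) (hr : 0 ≤ r) (hC : 0 ≤ C) (hρσ : ρ ^ σ ≤ 1 / 4)
    (hCr : C * r ^ σ < c) (k : ℕ) : C * (ρ ^ k * r) ^ σ < c / 4 ^ k := by
  have hpow : (ρ ^ k) ^ σ = (ρ ^ σ) ^ k := (Real.rpow_pow_comm hρ σ k).symm
  calc C * (ρ ^ k * r) ^ σ = C * r ^ σ * (ρ ^ σ) ^ k := by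
        rw [Real.mul_rpow (by positivity) hr, hpow]
        ring
    _ ≤ C * r ^ σ * (1 / 4) ^ k := by gcongr
    _ < c * (1 / 4) ^ k := by gcongr
    _ = c / 4 ^ k := by rw [one_div_pow, mul_one_div]

theorem exists_scale_lpNormE_flatCylinder_lt (l : Fin n) (hq : n < q)
    (hb : LpNormE n q b W < ⊤) (hβ : 1 ≤ β) {c : ℝ → ℝ} (hc : ∀ ρ, 0 < ρ → 0 < c ρ)
    (hη : 0 < η) :
    ∃ ρ, 0 < ρ ∧ ρ ≤ 1 / 8 ∧ ∃ r, 0 < r ∧ r ≤ η ∧ ∀ x₀, flatCylinder l x₀ β r ⊆ W →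
      ∀ k : ℕ, LpNormE n n b (flatCylinder l x₀ β (ρ ^ k * r)) <
        ENNReal.ofReal (c ρ / 4 ^ k) * unitBallVolumeRoot n := by
  have hn : (0 : ℝ) < n := Nat.cast_pos.2 l.pos
  have hσ : 0 < 1 - n / q := sub_pos.2 ((div_lt_one (hn.trans hq)).2 hq)
  obtain ⟨C, hC, hbound⟩ := exists_lpNormE_le_mul_rpow l.pos.ne' hq hb
  obtain ⟨ρ, hρσ, hρ⟩ := ((eventually_mul_rpow_lt hσ 1 (c := 1 / 4) (by norm_num)).and
    (Ioc_mem_nhdsGT (by norm_num : (0 : ℝ) < 1 / 8))).exists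
  obtain ⟨r, hCr, hr⟩ := ((eventually_mul_rpow_lt hσ (C * 2 ^ (1 - n / q)) (hc ρ hρ.1)).and
    (Ioc_mem_nhdsGT hη)).exists
  refine ⟨ρ, hρ.1, hρ.2, r, hr.1, hr.2, fun x₀ hW k => ?_⟩
  have hρ0 := hρ.1.le
  have hr0 := hr.1.le
  have hsub : flatCylinder l x₀ β (ρ ^ k * r) ⊆ W := hW.trans' <|
    flatCylinder_mono (by positivity)
      (mul_le_of_le_one_left hr0 (pow_le_one₀ hρ0 (hρ.2.trans (by norm_num))))
  refine (hbound _ hsub x₀ (2 * (ρ ^ k * r)) (by positivity)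
    (flatCylinder_subset_ball hβ)).trans_lt ?_
  refine ENNReal.mul_lt_mul_left (unitBallVolumeRoot_ne_zero n) (unitBallVolumeRoot_ne_top n) ?_
  have hcρ := hc ρ hρ.1
  rw [Real.mul_rpow zero_le_two (by positivity), ← mul_assoc]
  exact (ENNReal.ofReal_lt_ofReal_iff (by positivity)).2
    (mul_pow_mul_rpow_lt hρ0 hr0 (by positivity) (by linarith) hCr k)

end Scales

section HalfBall

variable {n : ℕ} {lam Lam : ℝ} {b v : EuclideanSpace ℝ (Fin n) → ℝ} {l : Fin n}
  {x₀ : EuclideanSpace ℝ (Fin n)} {β m q r r' R ρ t : ℝ}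

theorem IsPucciSupersolutionOn.linear_growth_of_le
    (h : IsPucciSupersolutionOn lam Lam b v (flatCylinder l x₀ β r)) (hlam : 0 < lam)
    (hLam : lam ≤ Lam) (hβ : 1 ≤ β) (hβL : n * Lam ≤ β * lam) (hx₀ : x₀ l = 0) (hr : 0 < r)
    (hm : 0 < m) (hρ : 0 < ρ) (hρ8 : ρ ≤ 1 / 8)
    (hv0 : ∀ y ∈ flatCylinder l x₀ β r, 0 ≤ v y)
    (hv : ∀ y ∈ flatCylinder l x₀ β r, ρ / (16 * β) * r ≤ y l → m ≤ v y)
    (hb : ∀ k : ℕ, LpNormE n n b (flatCylinder l x₀ β (ρ ^ k * r)) <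
      ENNReal.ofReal (lam * ρ ^ 3 / (192 * β) / 4 ^ k) * unitBallVolumeRoot n)
    (ht : 0 < t) (htr : 4 * β * t ≤ r) :
    β * m / (2 * r) * t ≤ v (x₀ + EuclideanSpace.single l t) := by
  have ha : 0 < 2 * β * m / r := by positivity
  have hflat (y) (hy : y ∈ flatCylinder l x₀ β r) :
      2 * β * m / r * y l - 2 * β * m / r * ρ / (16 * β) * r ≤ v y := by
    rcases le_total (ρ / (16 * β) * r) (y l) with hhigh | hlow
    · calc 2 * β * m / r * y l - 2 * β * m / r * ρ / (16 * β) * r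
          ≤ m / r * (2 * β * y l) := by
            rw [sub_le_iff_le_add, show m / r * (2 * β * y l) = 2 * β * m / r * y l by ring]
            exact le_add_of_nonneg_right (by positivity)
        _ ≤ m / r * r := by gcongr; exact hy.2.2.le
        _ = m := div_mul_cancel₀ m hr.ne'
        _ ≤ v y := hv y hy hhigh
    · have := mul_le_mul_of_nonneg_left hlow ha.le
      refine (sub_nonpos.2 (this.trans_eq ?_)).trans (hv0 y hy)
      ring
  convert h.linear_growth hlam hLam hβ hβL hx₀ hr ha hρ hρ8 hv0 hflat hb ht htr using 2
  ring

theorem norm_sub_single_apply_le (x : EuclideanSpace ℝ (Fin n)) (l : Fin n) :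
    ‖x - EuclideanSpace.single l (x l)‖ ≤ ‖x‖ := by
  refine le_of_sq_le_sq ?_ (norm_nonneg x)
  rw [norm_sub_sq_real]
  simp only [EuclideanSpace.inner_single_right, PiLp.norm_single, Real.norm_eq_abs,
    sq_abs, conj_trivial]
  nlinarith [sq_nonneg (x l)]

theorem flatCylinder_subset_halfBall (hn : 1 ≤ n) (hβ : 1 ≤ β) (hx₀ : ‖x₀‖ ≤ r)
    (hrR : r + 2 * r' ≤ R) :
    flatCylinder ⟨n - 1, by omega⟩ x₀ β r' ⊆ halfBall n hn R := fun y hy => by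
  refine ⟨?_, hy.2.1⟩
  have hdist := norm_sub_lt_of_mem_flatCylinder hβ hy
  have := norm_le_norm_add_norm_sub' y x₀
  linarith

theorem exists_pos_le_of_le_lastC (hn : 1 ≤ n) (hv : ContinuousOn v (halfBall n hn R))
    (hvpos : ∀ x ∈ halfBall n hn R, 0 < v x) (hrR : r < R) {h : ℝ} (hh : 0 < h) :
    ∃ m, 0 < m ∧ ∀ y, ‖y‖ ≤ r → h ≤ lastC n hn y → m ≤ v y := by
  set K : Set (EuclideanSpace ℝ (Fin n)) := Metric.closedBall 0 r ∩ {y | h ≤ lastC n hn y}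
  have hKcompact : IsCompact K := (isCompact_closedBall 0 r).inter_right <|
    isClosed_le continuous_const (by unfold lastC; fun_prop)
  have hKsub : K ⊆ halfBall n hn R := fun y hy =>
    ⟨(mem_closedBall_zero_iff.1 hy.1).trans_lt hrR, hh.trans_le hy.2⟩
  obtain ⟨m, hm, hle⟩ := hKcompact.exists_forall_le' (hv.mono hKsub) fun y hy => hvpos y (hKsub hy)
  exact ⟨m, hm, fun y hy hyh => hle y ⟨mem_closedBall_zero_iff.2 hy, hyh⟩⟩

theorem halfBall_mono (hn : 1 ≤ n) (hrR : r ≤ R) : halfBall n hn r ⊆ halfBall n hn R :=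
  fun _ hx => ⟨hx.1.trans_le hrR, hx.2⟩

theorem IsPucciSupersolutionOn.mul_lastC_le_of_lastC_le (hn : 1 ≤ n)
    (h : IsPucciSupersolutionOn lam Lam b v (halfBall n hn R)) (hlam : 0 < lam)
    (hLam : lam ≤ Lam) (hβ : 1 ≤ β) (hβL : n * Lam ≤ β * lam) (hr' : 0 < r')
    (hrR : r + 2 * r' ≤ R) (hm : 0 < m) (hρ : 0 < ρ) (hρ8 : ρ ≤ 1 / 8)
    (hvpos : ∀ x ∈ halfBall n hn R, 0 < v x)
    (hv : ∀ y ∈ halfBall n hn R, ρ / (16 * β) * r' ≤ lastC n hn y → m ≤ v y)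
    (hb : ∀ x₀, flatCylinder ⟨n - 1, by omega⟩ x₀ β r' ⊆ halfBall n hn R → ∀ k : ℕ,
      LpNormE n n b (flatCylinder ⟨n - 1, by omega⟩ x₀ β (ρ ^ k * r')) <
        ENNReal.ofReal (lam * ρ ^ 3 / (192 * β) / 4 ^ k) * unitBallVolumeRoot n)
    {x : EuclideanSpace ℝ (Fin n)} (hx : x ∈ halfBall n hn r) (hxr' : 4 * β * lastC n hn x ≤ r') :
    β * m / (2 * r') * lastC n hn x ≤ v x := by
  set l : Fin n := ⟨n - 1, by omega⟩
  set x₀ := x - EuclideanSpace.single l (x l) with hx₀_def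
  have hx₀ : ‖x₀‖ ≤ r := (norm_sub_single_apply_le x l).trans hx.1.le
  have hsub : flatCylinder l x₀ β r' ⊆ halfBall n hn R := flatCylinder_subset_halfBall hn hβ hx₀ hrR
  have hgrowth := (h.mono hsub).linear_growth_of_le hlam hLam hβ hβL (by simp [hx₀_def]) hr' hm
    hρ hρ8 (fun y hy => (hvpos y (hsub hy)).le) (fun y hy => hv y (hsub hy)) (hb x₀ hsub) hx.2 hxr'
  rwa [hx₀_def, lastC, sub_add_cancel] at hgrowth

theorem IsPucciSupersolutionOn.exists_mul_lastC_le (hn : 1 ≤ n)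
    (h : IsPucciSupersolutionOn lam Lam b v (halfBall n hn R)) (hlam : 0 < lam)
    (hLam : lam ≤ Lam) (hq : n < q) (hb : LpNormE n q b (halfBall n hn R) < ⊤)
    (hvpos : ∀ x ∈ halfBall n hn R, 0 < v x) (hr : 0 < r) (hrR : r < R) :
    ∃ c, 0 < c ∧ ∀ x ∈ halfBall n hn r, c * lastC n hn x ≤ v x := by
  have hβL : n * Lam ≤ n * Lam / lam * lam := (div_mul_cancel₀ _ hlam.ne').ge
  have hβ : 1 ≤ n * Lam / lam := by
    have : (1 : ℝ) ≤ n := mod_cast hn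
    rw [one_le_div hlam]
    nlinarith
  set β : ℝ := n * Lam / lam
  have hmono : halfBall n hn ((r + R) / 2) ⊆ halfBall n hn R := halfBall_mono hn (by linarith)
  have hq0 : 0 ≤ q := n.cast_nonneg.trans hq.le
  obtain ⟨ρ, hρ, hρ8, r', hr', hr'R, hnorm⟩ := exists_scale_lpNormE_flatCylinder_lt
    ⟨n - 1, by omega⟩ hq ((lpNormE_mono_set hq0 hmono).trans_lt hb) hβ
    (c := fun ρ => lam * ρ ^ 3 / (192 * β)) (fun ρ hρ => by positivity)
    (show 0 < (R - r) / 4 by linarith)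
  obtain ⟨m, hm, hmv⟩ := exists_pos_le_of_le_lastC hn h.contDiffOn.continuousOn hvpos
    (show (r + R) / 2 < R by linarith) (show 0 < ρ / (16 * β) * r' by positivity)
  refine ⟨min (β * m / (2 * r')) (m / r), by positivity, fun x hx => ?_⟩
  have hx_pos : 0 < lastC n hn x := hx.2
  rcases le_total (4 * β * lastC n hn x) r' with hnear | hfar
  · exact (mul_le_mul_of_nonneg_right (min_le_left _ _) hx_pos.le).trans <|
      (h.mono hmono).mul_lastC_le_of_lastC_le hn hlam hLam hβ hβL hr' (by linarith) hm hρ hρ8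
        (fun y hy => hvpos y (hmono hy)) (fun y hy => hmv y hy.1.le) hnorm hx hnear
  · have hhigh : ρ / (16 * β) * r' ≤ lastC n hn x := by
      rw [div_mul_eq_mul_div, div_le_iff₀ (by positivity)]
      nlinarith
    have hxr : lastC n hn x ≤ r := (le_abs_self _).trans ((PiLp.norm_apply_le x _).trans hx.1.le)
    calc min (β * m / (2 * r')) (m / r) * lastC n hn x ≤ m / r * r := by
          gcongr
          exact min_le_right _ _
      _ = m := div_mul_cancel₀ m hr.ne'
      _ ≤ v x := hmv x (by linarith [hx.1]) hhigh

theorem halfBall_nonempty (hn : 1 ≤ n) (hr : 0 < r) : (halfBall n hn r).Nonempty :=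
  ⟨EuclideanSpace.single ⟨n - 1, by omega⟩ (r / 2), by
    simp [halfBall, lastC, abs_of_pos hr, hr]⟩

theorem hopf_lemma_half_ball_general (hn : 1 ≤ n) (hlam : 0 < lam) (hLam : lam ≤ Lam)
    (hq : n < q) (hb : LpNormE n q b (halfBall n hn R) < ⊤)
    (hv : IsPucciSupersolutionOn lam Lam b v (halfBall n hn R))
    (hvpos : ∀ x ∈ halfBall n hn R, 0 < v x) (hr : 0 < r) (hrR : r < R) :
    0 < ⨅ x : halfBall n hn r, v x / lastC n hn x := by
  obtain ⟨c, hc, hle⟩ := hv.exists_mul_lastC_le hn hlam hLam hq hb hvpos hr hrR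
  have := (halfBall_nonempty hn hr).to_subtype
  exact hc.trans_le (le_ciInf fun x => (le_div_iff₀ x.2.2).2 (hle x x.2))

end HalfBall

/-- Hopf-type lemma for supersolutions in half-balls. -/
theorem hopf_lemma_half_ball
    (n : ℕ) (hn : 2 ≤ n) (lam Lam : ℝ) (hlam : 0 < lam) (hLam : lam ≤ Lam)
    (q : ℝ) (hq : (n : ℝ) < q)
    (b v : EuclideanSpace ℝ (Fin n) → ℝ)
    (hbcont : ContinuousOn b (halfBall n (by omega) 2))
    (hb0 : ∀ x ∈ halfBall n (by omega : 1 ≤ n) 2, 0 ≤ b x)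
    (hbq : LpNormE n q b (halfBall n (by omega) 2) < ⊤)
    (hv : ContDiffOn ℝ 2 v (halfBall n (by omega) 2))
    (hvpos : ∀ x ∈ halfBall n (by omega : 1 ≤ n) 2, 0 < v x)
    (hsuper : ∀ x ∈ halfBall n (by omega : 1 ≤ n) 2,
      pucciMinus n lam Lam (hess n v x) - b x * gradNorm n v x ≤ 0) :
    0 < ⨅ x : halfBall n (by omega : 1 ≤ n) 1, v x.1 / lastC n (by omega) x.1 :=
  hopf_lemma_half_ball_general _ hlam hLam hq hbq ⟨hv, fun x hx => sub_nonpos.1 (hsuper x hx)⟩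
    hvpos one_pos one_lt_two
end

section
/- Interior quantitative strong maximum principle. For every integer n ≥ 2, reals 0 < λ ≤ Λ, exponent q > n, K > 0, and every r ∈ (0,1), there exist constants ε > 0 and c_r > 0 such that the following holds. Let b : B₁ → ℝ be continuous with b ≥ 0 and ‖b‖_{L^q(B₁)} ≤ K, and let u be a C² function on B₁ with u ≥ 0 such that g(x) := 𝓜⁻(D²u(x)) − b(x)|Du(x)| ≤ 0 for all x ∈ B₁. Then c_r·(∫_{B₁} (−g(x))^ε dx)^{1/ε} ≤ inf_{x ∈ B_r} u(x), the integral being a Lebesgue integral with values in [0,+∞]. -/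
open MeasureTheory
open scoped ENNReal

/-!
Suppose that a paraboloid of opening `1` touches `u` from below at a point of a small ball. Subtract
from `u` a barrier made of this paraboloid and a Gaussian, which is a subsolution in an annulus
around the ball. The gradient of the difference covers a ball already on the lower contact set of
the difference, where its Hessian is nonnegative and, by the equation, controlled by the drift
outside the small ball. By the area formula (the Alexandrov–Bakelman–Pucci argument), paraboloids of
a larger opening touch `u` on a fixed fraction of the small ball, up to an error given by the slope
times the `Lⁿ` norm of the drift; since `q > n`, the part of this error that does not come from the
slope at the first contact point is absorbed on small balls.

By a Vitali covering, multiplying the opening by a fixed factor therefore multiplies the measure of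
the set without contact by a factor smaller than one, up to an error proportional to the `n`-th
power of the ratio of slope to opening. This ratio is small at the start if the first opening is
enlarged, and it decays geometrically: what is added to the slope in one step is proportional to the
radius of the largest balls without contact, hence small when their measure is.

At a point touched with opening and slope at most `A`, the equation gives `-g ≤ A (nΛ + b)`, so the
integral of `(-g) ^ ε` is finite for small `ε`, with a bound proportional to the power `ε` of the
first opening. For `x₀ ∈ B_r` one starts from a paraboloid centered at `x₀`, of opening proportional
to `u x₀`, slid up until it touches `u`.
-/

namespace QuantitativeMaximumPrinciple

open Matrix InnerProductSpace Filter Topology Metric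
open scoped NNReal

section Ellipticity

variable {ι : Type*}

open scoped MatrixOrder Matrix.Norms.L2Operator in
lemma trace_mul_nonneg [Fintype ι] {A B : Matrix ι ι ℝ} (hA : A.PosSemidef) (hB : B.PosSemidef) :
    0 ≤ (A * B).trace := by
  classical
  obtain ⟨C, rfl⟩ := CStarAlgebra.nonneg_iff_eq_star_mul_self.mp hB.nonneg
  rw [star_eq_conjTranspose, ← Matrix.mul_assoc, trace_mul_comm, ← Matrix.mul_assoc]
  exact (hA.mul_mul_conjTranspose_same C).trace_nonneg

variable [DecidableEq ι]

lemma det_le_trace_pow_card [Fintype ι] {A : Matrix ι ι ℝ} (hA : A.PosSemidef) :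
    A.det ≤ A.trace ^ Fintype.card ι := by
  rw [hA.1.det_eq_prod_eigenvalues, hA.1.trace_eq_sum_eigenvalues]
  simp only [RCLike.ofReal_real_eq_id, id]
  calc ∏ i, hA.1.eigenvalues i
      ≤ ∏ _i : ι, ∑ j, hA.1.eigenvalues j :=
        Finset.prod_le_prod (fun i _ => hA.eigenvalues_nonneg i) fun i _ =>
          Finset.single_le_sum (fun j _ => hA.eigenvalues_nonneg j) (Finset.mem_univ i)
    _ = (∑ j, hA.1.eigenvalues j) ^ Fintype.card ι := by
        rw [Finset.prod_const, Finset.card_univ]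

/-- Uniform ellipticity `λI ≤ A ≤ ΛI` of a symmetric coefficient matrix: the class of matrices
over which the Pucci operators are extremal. -/
structure IsElliptic (lam Lam : ℝ) (A : Matrix ι ι ℝ) : Prop where
  isSymm : A.IsSymm
  lower : (A - lam • (1 : Matrix ι ι ℝ)).PosSemidef
  upper : (Lam • (1 : Matrix ι ι ℝ) - A).PosSemidef

variable {lam Lam : ℝ} {A : Matrix ι ι ℝ}

lemma isElliptic_smul_one (h : lam ≤ Lam) :
    IsElliptic lam Lam (lam • (1 : Matrix ι ι ℝ)) where
  isSymm := isSymm_one.smul lam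
  lower := by rw [sub_self]; exact PosSemidef.zero
  upper := by rw [← sub_smul]; exact PosSemidef.one.smul (sub_nonneg.2 h)

variable [Fintype ι]

lemma IsElliptic.le_trace_mul (hA : IsElliptic lam Lam A) {P : Matrix ι ι ℝ} (hP : P.PosSemidef) :
    lam * P.trace ≤ (A * P).trace := by
  simpa [Matrix.sub_mul] using trace_mul_nonneg hA.lower hP

lemma IsElliptic.trace_mul_le (hA : IsElliptic lam Lam A) {P : Matrix ι ι ℝ} (hP : P.PosSemidef) :
    (A * P).trace ≤ Lam * P.trace := by
  simpa [Matrix.sub_mul] using trace_mul_nonneg hA.upper hP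

lemma IsElliptic.trace_le (hA : IsElliptic lam Lam A) : A.trace ≤ Fintype.card ι * Lam := by
  simpa [mul_comm] using hA.trace_mul_le PosSemidef.one

lemma IsElliptic.le_trace_mul_neg_smul_one_add_vecMulVec (hA : IsElliptic lam Lam A)
    {α β : ℝ} (hα : 0 ≤ α) (hβ : 0 ≤ β) (z : EuclideanSpace ℝ ι) :
    β * (lam * ‖z‖ ^ 2) - α * (Fintype.card ι * Lam) ≤
      (A * (-(α • (1 : Matrix ι ι ℝ)) + β • vecMulVec z z)).trace := by
  have hz : lam * ‖z‖ ^ 2 ≤ (A * vecMulVec z z).trace := by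
    have h := hA.le_trace_mul (posSemidef_vecMulVec_self_star (R := ℝ) z)
    rw [EuclideanSpace.real_norm_sq_eq]
    simpa [trace_vecMulVec, dotProduct, sq] using h
  have h1 := mul_le_mul_of_nonneg_left hA.trace_le hα
  have h2 := mul_le_mul_of_nonneg_left hz hβ
  simp only [Matrix.mul_add, Matrix.mul_neg, mul_smul_comm, Matrix.mul_one, trace_add,
    trace_neg, trace_smul, smul_eq_mul]
  linarith

end Ellipticity

section Pucci

variable {n : ℕ} {lam Lam : ℝ} {N : Matrix (Fin n) (Fin n) ℝ}

lemma le_pucciMinus {c : ℝ} (h : lam ≤ Lam)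
    (hc : ∀ A, IsElliptic lam Lam A → c ≤ (A * N).trace) : c ≤ pucciMinus n lam Lam N := by
  have h0 := isElliptic_smul_one (ι := Fin n) h
  refine le_csInf ⟨_, _, h0.isSymm, h0.lower, h0.upper, rfl⟩ ?_
  rintro t ⟨A, h1, h2, h3, rfl⟩
  exact hc A ⟨h1, h2, h3⟩

lemma mul_trace_sub_add_le_pucciMinus {S : Matrix (Fin n) (Fin n) ℝ} {c : ℝ} (h : lam ≤ Lam)
    (hNS : (N - S).PosSemidef) (hS : ∀ A, IsElliptic lam Lam A → c ≤ (A * S).trace) :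
    lam * (N - S).trace + c ≤ pucciMinus n lam Lam N := by
  refine le_pucciMinus h fun A hA => ?_
  calc lam * (N - S).trace + c
      ≤ (A * (N - S)).trace + (A * S).trace := add_le_add (hA.le_trace_mul hNS) (hS A hA)
    _ = (A * N).trace := by rw [← trace_add, ← Matrix.mul_add, sub_add_cancel]

lemma neg_mul_le_pucciMinus {a : ℝ} (hlam : 0 ≤ lam) (h : lam ≤ Lam) (ha : 0 ≤ a)
    (hN : (N + a • (1 : Matrix (Fin n) (Fin n) ℝ)).PosSemidef) :
    -(a * (n * Lam)) ≤ pucciMinus n lam Lam N := by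
  have hP : (N - -(a • (1 : Matrix (Fin n) (Fin n) ℝ))).PosSemidef := by rwa [sub_neg_eq_add]
  refine le_trans ?_ (mul_trace_sub_add_le_pucciMinus (c := -(a * (n * Lam))) h hP fun A hA => ?_)
  · exact le_add_of_nonneg_left (mul_nonneg hlam hP.trace_nonneg)
  · simpa using mul_le_mul_of_nonneg_left hA.trace_le ha

lemma pucciMinus_smul {c : ℝ} (hc : 0 ≤ c) :
    pucciMinus n lam Lam (c • N) = c * pucciMinus n lam Lam N := by
  rw [pucciMinus, pucciMinus, ← smul_eq_mul, ← Real.sInf_smul_of_nonneg hc]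
  congr 1
  ext t
  constructor
  · rintro ⟨A, h1, h2, h3, rfl⟩
    exact ⟨(A * N).trace, ⟨A, h1, h2, h3, rfl⟩, by simp⟩
  · rintro ⟨_, ⟨A, h1, h2, h3, rfl⟩, rfl⟩
    exact ⟨A, h1, h2, h3, by simp⟩

end Pucci

section SecondOrderCondition

lemma deriv_deriv_nonneg_of_isLocalMin {f : ℝ → ℝ} {t : ℝ} (h : IsLocalMin f t)
    (hf : ContinuousAt f t) : 0 ≤ deriv (deriv f) t := by
  by_contra! hneg
  have hmax := isLocalMax_of_deriv_deriv_neg hneg h.deriv_eq_zero hf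
  have hconst : f =ᶠ[𝓝 t] fun _ => f t := by
    filter_upwards [h, hmax] with s h1 h2 using le_antisymm h2 h1
  have hzero : deriv (deriv f) t = 0 := by simpa using hconst.deriv.deriv_eq
  exact hneg.ne hzero

variable {E : Type*} [NormedAddCommGroup E] [NormedSpace ℝ E] {u v : E → ℝ} {x : E}

lemma differentiableAt_fderiv (hu : ContDiffAt ℝ 2 u x) : DifferentiableAt ℝ (fderiv ℝ u) x :=
  (hu.fderiv_right (m := 1) (by norm_num)).differentiableAt one_ne_zero

lemma eventually_differentiableAt (hu : ContDiffAt ℝ 2 u x) :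
    ∀ᶠ y in 𝓝 x, DifferentiableAt ℝ u y :=
  (hu.eventually (by simp)).mono fun _ h => h.differentiableAt two_ne_zero

lemma fderiv_fderiv_add (hu : ContDiffAt ℝ 2 u x) (hv : ContDiffAt ℝ 2 v x) :
    fderiv ℝ (fderiv ℝ (u + v)) x = fderiv ℝ (fderiv ℝ u) x + fderiv ℝ (fderiv ℝ v) x := by
  have h : fderiv ℝ (u + v) =ᶠ[𝓝 x] fderiv ℝ u + fderiv ℝ v := by
    filter_upwards [eventually_differentiableAt hu, eventually_differentiableAt hv] with y h1 h2
      using fderiv_add h1 h2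
  rw [h.fderiv_eq, fderiv_add (differentiableAt_fderiv hu) (differentiableAt_fderiv hv)]

lemma fderiv_fderiv_const_smul (c : ℝ) (hu : ContDiffAt ℝ 2 u x) :
    fderiv ℝ (fderiv ℝ (c • u)) x = c • fderiv ℝ (fderiv ℝ u) x := by
  rw [fderiv_const_smul_field, fderiv_const_smul (differentiableAt_fderiv hu)]

lemma fderiv_fderiv_apply_self_nonneg_of_isLocalMin (hu : ContDiffAt ℝ 2 u x)
    (h : IsLocalMin u x) (e : E) : 0 ≤ fderiv ℝ (fderiv ℝ u) x e e := by
  set l : ℝ → E := fun t => x + t • e with hl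
  have hl' (t : ℝ) : HasDerivAt l e t := by
    simpa [hl] using ((hasDerivAt_id t).smul_const e).const_add x
  have hl0 : l 0 = x := by simp [hl]
  have hlim : Tendsto l (𝓝 0) (𝓝 x) := hl0 ▸ (hl' 0).continuousAt
  have hderiv : ∀ᶠ t in 𝓝 (0 : ℝ), HasDerivAt (u ∘ l) (fderiv ℝ u (l t) e) t :=
    (hlim.eventually (eventually_differentiableAt hu)).mono fun t ht =>
      ht.hasFDerivAt.comp_hasDerivAt t (hl' t)
  have hderiv2 : HasDerivAt (fun t => fderiv ℝ u (l t) e) (fderiv ℝ (fderiv ℝ u) x e e) 0 := by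
    have hD : HasFDerivAt (fderiv ℝ u) (fderiv ℝ (fderiv ℝ u) x) (l 0) := by
      rw [hl0]
      exact (differentiableAt_fderiv hu).hasFDerivAt
    simpa using (hD.comp_hasDerivAt 0 (hl' 0)).clm_apply (hasDerivAt_const (0 : ℝ) e)
  have heq : deriv (u ∘ l) =ᶠ[𝓝 0] fun t => fderiv ℝ u (l t) e :=
    hderiv.mono fun t ht => ht.deriv
  have hmin : IsLocalMin (u ∘ l) 0 := by
    filter_upwards [hlim.eventually h] with t ht
    simpa [hl0] using ht
  simpa [heq.deriv_eq, hderiv2.deriv] using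
    deriv_deriv_nonneg_of_isLocalMin hmin hderiv.self_of_nhds.continuousAt

end SecondOrderCondition

section Quadratic

variable {E : Type*} [NormedAddCommGroup E] [InnerProductSpace ℝ E]

/-- The paraboloid `x ↦ |x - c|² / 2`, whose Hessian is the identity. -/
noncomputable def halfSqDist (c x : E) : ℝ := ‖x - c‖ ^ 2 / 2

lemma contDiff_halfSqDist {k : WithTop ℕ∞} (c : E) : ContDiff ℝ k (halfSqDist c) :=
  ((contDiff_id.sub contDiff_const).norm_sq ℝ).div_const 2

lemma hasFDerivAt_halfSqDist (c x : E) : HasFDerivAt (halfSqDist c) (innerSL ℝ (x - c)) x := by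
  have h := (((hasFDerivAt_id x).sub_const c).norm_sq).mul_const (1 / 2 : ℝ)
  refine (h.congr_fderiv ?_).congr_of_eventuallyEq (.of_eq ?_)
  · ext e
    simp
  · ext y
    simp [halfSqDist, div_eq_mul_inv]

lemma fderiv_halfSqDist (c : E) : fderiv ℝ (halfSqDist c) = fun x => innerSL ℝ (x - c) :=
  funext fun x => (hasFDerivAt_halfSqDist c x).fderiv

lemma fderiv_fderiv_halfSqDist_apply (c x e f : E) :
    fderiv ℝ (fderiv ℝ (halfSqDist c)) x e f = inner ℝ e f := by
  have h : HasFDerivAt (fderiv ℝ (halfSqDist c)) (innerSL ℝ) x := by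
    rw [fderiv_halfSqDist]
    exact (innerSL ℝ).hasFDerivAt.comp x ((hasFDerivAt_id x).sub_const c)
  rw [h.fderiv]
  rfl

lemma halfSqDist_eq_add (c x z : E) :
    halfSqDist c z = halfSqDist c x + inner ℝ (x - c) (z - x) + ‖z - x‖ ^ 2 / 2 := by
  rw [halfSqDist, halfSqDist, ← sub_add_sub_cancel' x c z, norm_add_sq_real]
  ring

end Quadratic

section Gradient

variable {E : Type*} [NormedAddCommGroup E] [InnerProductSpace ℝ E] [CompleteSpace E]
  {u : E → ℝ} {x : E}

lemma hasFDerivAt_gradient (hu : ContDiffAt ℝ 2 u x) :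
    HasFDerivAt (gradient u) (fderiv ℝ (gradient u) x) x :=
  ((toDual ℝ E).symm.differentiableAt.comp x (differentiableAt_fderiv hu)).hasFDerivAt

lemma inner_fderiv_gradient (u : E → ℝ) (x e f : E) :
    inner ℝ (fderiv ℝ (gradient u) x e) f = fderiv ℝ (fderiv ℝ u) x e f := by
  have h : fderiv ℝ (gradient u) x = _ := (toDual ℝ E).symm.comp_fderiv (f := fderiv ℝ u) (x := x)
  rw [h]
  exact toDual_symm_apply

end Gradient

section Hessian

variable {n : ℕ} {u v : EuclideanSpace ℝ (Fin n) → ℝ} {x : EuclideanSpace ℝ (Fin n)}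

lemma hess_eq_of_fderiv_fderiv (hu : ContDiffAt ℝ 2 u x) :
    hess n u x = Matrix.of fun i j =>
      fderiv ℝ (fderiv ℝ u) x (EuclideanSpace.single i 1) (EuclideanSpace.single j 1) := by
  ext i j
  rw [hess, ((differentiableAt_fderiv hu).hasFDerivAt.clm_apply (hasFDerivAt_const _ x)).fderiv]
  simp

lemma hess_add (hu : ContDiffAt ℝ 2 u x) (hv : ContDiffAt ℝ 2 v x) :
    hess n (u + v) x = hess n u x + hess n v x := by
  ext i j
  have huv : ContDiffAt ℝ 2 (u + v) x := hu.add hv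
  simp [hess_eq_of_fderiv_fderiv, hu, hv, huv, fderiv_fderiv_add]

lemma hess_const_smul (c : ℝ) (hu : ContDiffAt ℝ 2 u x) :
    hess n (c • u) x = c • hess n u x := by
  ext i j
  have hcu : ContDiffAt ℝ 2 (c • u) x := hu.const_smul c
  simp [hess_eq_of_fderiv_fderiv, hu, hcu, fderiv_fderiv_const_smul]

lemma hess_halfSqDist (c x : EuclideanSpace ℝ (Fin n)) : hess n (halfSqDist c) x = 1 := by
  ext i j
  simp [hess_eq_of_fderiv_fderiv (contDiff_halfSqDist c).contDiffAt,
    fderiv_fderiv_halfSqDist_apply, EuclideanSpace.inner_single_right, one_apply, eq_comm]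

lemma hess_eq_transpose_toMatrix (hu : ContDiffAt ℝ 2 u x) :
    hess n u x = (LinearMap.toMatrixOrthonormal (EuclideanSpace.basisFun (Fin n) ℝ)
      (fderiv ℝ (gradient u) x : EuclideanSpace ℝ (Fin n) →ₗ[ℝ] EuclideanSpace ℝ (Fin n)))ᵀ := by
  ext i j
  rw [transpose_apply, LinearMap.toMatrixOrthonormal_apply_apply, real_inner_comm,
    hess_eq_of_fderiv_fderiv hu]
  simp [inner_fderiv_gradient]

lemma det_fderiv_gradient (hu : ContDiffAt ℝ 2 u x) :
    (fderiv ℝ (gradient u) x).det = (hess n u x).det := by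
  rw [hess_eq_transpose_toMatrix hu, det_transpose]
  exact (LinearMap.det_toMatrix _ _).symm

lemma posSemidef_hess (hu : ContDiffAt ℝ 2 u x)
    (h : ∀ e, 0 ≤ fderiv ℝ (fderiv ℝ u) x e e) : (hess n u x).PosSemidef := by
  have hpos : (fderiv ℝ (gradient u) x : EuclideanSpace ℝ (Fin n) →ₗ[ℝ] _).IsPositive := by
    refine ⟨fun e f => ?_, fun e => ?_⟩
    · have hs : IsSymmSndFDerivAt ℝ u x := hu.isSymmSndFDerivAt (by simp)
      rw [ContinuousLinearMap.coe_coe, real_inner_comm _ e, inner_fderiv_gradient,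
        inner_fderiv_gradient, hs e f]
    · simpa [inner_fderiv_gradient] using h e
  rw [hess_eq_transpose_toMatrix hu]
  exact ((LinearMap.posSemidef_toMatrix_iff _).2 hpos).transpose

end Hessian

section ContactSet

variable {E : Type*} [NormedAddCommGroup E] [NormedSpace ℝ E] {Ω : Set E} {u v : E → ℝ}
  {a a' G G' : ℝ} {x : E}

/-- The points of `Ω` at which `u` is touched from below, throughout `Ω`, by a concave paraboloid
of opening `a`, and where moreover its slope is at most `G`. -/
def contactSet (Ω : Set E) (u : E → ℝ) (a G : ℝ) : Set E :=
  {x ∈ Ω | ‖fderiv ℝ u x‖ ≤ G ∧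
    ∀ z ∈ Ω, u x + fderiv ℝ u x (z - x) - a / 2 * ‖z - x‖ ^ 2 ≤ u z}

lemma contactSet_subset : contactSet Ω u a G ⊆ Ω := fun _ hx => hx.1

lemma contactSet_mono (ha : a ≤ a') (hG : G ≤ G') :
    contactSet Ω u a G ⊆ contactSet Ω u a' G' := by
  refine fun x hx => ⟨hx.1, hx.2.1.trans hG, fun z hz => le_trans ?_ (hx.2.2 z hz)⟩
  gcongr

lemma add_mem_contactSet (hu : DifferentiableAt ℝ u x) (hv : DifferentiableAt ℝ v x)
    (hxu : x ∈ contactSet Ω u a G) (hxv : x ∈ contactSet Ω v a' G') :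
    x ∈ contactSet Ω (u + v) (a + a') (G + G') := by
  refine ⟨hxu.1, ?_, fun z hz => ?_⟩
  · rw [fderiv_add hu hv]
    exact norm_add_le_of_le hxu.2.1 hxv.2.1
  · rw [fderiv_add hu hv]
    simp only [Pi.add_apply, _root_.add_apply]
    linarith [hxu.2.2 z hz, hxv.2.2 z hz]

lemma contactSet_const_smul {c : ℝ} (hc : 0 < c) :
    contactSet Ω (c • u) (c * a) (c * G) = contactSet Ω u a G := by
  ext x
  simp only [contactSet, fderiv_const_smul_field, Pi.smul_apply, norm_smul,
    Real.norm_of_nonneg hc.le, mul_le_mul_iff_right₀ hc, Set.mem_ofPred_eq, _root_.smul_apply,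
    smul_eq_mul, mul_div_assoc, mul_assoc, ← mul_add, ← mul_sub]

lemma mem_contactSet_of_mem_closure (hΩ : IsOpen Ω) (hu : ContDiffOn ℝ 1 u Ω) (hx : x ∈ Ω)
    (hc : x ∈ closure (contactSet Ω u a G)) : x ∈ contactSet Ω u a G := by
  obtain ⟨s, hs, hlim⟩ := mem_closure_iff_seq_limit.mp hc
  have hux : ContDiffAt ℝ 1 u x := hu.contDiffAt (hΩ.mem_nhds hx)
  have hu' : Tendsto (fun k => u (s k)) atTop (𝓝 (u x)) := hux.continuousAt.tendsto.comp hlim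
  have hD : Tendsto (fun k => fderiv ℝ u (s k)) atTop (𝓝 (fderiv ℝ u x)) :=
    (hux.continuousAt_fderiv one_ne_zero).tendsto.comp hlim
  refine ⟨hx, le_of_tendsto hD.norm (.of_forall fun k => (hs k).2.1), fun z hz => ?_⟩
  have hz' : Tendsto (fun k => z - s k) atTop (𝓝 (z - x)) := tendsto_const_nhds.sub hlim
  have hDz : Tendsto (fun k => fderiv ℝ u (s k) (z - s k)) atTop (𝓝 (fderiv ℝ u x (z - x))) :=
    (isBoundedBilinearMap_apply.continuous.tendsto _).comp (hD.prodMk_nhds hz')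
  exact le_of_tendsto ((hu'.add hDz).sub ((hz'.norm.pow 2).const_mul (a / 2)))
    (.of_forall fun k => (hs k).2.2 z hz)

lemma measurableSet_contactSet [MeasurableSpace E] [BorelSpace E] (hΩ : IsOpen Ω)
    (hu : ContDiffOn ℝ 1 u Ω) : MeasurableSet (contactSet Ω u a G) := by
  have h : contactSet Ω u a G = Ω ∩ closure (contactSet Ω u a G) :=
    (Set.subset_inter contactSet_subset subset_closure).antisymm fun x hx =>
      mem_contactSet_of_mem_closure hΩ hu hx.1 hx.2
  rw [h]
  exact hΩ.measurableSet.inter isClosed_closure.measurableSet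

lemma exists_fderiv_eq_and_mem_contactSet {K : Set E} (hΩ : IsOpen Ω) (hK : IsCompact K)
    (hKΩ : K ⊆ Ω) (hu : DifferentiableOn ℝ u Ω) (hx : x ∈ K) (ξ : StrongDual ℝ E)
    (hξ : ∀ z ∈ Ω \ K, u x - ξ x ≤ u z - ξ z) :
    ∃ y ∈ K, fderiv ℝ u y = ξ ∧ y ∈ contactSet Ω u 0 ‖ξ‖ := by
  have hcont : ContinuousOn (fun z => u z - ξ z) K :=
    (hu.continuousOn.mono hKΩ).sub ξ.continuous.continuousOn
  obtain ⟨y, hyK, hy⟩ := hK.exists_isMinOn ⟨x, hx⟩ hcont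
  have hmin : ∀ z ∈ Ω, u y - ξ y ≤ u z - ξ z := fun z hz => by
    by_cases hzK : z ∈ K
    · exact hy hzK
    · exact (hy hx).trans (hξ z ⟨hz, hzK⟩)
  have hΩy : Ω ∈ 𝓝 y := hΩ.mem_nhds (hKΩ hyK)
  have hslope : fderiv ℝ u y = ξ := by
    have hloc : IsLocalMin (fun z => u z - ξ z) y := eventually_of_mem hΩy hmin
    exact sub_eq_zero.1 (hloc.hasFDerivAt_eq_zero
      ((hu.differentiableAt hΩy).hasFDerivAt.sub ξ.hasFDerivAt))
  refine ⟨y, hyK, hslope, hKΩ hyK, hslope ▸ le_rfl, fun z hz => ?_⟩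
  rw [hslope, map_sub]
  linarith [hmin z hz]

end ContactSet

section AlexandrovBakelmanPucci

variable {n : ℕ} {Ω : Set (EuclideanSpace ℝ (Fin n))} {u : EuclideanSpace ℝ (Fin n) → ℝ}
  {a G : ℝ} {x : EuclideanSpace ℝ (Fin n)}

lemma posSemidef_hess_add_smul_one (hΩ : IsOpen Ω) (hu : ContDiffAt ℝ 2 u x)
    (hx : x ∈ contactSet Ω u a G) :
    (hess n u x + a • (1 : Matrix (Fin n) (Fin n) ℝ)).PosSemidef := by
  have hp : ContDiffAt ℝ 2 (a • halfSqDist x) x :=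
    ((contDiff_halfSqDist x).const_smul a).contDiffAt
  have hup : ContDiffAt ℝ 2 (u + a • halfSqDist x) x := hu.add hp
  have hl : ContDiffAt ℝ 2 (⇑(-fderiv ℝ u x)) x := (-fderiv ℝ u x).contDiff.contDiffAt
  have hmin : IsLocalMin (u + a • halfSqDist x + ⇑(-fderiv ℝ u x)) x := by
    filter_upwards [hΩ.mem_nhds hx.1] with z hz
    have h := hx.2.2 z hz
    rw [map_sub] at h
    simp only [Pi.add_apply, Pi.smul_apply, halfSqDist, smul_eq_mul, _root_.neg_apply, sub_self,
      norm_zero]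
    linarith
  have hD2 : fderiv ℝ (fderiv ℝ (u + a • halfSqDist x + ⇑(-fderiv ℝ u x))) x
      = fderiv ℝ (fderiv ℝ (u + a • halfSqDist x)) x := by
    have hconst : fderiv ℝ (⇑(-fderiv ℝ u x)) = fun _ => -fderiv ℝ u x :=
      funext fun _ => ContinuousLinearMap.fderiv _
    rw [fderiv_fderiv_add hup hl, hconst, fderiv_fun_const, Pi.zero_apply, add_zero]
  rw [← hess_halfSqDist x x, ← hess_const_smul a (contDiff_halfSqDist x).contDiffAt,
    ← hess_add hu hp]
  exact posSemidef_hess hup fun e =>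
    hD2 ▸ fderiv_fderiv_apply_self_nonneg_of_isLocalMin (hup.add hl) hmin e

lemma volume_gradient_image_le (hΩ : IsOpen Ω) (hu : ContDiffOn ℝ 2 u Ω)
    {S : Set (EuclideanSpace ℝ (Fin n))} (hS : MeasurableSet S) (hSΩ : S ⊆ contactSet Ω u 0 G) :
    volume (gradient u '' S) ≤ ∫⁻ x in S, ENNReal.ofReal ((hess n u x).trace ^ n) := by
  have hC2 : ∀ x ∈ S, ContDiffAt ℝ 2 u x := fun x hx =>
    hu.contDiffAt (hΩ.mem_nhds (hSΩ hx).1)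
  refine (addHaar_image_le_lintegral_abs_det_fderiv volume hS fun x hx =>
    (hasFDerivAt_gradient (hC2 x hx)).hasFDerivWithinAt).trans
    (setLIntegral_mono' hS fun x hx => ENNReal.ofReal_le_ofReal ?_)
  have hpsd : (hess n u x).PosSemidef := by
    simpa using posSemidef_hess_add_smul_one hΩ (hC2 x hx) (hSΩ hx)
  rw [det_fderiv_gradient (hC2 x hx), abs_of_nonneg hpsd.det_nonneg]
  simpa using det_le_trace_pow_card hpsd

end AlexandrovBakelmanPucci

section Barrier

variable {E : Type*} [NormedAddCommGroup E] {Ω : Set E} {k P L d : ℝ} {c x x₀ x₁ : E}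

/-- The Gaussian `x ↦ exp (-k|x - c|² / 2)`. -/
noncomputable def gaussian (k : ℝ) (c x : E) : ℝ := Real.exp (-(k * halfSqDist c x))

lemma gaussian_pos (k : ℝ) (c x : E) : 0 < gaussian k c x := Real.exp_pos _

lemma gaussian_le_one (hk : 0 ≤ k) (c x : E) : gaussian k c x ≤ 1 :=
  Real.exp_le_one_iff.2 (neg_nonpos.2 (mul_nonneg hk (by unfold halfSqDist; positivity)))

/-- The barrier subtracted from a function that is touched at `x₁` by a paraboloid of opening `1`,
so that all contact takes place in the ball of center `x₀` and radius `3d/2`. The Gaussian bump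
makes it a subsolution in `d ≤ |x - x₀| ≤ 3d/2`, at the price of the opening `2 + L`. -/
noncomputable def barrier (P L d : ℝ) (x₀ x₁ : E) : E → ℝ :=
  (L * d ^ 2 / P) • gaussian (P / d ^ 2) x₀ + -halfSqDist x₁ + -halfSqDist x₀

lemma barrier_add_le (hP : 0 < P) (hL : 0 < L) (hd : 0 < d) (hx₁ : ‖x₁ - x₀‖ ≤ d)
    (hx : 3 / 2 * d ≤ ‖x - x₀‖) :
    barrier P L d x₀ x₁ x + halfSqDist x₁ x + d / 4 * ‖x - x₁‖ ≤ barrier P L d x₀ x₁ x₁ := by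
  have hdist : halfSqDist x₀ x₁ + d / 4 * ‖x - x₁‖ ≤ halfSqDist x₀ x := by
    have htri : ‖x - x₁‖ ≤ ‖x - x₀‖ + ‖x₁ - x₀‖ := by
      simpa using norm_sub_le (x - x₀) (x₁ - x₀)
    unfold halfSqDist
    nlinarith [norm_nonneg (x₁ - x₀)]
  have hgauss : gaussian (P / d ^ 2) x₀ x ≤ gaussian (P / d ^ 2) x₀ x₁ := by
    unfold gaussian
    gcongr
    nlinarith [mul_nonneg hd.le (norm_nonneg (x - x₁))]
  have hscaled := mul_le_mul_of_nonneg_left hgauss (show 0 ≤ L * d ^ 2 / P by positivity)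
  simp only [barrier, halfSqDist, Pi.add_apply, Pi.smul_apply, Pi.neg_apply, smul_eq_mul,
    sub_self, norm_zero] at hdist ⊢
  linarith

variable [InnerProductSpace ℝ E]

lemma contDiff_gaussian {m : WithTop ℕ∞} (k : ℝ) (c : E) : ContDiff ℝ m (gaussian k c) :=
  (contDiff_const.mul (contDiff_halfSqDist c)).neg.exp

lemma fderiv_gaussian (k : ℝ) (c : E) :
    fderiv ℝ (gaussian k c) = (-k) • gaussian k c • fun x => innerSL ℝ (x - c) := by
  ext1 x
  have h := ((hasFDerivAt_halfSqDist c x).const_mul k).neg.exp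
  refine h.fderiv.trans ?_
  simp only [Pi.smul_apply, Pi.smul_apply', gaussian]
  module

lemma fderiv_fderiv_gaussian_apply (k : ℝ) (c x e f : E) :
    fderiv ℝ (fderiv ℝ (gaussian k c)) x e f =
      k * gaussian k c x * (k * (inner ℝ (x - c) e * inner ℝ (x - c) f) - inner ℝ e f) := by
  have hG : HasFDerivAt (gaussian k c) (fderiv ℝ (gaussian k c) x) x :=
    ((contDiff_gaussian (m := 1) k c).differentiable one_ne_zero x).hasFDerivAt
  have hin : HasFDerivAt (fun x => innerSL ℝ (x - c)) (innerSL ℝ) x :=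
    (innerSL ℝ).hasFDerivAt.comp x ((hasFDerivAt_id x).sub_const c)
  rw [fderiv_gaussian] at hG ⊢
  rw [((hG.smul hin).const_smul (-k)).fderiv]
  change -k * (gaussian k c x * inner ℝ e f
    + -k * (gaussian k c x * inner ℝ (x - c) e) * inner ℝ (x - c) f) = _
  ring

lemma mem_contactSet_gaussian (hk : 0 ≤ k) (hx : x ∈ Ω) :
    x ∈ contactSet Ω (gaussian k c) k (k * ‖x - c‖) := by
  have hG := gaussian_pos k c x
  have hG1 := gaussian_le_one hk c x
  refine ⟨hx, ?_, fun z _ => ?_⟩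
  · rw [fderiv_gaussian, Pi.smul_apply, Pi.smul_apply', norm_smul, norm_smul,
      innerSL_apply_norm, norm_neg, Real.norm_of_nonneg hk, Real.norm_of_nonneg hG.le]
    gcongr
    exact mul_le_of_le_one_left (norm_nonneg _) hG1
  · have htangent : gaussian k c x * (1 - k * (halfSqDist c z - halfSqDist c x))
        ≤ gaussian k c z := by
      have h := Real.add_one_le_exp (-(k * (halfSqDist c z - halfSqDist c x)))
      have hz : gaussian k c z
          = gaussian k c x * Real.exp (-(k * (halfSqDist c z - halfSqDist c x))) := by
        rw [gaussian, gaussian, ← Real.exp_add]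
        ring_nf
      rw [hz]
      exact mul_le_mul_of_nonneg_left (by linarith) hG.le
    have hquad : gaussian k c x * (k / 2 * ‖z - x‖ ^ 2) ≤ k / 2 * ‖z - x‖ ^ 2 :=
      mul_le_of_le_one_left (by positivity) hG1
    rw [halfSqDist_eq_add c x z] at htangent
    simp only [fderiv_gaussian, Pi.smul_apply, Pi.smul_apply', _root_.smul_apply,
      innerSL_apply_apply, smul_eq_mul]
    linarith

lemma mem_contactSet_neg_halfSqDist (hx : x ∈ Ω) :
    x ∈ contactSet Ω (-halfSqDist c) 1 ‖x - c‖ := by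
  refine ⟨hx, ?_, fun z _ => ?_⟩
  · rw [fderiv_neg, fderiv_halfSqDist, norm_neg, innerSL_apply_norm]
  · rw [fderiv_neg, fderiv_halfSqDist, Pi.neg_apply, Pi.neg_apply, halfSqDist_eq_add c x z]
    simp only [_root_.neg_apply, innerSL_apply_apply]
    linarith

lemma hess_gaussian {n : ℕ} (k : ℝ) (c x : EuclideanSpace ℝ (Fin n)) :
    hess n (gaussian k c) x = (k * gaussian k c x) •
      (k • vecMulVec (x - c).ofLp (x - c).ofLp - 1) := by
  ext i j
  rw [hess_eq_of_fderiv_fderiv (contDiff_gaussian k c).contDiffAt, of_apply,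
    fderiv_fderiv_gaussian_apply]
  simp [EuclideanSpace.inner_single_right, vecMulVec_apply, one_apply, eq_comm]

lemma contDiff_barrier {m : WithTop ℕ∞} : ContDiff ℝ m (barrier P L d x₀ x₁) :=
  ((contDiff_const.smul (contDiff_gaussian _ x₀)).add (contDiff_halfSqDist x₁).neg).add
    (contDiff_halfSqDist x₀).neg

lemma mem_contactSet_barrier (hP : 0 < P) (hL : 0 < L) (hd : 0 < d) (hx : x ∈ Ω)
    (hx₀ : ‖x - x₀‖ ≤ 3 / 2 * d) (hx₁ : ‖x₁ - x₀‖ ≤ d) :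
    x ∈ contactSet Ω (barrier P L d x₀ x₁) (2 + L) ((4 + 3 / 2 * L) * d) := by
  have hscaled := mem_contactSet_gaussian (show 0 ≤ P / d ^ 2 by positivity) (c := x₀) hx
  rw [← contactSet_const_smul (show 0 < L * d ^ 2 / P by positivity)] at hscaled
  have hG : Differentiable ℝ ((L * d ^ 2 / P) • gaussian (P / d ^ 2) x₀) :=
    ((contDiff_gaussian (m := 1) (P / d ^ 2) x₀).differentiable one_ne_zero).const_smul _
  have hQ (c : E) : Differentiable ℝ (-halfSqDist c) :=
    ((contDiff_halfSqDist (k := 1) c).differentiable one_ne_zero).neg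
  refine contactSet_mono ?_ ?_ (add_mem_contactSet ((hG.add (hQ x₁)) x) (hQ x₀ x)
    (add_mem_contactSet (hG x) (hQ x₁ x) hscaled (mem_contactSet_neg_halfSqDist hx))
    (mem_contactSet_neg_halfSqDist hx))
  · refine le_of_eq ?_
    field_simp
    ring
  · have hcoef : L * d ^ 2 / P * (P / d ^ 2 * ‖x - x₀‖) = L * ‖x - x₀‖ := by
      field_simp
    have htri : ‖x - x₁‖ ≤ ‖x - x₀‖ + ‖x₁ - x₀‖ := by
      simpa using norm_sub_le (x - x₀) (x₁ - x₀)
    rw [hcoef]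
    nlinarith [mul_le_mul_of_nonneg_left hx₀ hL.le]

section Hessian

variable {n : ℕ} {lam Lam : ℝ} {A : Matrix (Fin n) (Fin n) ℝ} {x x₀ x₁ : EuclideanSpace ℝ (Fin n)}

lemma hess_barrier (hP : 0 < P) (hd : 0 < d) :
    hess n (barrier P L d x₀ x₁) x =
      -((2 + L * gaussian (P / d ^ 2) x₀ x) • (1 : Matrix (Fin n) (Fin n) ℝ)) +
        (L * gaussian (P / d ^ 2) x₀ x * (P / d ^ 2)) •
          vecMulVec (x - x₀).ofLp (x - x₀).ofLp := by
  have hG : ContDiffAt ℝ 2 ((L * d ^ 2 / P) • gaussian (P / d ^ 2) x₀) x :=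
    ((contDiff_gaussian (P / d ^ 2) x₀).const_smul (L * d ^ 2 / P)).contDiffAt
  have h₁ : ContDiffAt ℝ 2 ((-1 : ℝ) • halfSqDist x₁) x :=
    ((contDiff_halfSqDist x₁).const_smul (-1 : ℝ)).contDiffAt
  have h₀ : ContDiffAt ℝ 2 ((-1 : ℝ) • halfSqDist x₀) x :=
    ((contDiff_halfSqDist x₀).const_smul (-1 : ℝ)).contDiffAt
  have hG₁ : ContDiffAt ℝ 2
      ((L * d ^ 2 / P) • gaussian (P / d ^ 2) x₀ + (-1 : ℝ) • halfSqDist x₁) x := hG.add h₁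
  rw [barrier, ← neg_one_smul ℝ (halfSqDist x₁), ← neg_one_smul ℝ (halfSqDist x₀),
    hess_add hG₁ h₀, hess_add hG h₁, hess_const_smul _ (contDiff_gaussian _ _).contDiffAt,
    hess_const_smul _ (contDiff_halfSqDist _).contDiffAt,
    hess_const_smul _ (contDiff_halfSqDist _).contDiffAt, hess_halfSqDist, hess_halfSqDist,
    hess_gaussian, smul_smul]
  have hcoef : L * d ^ 2 / P * (P / d ^ 2 * gaussian (P / d ^ 2) x₀ x)
      = L * gaussian (P / d ^ 2) x₀ x := by
    field_simp
  rw [hcoef]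
  module

lemma neg_le_trace_mul_hess_barrier (hA : IsElliptic lam Lam A) (hlam : 0 ≤ lam) (hLam : 0 ≤ Lam)
    (hP : 0 < P) (hL : 0 ≤ L) (hd : 0 < d) :
    -((2 + L) * (n * Lam)) ≤ (A * hess n (barrier P L d x₀ x₁) x).trace := by
  have hG := gaussian_pos (P / d ^ 2) x₀ x
  have hG1 := gaussian_le_one (show 0 ≤ P / d ^ 2 by positivity) x₀ x
  rw [hess_barrier hP hd]
  refine le_trans ?_ (hA.le_trace_mul_neg_smul_one_add_vecMulVec (by positivity)
    (by positivity) (x - x₀))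
  have hle : L * gaussian (P / d ^ 2) x₀ x ≤ L := mul_le_of_le_one_right hL hG1
  have hnonneg : 0 ≤ L * gaussian (P / d ^ 2) x₀ x * (P / d ^ 2) * (lam * ‖x - x₀‖ ^ 2) := by
    positivity
  have := mul_le_mul_of_nonneg_right hle (show 0 ≤ n * Lam by positivity)
  rw [Fintype.card_fin]
  linarith

lemma trace_mul_hess_barrier_nonneg (hA : IsElliptic lam Lam A) (hlam : 0 < lam) (hLam : 0 ≤ Lam)
    (hP : n * Lam + 1 ≤ lam * P) (hL : 2 * (n * Lam) * Real.exp (2 * P) ≤ L) (hd : 0 < d)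
    (hx : d ≤ ‖x - x₀‖) (hx' : ‖x - x₀‖ ≤ 3 / 2 * d) :
    0 ≤ (A * hess n (barrier P L d x₀ x₁) x).trace := by
  have hP0 : 0 < P := pos_of_mul_pos_right (lt_of_lt_of_le (by positivity) hP) hlam.le
  have hL0 : 0 ≤ L := le_trans (by positivity) hL
  set G := gaussian (P / d ^ 2) x₀ x with hG_def
  have hLG : 2 * (n * Lam) ≤ L * G := by
    have hexp : Real.exp (-(2 * P)) ≤ G := by
      rw [hG_def, gaussian, halfSqDist]
      refine Real.exp_le_exp.2 (neg_le_neg ?_)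
      rw [div_mul_div_comm, div_le_iff₀ (by positivity)]
      nlinarith [pow_le_pow_left₀ (norm_nonneg _) hx' 2, mul_pos hP0 (pow_pos hd 2)]
    calc 2 * (n * Lam) = 2 * (n * Lam) * Real.exp (2 * P) * Real.exp (-(2 * P)) := by
          rw [mul_assoc, ← Real.exp_add]
          simp
      _ ≤ L * G := by gcongr
  have hLG0 : 0 ≤ L * G := le_trans (by positivity) hLG
  rw [hess_barrier hP0 hd]
  refine le_trans ?_ (hA.le_trace_mul_neg_smul_one_add_vecMulVec (by positivity)
    (by positivity) (x - x₀))
  have hradial : lam * P ≤ P / d ^ 2 * (lam * ‖x - x₀‖ ^ 2) := by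
    rw [div_mul_eq_mul_div, le_div_iff₀ (by positivity)]
    nlinarith [pow_le_pow_left₀ hd.le hx 2, mul_pos hlam hP0]
  rw [Fintype.card_fin, mul_assoc]
  nlinarith [mul_le_mul_of_nonneg_left (hP.trans hradial) hLG0]

end Hessian

end Barrier

section Supersolution

variable {n : ℕ} {lam Lam : ℝ} {Ω : Set (EuclideanSpace ℝ (Fin n))}
  {b u : EuclideanSpace ℝ (Fin n) → ℝ}

/-- `u` is a classical supersolution in `Ω` of `𝓜⁻(D²u) = b|Du|`, with a nonnegative drift `b`. -/
structure IsSupersolution (lam Lam : ℝ) (Ω : Set (EuclideanSpace ℝ (Fin n)))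
    (b u : EuclideanSpace ℝ (Fin n) → ℝ) : Prop where
  contDiffOn : ContDiffOn ℝ 2 u Ω
  drift_nonneg : ∀ x ∈ Ω, 0 ≤ b x
  pucciMinus_le : ∀ x ∈ Ω, pucciMinus n lam Lam (hess n u x) ≤ b x * ‖fderiv ℝ u x‖

lemma IsSupersolution.contDiffAt (hu : IsSupersolution lam Lam Ω b u) (hΩ : IsOpen Ω)
    {x : EuclideanSpace ℝ (Fin n)} (hx : x ∈ Ω) : ContDiffAt ℝ 2 u x :=
  hu.contDiffOn.contDiffAt (hΩ.mem_nhds hx)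

lemma IsSupersolution.const_smul (hu : IsSupersolution lam Lam Ω b u) (hΩ : IsOpen Ω) {c : ℝ}
    (hc : 0 ≤ c) : IsSupersolution lam Lam Ω b (c • u) where
  contDiffOn := hu.contDiffOn.const_smul c
  drift_nonneg := hu.drift_nonneg
  pucciMinus_le x hx := by
    rw [hess_const_smul c (hu.contDiffAt hΩ hx), pucciMinus_smul hc, fderiv_const_smul_field,
      Pi.smul_apply, norm_smul, Real.norm_of_nonneg hc, mul_left_comm]
    exact mul_le_mul_of_nonneg_left (hu.pucciMinus_le x hx) hc

lemma IsSupersolution.mul_trace_hess_sub_le (hu : IsSupersolution lam Lam Ω b u) (hΩ : IsOpen Ω)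
    (hLam : lam ≤ Lam) {ψ : EuclideanSpace ℝ (Fin n) → ℝ} (hψ : ContDiff ℝ 2 ψ) {c : ℝ}
    {x : EuclideanSpace ℝ (Fin n)} (hx : x ∈ Ω) (hpsd : (hess n (u - ψ) x).PosSemidef)
    (hc : ∀ A, IsElliptic lam Lam A → -c ≤ (A * hess n ψ x).trace) :
    lam * (hess n (u - ψ) x).trace ≤ b x * ‖fderiv ℝ u x‖ + c := by
  have hw : ContDiffAt ℝ 2 (u - ψ) x := (hu.contDiffAt hΩ hx).sub hψ.contDiffAt
  have hsub : hess n u x - hess n ψ x = hess n (u - ψ) x := by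
    rw [sub_eq_iff_eq_add, ← hess_add hw hψ.contDiffAt, sub_add_cancel]
  have h := mul_trace_sub_add_le_pucciMinus hLam (hsub ▸ hpsd) hc
  rw [hsub] at h
  linarith [hu.pucciMinus_le x hx]

end Supersolution

section ContactWithBarrier

lemma exists_fderiv_sub_barrier_eq {E : Type*} [NormedAddCommGroup E] [InnerProductSpace ℝ E]
    [ProperSpace E] {Ω : Set E} {u : E → ℝ} {P L d G : ℝ} {x₀ x₁ : E} (hΩ : IsOpen Ω)
    (hu : DifferentiableOn ℝ u Ω) (hP : 0 < P) (hL : 0 < L) (hd : 0 < d)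
    (hball : closedBall x₀ (3 / 2 * d) ⊆ Ω) (hx₁ : x₁ ∈ contactSet Ω u 1 G)
    (hx₁₀ : ‖x₁ - x₀‖ ≤ d) {η : StrongDual ℝ E} (hη : ‖η - fderiv ℝ u x₁‖ ≤ d / 4) :
    ∃ y ∈ closedBall x₀ (3 / 2 * d), fderiv ℝ (u - barrier P L d x₀ x₁) y = η ∧
      y ∈ contactSet Ω (u - barrier P L d x₀ x₁) 0 ‖η‖ := by
  have hψ : Differentiable ℝ (barrier P L d x₀ x₁) :=
    (contDiff_barrier (m := 1)).differentiable one_ne_zero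
  refine exists_fderiv_eq_and_mem_contactSet hΩ (isCompact_closedBall _ _) hball
    (hu.sub hψ.differentiableOn) (x := x₁) ?_ η fun z hz => ?_
  · rw [mem_closedBall_iff_norm]
    linarith
  have hzx₀ : 3 / 2 * d ≤ ‖z - x₀‖ := by
    rw [← dist_eq_norm]
    exact (not_le.1 hz.2).le
  have hψz := barrier_add_le hP hL hd hx₁₀ hzx₀
  have hslope : η (z - x₁) - fderiv ℝ u x₁ (z - x₁) ≤ d / 4 * ‖z - x₁‖ :=
    (le_abs_self _).trans ((η - fderiv ℝ u x₁).le_of_opNorm_le hη (z - x₁))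
  have hcontact := hx₁.2.2 z hz.1
  rw [map_sub η] at hslope
  rw [halfSqDist] at hψz
  simp only [Pi.sub_apply]
  linarith

variable {n : ℕ} {lam Lam : ℝ} {Ω : Set (EuclideanSpace ℝ (Fin n))}
  {b u : EuclideanSpace ℝ (Fin n) → ℝ} {P L d G G' : ℝ} {x x₀ x₁ : EuclideanSpace ℝ (Fin n)}

lemma ball_subset_gradient_image (hΩ : IsOpen Ω)
    (hu : DifferentiableOn ℝ u Ω) (hP : 0 < P) (hL : 0 < L) (hd : 0 < d)
    (hball : closedBall x₀ (3 / 2 * d) ⊆ Ω) (hx₁ : x₁ ∈ contactSet Ω u 1 G)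
    (hx₁₀ : ‖x₁ - x₀‖ ≤ d) :
    ball (gradient u x₁) (d / 4) ⊆ gradient (u - barrier P L d x₀ x₁) ''
      (closedBall x₀ (3 / 2 * d) ∩ contactSet Ω (u - barrier P L d x₀ x₁) 0 (G + d / 4)) := by
  intro p hp
  have hη : ‖toDual ℝ _ p - fderiv ℝ u x₁‖ ≤ d / 4 := by
    rw [← (toDual ℝ (EuclideanSpace ℝ (Fin n))).apply_symm_apply (fderiv ℝ u x₁), ← map_sub,
      LinearIsometryEquiv.norm_map]
    exact (mem_ball_iff_norm.1 hp).le
  obtain ⟨y, hy, hDy, hyc⟩ := exists_fderiv_sub_barrier_eq hΩ hu hP hL hd hball hx₁ hx₁₀ hη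
  have hnorm : ‖toDual ℝ _ p‖ ≤ G + d / 4 := by
    linarith [norm_sub_norm_le (toDual ℝ _ p) (fderiv ℝ u x₁), hx₁.2.1]
  refine ⟨y, ⟨hy, contactSet_mono le_rfl hnorm hyc⟩, ?_⟩
  rw [gradient, hDy, LinearIsometryEquiv.symm_apply_apply]

lemma contactSet_sub_barrier_subset (hΩ : IsOpen Ω) (hu : DifferentiableOn ℝ u Ω) (hP : 0 < P)
    (hL : 0 < L) (hd : 0 < d) (hx₁₀ : ‖x₁ - x₀‖ ≤ d)
    (hG' : G + d / 4 + (4 + 3 / 2 * L) * d ≤ G') :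
    closedBall x₀ (3 / 2 * d) ∩ contactSet Ω (u - barrier P L d x₀ x₁) 0 (G + d / 4) ⊆
      contactSet Ω u (2 + L) G' := by
  rintro x ⟨hx, hxc⟩
  have hψ : DifferentiableAt ℝ (barrier P L d x₀ x₁) x :=
    (contDiff_barrier (m := 1)).differentiable one_ne_zero x
  have h := add_mem_contactSet ((hu.differentiableAt (hΩ.mem_nhds hxc.1)).sub hψ) hψ hxc
    (mem_contactSet_barrier hP hL hd hxc.1 (mem_closedBall_iff_norm.1 hx) hx₁₀)
  rw [sub_add_cancel, zero_add] at h
  exact contactSet_mono le_rfl hG' h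

lemma IsSupersolution.trace_hess_sub_pow_le (hu : IsSupersolution lam Lam Ω b u) (hΩ : IsOpen Ω)
    (hlam : 0 < lam) (hLam : lam ≤ Lam) {ψ : EuclideanSpace ℝ (Fin n) → ℝ}
    (hψ : ContDiff ℝ 2 ψ) {c : ℝ} (hc0 : 0 ≤ c) (hx : x ∈ Ω)
    (hpsd : (hess n (u - ψ) x).PosSemidef) (hG' : ‖fderiv ℝ u x‖ ≤ G')
    (hc : ∀ A, IsElliptic lam Lam A → -c ≤ (A * hess n ψ x).trace) :
    (hess n (u - ψ) x).trace ^ n ≤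
      2 ^ (n - 1) * (c / lam) ^ n + 2 ^ (n - 1) * (G' / lam) ^ n * b x ^ n := by
  have hb := hu.drift_nonneg x hx
  have hG'0 : 0 ≤ G' := (norm_nonneg _).trans hG'
  have htrace : (hess n (u - ψ) x).trace ≤ c / lam + G' / lam * b x := by
    rw [div_mul_eq_mul_div, ← add_div, le_div_iff₀' hlam]
    linarith [hu.mul_trace_hess_sub_le hΩ hLam hψ hx hpsd hc,
      mul_le_mul_of_nonneg_left hG' hb]
  calc (hess n (u - ψ) x).trace ^ n
      ≤ (c / lam + G' / lam * b x) ^ n := pow_le_pow_left₀ hpsd.trace_nonneg htrace n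
    _ ≤ 2 ^ (n - 1) * ((c / lam) ^ n + (G' / lam * b x) ^ n) :=
        add_pow_le (by positivity) (by positivity) n
    _ = _ := by ring

lemma IsSupersolution.ofReal_trace_hess_sub_barrier_pow_le (hu : IsSupersolution lam Lam Ω b u)
    (hΩ : IsOpen Ω) (hn : n ≠ 0) (hlam : 0 < lam) (hLam : lam ≤ Lam)
    (hP : n * Lam + 1 ≤ lam * P) (hL : 2 * (n * Lam) * Real.exp (2 * P) ≤ L) (hd : 0 < d)
    (hx : x ∈ Ω) (hx₀ : ‖x - x₀‖ ≤ 3 / 2 * d)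
    (hpsd : (hess n (u - barrier P L d x₀ x₁) x).PosSemidef) (hG' : ‖fderiv ℝ u x‖ ≤ G') :
    ENNReal.ofReal ((hess n (u - barrier P L d x₀ x₁) x).trace ^ n) ≤
      (ball x₀ d).indicator
        (fun _ => ENNReal.ofReal (2 ^ (n - 1) * ((2 + L) * (n * Lam) / lam) ^ n)) x +
      ENNReal.ofReal (2 ^ (n - 1) * (G' / lam) ^ n) * ENNReal.ofReal (b x ^ n) := by
  have hLam0 : 0 ≤ Lam := hlam.le.trans hLam
  have hP0 : 0 < P := pos_of_mul_pos_right (lt_of_lt_of_le (by positivity) hP) hlam.le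
  have hL0 : 0 ≤ L := le_trans (by positivity) hL
  have hG'0 : 0 ≤ G' := (norm_nonneg _).trans hG'
  rw [← ENNReal.ofReal_mul (by positivity)]
  by_cases hxd : x ∈ ball x₀ d
  · rw [Set.indicator_of_mem hxd]
    exact (ENNReal.ofReal_le_ofReal (hu.trace_hess_sub_pow_le hΩ hlam hLam contDiff_barrier
      (by positivity) hx hpsd hG' fun A hA =>
        neg_le_trace_mul_hess_barrier hA hlam.le hLam0 hP0 hL0 hd)).trans ENNReal.ofReal_add_le
  · rw [Set.indicator_of_notMem hxd, zero_add]
    rw [mem_ball_iff_norm, not_lt] at hxd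
    have h := hu.trace_hess_sub_pow_le hΩ hlam hLam contDiff_barrier le_rfl hx hpsd hG'
      fun A hA => neg_zero.trans_le (trace_mul_hess_barrier_nonneg hA hlam hLam0 hP hL hd hxd hx₀)
    rw [zero_div, zero_pow hn, mul_zero, zero_add] at h
    exact ENNReal.ofReal_le_ofReal h

lemma IsSupersolution.volume_ball_le (hu : IsSupersolution lam Lam Ω b u) (hΩ : IsOpen Ω)
    (hn : n ≠ 0) (hlam : 0 < lam) (hLam : lam ≤ Lam) (hP : n * Lam + 1 ≤ lam * P)
    (hL : 2 * (n * Lam) * Real.exp (2 * P) ≤ L) (hd : 0 < d)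
    (hball : closedBall x₀ (3 / 2 * d) ⊆ Ω) (hx₁ : x₁ ∈ contactSet Ω u 1 G)
    (hx₁₀ : ‖x₁ - x₀‖ ≤ d) (hG' : G + d / 4 + (4 + 3 / 2 * L) * d ≤ G') :
    volume (ball (0 : EuclideanSpace ℝ (Fin n)) (d / 4)) ≤
      ENNReal.ofReal (2 ^ (n - 1) * ((2 + L) * (n * Lam) / lam) ^ n) *
          volume (contactSet Ω u (2 + L) G' ∩ ball x₀ d) +
        ENNReal.ofReal (2 ^ (n - 1) * (G' / lam) ^ n) *
          ∫⁻ x in closedBall x₀ (3 / 2 * d), ENNReal.ofReal (b x ^ n) := by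
  have hLam0 : 0 < Lam := hlam.trans_le hLam
  have hP0 : 0 < P := pos_of_mul_pos_right (lt_of_lt_of_le (by positivity) hP) hlam.le
  have hL0 : 0 < L := lt_of_lt_of_le (by positivity) hL
  have hudiff : DifferentiableOn ℝ u Ω := hu.contDiffOn.differentiableOn two_ne_zero
  have hw : ContDiffOn ℝ 2 (u - barrier P L d x₀ x₁) Ω :=
    hu.contDiffOn.sub contDiff_barrier.contDiffOn
  set κ := ENNReal.ofReal (2 ^ (n - 1) * ((2 + L) * (n * Lam) / lam) ^ n)
  set κ' := ENNReal.ofReal (2 ^ (n - 1) * (G' / lam) ^ n)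
  set Z := closedBall x₀ (3 / 2 * d) ∩ contactSet Ω (u - barrier P L d x₀ x₁) 0 (G + d / 4)
  have hZ : Z ⊆ contactSet Ω u (2 + L) G' :=
    contactSet_sub_barrier_subset hΩ hudiff hP0 hL0 hd hx₁₀ hG'
  have hZmeas : MeasurableSet Z :=
    isClosed_closedBall.measurableSet.inter
      (measurableSet_contactSet hΩ (hw.of_le one_le_two))
  calc volume (ball (0 : EuclideanSpace ℝ (Fin n)) (d / 4))
      = volume (ball (gradient u x₁) (d / 4)) := (volume.addHaar_ball_center _ _).symm
    _ ≤ volume (gradient (u - barrier P L d x₀ x₁) '' Z) :=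
        measure_mono (ball_subset_gradient_image hΩ hudiff hP0 hL0 hd hball hx₁ hx₁₀)
    _ ≤ ∫⁻ x in Z, ENNReal.ofReal ((hess n (u - barrier P L d x₀ x₁) x).trace ^ n) :=
        volume_gradient_image_le hΩ hw hZmeas Set.inter_subset_right
    _ ≤ ∫⁻ x in Z, ((ball x₀ d).indicator (fun _ => κ) x + κ' * ENNReal.ofReal (b x ^ n)) := by
        refine setLIntegral_mono' hZmeas fun x hx => ?_
        have hpsd := posSemidef_hess_add_smul_one hΩ (hw.contDiffAt (hΩ.mem_nhds hx.2.1)) hx.2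
        rw [zero_smul, add_zero] at hpsd
        exact hu.ofReal_trace_hess_sub_barrier_pow_le hΩ hn hlam hLam hP hL hd hx.2.1
          (mem_closedBall_iff_norm.1 hx.1) hpsd (hZ hx).2.1
    _ = κ * volume (Z ∩ ball x₀ d) + κ' * ∫⁻ x in Z, ENNReal.ofReal (b x ^ n) := by
        rw [lintegral_add_left (measurable_const.indicator measurableSet_ball),
          lintegral_indicator_const measurableSet_ball,
          Measure.restrict_apply measurableSet_ball, Set.inter_comm,
          lintegral_const_mul' _ _ ENNReal.ofReal_ne_top]
    _ ≤ _ := by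
        gcongr
        exact Set.inter_subset_left

end ContactWithBarrier

section UniformIntegrability

lemma rpow_le_rpow_add_mul_rpow {p q s t : ℝ} (hp : 0 ≤ p) (hpq : p ≤ q) (hs : 0 < s)
    (ht : 0 ≤ t) : t ^ p ≤ s ^ p + s ^ (p - q) * t ^ q := by
  rcases le_or_gt t s with h | h
  · exact (Real.rpow_le_rpow ht h hp).trans (le_add_of_nonneg_right (by positivity))
  · have ht0 : 0 < t := hs.trans h
    calc t ^ p = t ^ (p - q) * t ^ q := by rw [← Real.rpow_add ht0, sub_add_cancel]
      _ ≤ s ^ (p - q) * t ^ q := by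
          gcongr ?_ * _
          exact Real.rpow_le_rpow_of_nonpos hs h.le (sub_nonpos.2 hpq)
      _ ≤ s ^ p + s ^ (p - q) * t ^ q := le_add_of_nonneg_left (by positivity)

variable {α : Type*} [MeasurableSpace α] {μ : Measure α} {p q : ℝ}

lemma lintegral_rpow_le_mul_add_mul {f : α → ℝ} {s : ℝ} {S : Set α} (hp : 0 ≤ p) (hpq : p ≤ q)
    (hs : 0 < s) (hS : MeasurableSet S) (hf : ∀ x ∈ S, 0 ≤ f x) :
    ∫⁻ x in S, ENNReal.ofReal (f x ^ p) ∂μ ≤ ENNReal.ofReal (s ^ p) * μ S +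
      ENNReal.ofReal (s ^ (p - q)) * ∫⁻ x in S, ENNReal.ofReal (f x ^ q) ∂μ :=
  calc ∫⁻ x in S, ENNReal.ofReal (f x ^ p) ∂μ
      ≤ ∫⁻ x in S, (ENNReal.ofReal (s ^ p) +
          ENNReal.ofReal (s ^ (p - q)) * ENNReal.ofReal (f x ^ q)) ∂μ := by
        refine setLIntegral_mono' hS fun x hx => ?_
        rw [← ENNReal.ofReal_mul (by positivity)]
        exact (ENNReal.ofReal_le_ofReal (rpow_le_rpow_add_mul_rpow hp hpq hs (hf x hx))).trans
          ENNReal.ofReal_add_le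
    _ = _ := by
        rw [lintegral_add_left measurable_const, setLIntegral_const,
          lintegral_const_mul' _ _ ENNReal.ofReal_ne_top]

lemma exists_forall_lintegral_rpow_le (μ : Measure α) (hp : 0 ≤ p) (hpq : p < q) (B : ℝ) {η : ℝ}
    (hη : 0 < η) : ∃ δ > 0, ∀ (f : α → ℝ) (S : Set α), MeasurableSet S → (∀ x ∈ S, 0 ≤ f x) →
      ∫⁻ x in S, ENNReal.ofReal (f x ^ q) ∂μ ≤ ENNReal.ofReal B → μ S ≤ ENNReal.ofReal δ →
      ∫⁻ x in S, ENNReal.ofReal (f x ^ p) ∂μ ≤ ENNReal.ofReal η := by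
  have hlim : Tendsto (fun s : ℝ => s ^ (p - q) * B) atTop (𝓝 0) := by
    simpa [neg_sub] using (tendsto_rpow_neg_atTop (sub_pos.2 hpq)).mul_const B
  obtain ⟨s, hsB, hs⟩ :=
    ((hlim.eventually_le_const (half_pos hη)).and (eventually_gt_atTop 0)).exists
  refine ⟨η / 2 / s ^ p, by positivity, fun f S hS hf hB hδ => ?_⟩
  calc ∫⁻ x in S, ENNReal.ofReal (f x ^ p) ∂μ
      ≤ ENNReal.ofReal (s ^ p) * ENNReal.ofReal (η / 2 / s ^ p) +
          ENNReal.ofReal (s ^ (p - q)) * ENNReal.ofReal B := by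
        refine (lintegral_rpow_le_mul_add_mul hp hpq.le hs hS hf).trans ?_
        gcongr
    _ = ENNReal.ofReal (η / 2) + ENNReal.ofReal (s ^ (p - q) * B) := by
        rw [← ENNReal.ofReal_mul (by positivity), ← ENNReal.ofReal_mul (by positivity),
          mul_div_cancel₀ _ (by positivity)]
    _ ≤ ENNReal.ofReal (η / 2) + ENNReal.ofReal (η / 2) := by gcongr
    _ = ENNReal.ofReal η := by
        rw [← ENNReal.ofReal_add (by positivity) (by positivity), add_halves]

end UniformIntegrability

section Density

variable {n : ℕ}

lemma exists_forall_lintegral_closedBall_pow_le (hn : n ≠ 0) {q : ℝ} (hq : n < q) (B : ℝ) {η : ℝ}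
    (hη : 0 < η) : ∃ ρ₀ > 0, ∀ (Ω : Set (EuclideanSpace ℝ (Fin n)))
      (b : EuclideanSpace ℝ (Fin n) → ℝ), (∀ x ∈ Ω, 0 ≤ b x) →
      ∫⁻ x in Ω, ENNReal.ofReal (b x ^ q) ≤ ENNReal.ofReal B →
      ∀ x₀ ρ, 0 ≤ ρ → ρ ≤ ρ₀ → closedBall x₀ ρ ⊆ Ω →
        ∫⁻ x in closedBall x₀ ρ, ENNReal.ofReal (b x ^ n) ≤ ENNReal.ofReal η := by
  obtain ⟨δ, hδ, hsmall⟩ := exists_forall_lintegral_rpow_le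
    (volume : Measure (EuclideanSpace ℝ (Fin n))) n.cast_nonneg hq B hη
  set ω := volume.real (ball (0 : EuclideanSpace ℝ (Fin n)) 1)
  have hlim : Tendsto (fun ρ : ℝ => ρ ^ n * ω) (𝓝[>] 0) (𝓝 0) := by
    refine tendsto_nhdsWithin_of_tendsto_nhds ?_
    exact Continuous.tendsto' (by fun_prop) _ _ (by simp [hn])
  obtain ⟨ρ₀, hρ₀δ, hρ₀⟩ :=
    ((hlim.eventually_le_const hδ).and self_mem_nhdsWithin).exists
  refine ⟨ρ₀, hρ₀, fun Ω b hb hB x₀ ρ hρ hρρ₀ hball => ?_⟩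
  simp only [← Real.rpow_natCast]
  refine hsmall b _ isClosed_closedBall.measurableSet (fun x hx => hb x (hball hx))
    ((lintegral_mono_set hball).trans hB) ?_
  rw [volume.addHaar_closedBall x₀ hρ, finrank_euclideanSpace_fin,
    ← ofReal_measureReal measure_ball_lt_top.ne, ← ENNReal.ofReal_mul (by positivity)]
  refine ENNReal.ofReal_le_ofReal (le_trans ?_ hρ₀δ)
  gcongr

/-- If a paraboloid of opening `a` and slope at most `ag` touches `u` from below at distance at most
`d` from `x₀`, then paraboloids of opening `Ma` and slope at most `a(g + Hd)` touch `u` on a fixed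
fraction of the ball of center `x₀` and radius `d`, up to an error controlled by the drift. -/
def DensityEstimate (M H C d₀ : ℝ) (Ω : Set (EuclideanSpace ℝ (Fin n)))
    (b u : EuclideanSpace ℝ (Fin n) → ℝ) : Prop :=
  ∀ ⦃a g d : ℝ⦄ ⦃x₀ x₁ : EuclideanSpace ℝ (Fin n)⦄, 0 < a → 0 < d → d ≤ d₀ →
    closedBall x₀ (3 / 2 * d) ⊆ Ω → x₁ ∈ contactSet Ω u a (a * g) → ‖x₁ - x₀‖ ≤ d →
    ENNReal.ofReal (d ^ n) ≤ ENNReal.ofReal C *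
      (volume (contactSet Ω u (M * a) (a * (g + H * d)) ∩ ball x₀ d) +
        ENNReal.ofReal (g ^ n) * ∫⁻ x in closedBall x₀ (3 / 2 * d), ENNReal.ofReal (b x ^ n))

lemma two_pow_mul_add_div_pow_le {s t lam : ℝ} (hs : 0 ≤ s) (ht : 0 ≤ t) (hlam : 0 ≤ lam) :
    2 ^ (n - 1) * ((s + t) / lam) ^ n ≤ (2 ^ (n - 1)) ^ 2 / lam ^ n * (s ^ n + t ^ n) :=
  calc 2 ^ (n - 1) * ((s + t) / lam) ^ n = 2 ^ (n - 1) / lam ^ n * (s + t) ^ n := by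
        rw [div_pow]
        ring
    _ ≤ 2 ^ (n - 1) / lam ^ n * (2 ^ (n - 1) * (s ^ n + t ^ n)) := by
        gcongr
        exact add_pow_le hs ht n
    _ = _ := by ring

lemma ofReal_le_mul_add_of_le {k A ω s t g η : ℝ} {X I : ℝ≥0∞} (hω : 0 < ω)
    (hs : 0 ≤ s) (ht : 0 ≤ t) (hI : ENNReal.ofReal A * I ≤ ENNReal.ofReal η)
    (hη : t * η ≤ ω / 2 * s)
    (h : ENNReal.ofReal (ω * s) ≤
      ENNReal.ofReal k * X + ENNReal.ofReal A * (ENNReal.ofReal g + ENNReal.ofReal t) * I) :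
    ENNReal.ofReal s ≤ ENNReal.ofReal (2 / ω * max k A) * (X + ENNReal.ofReal g * I) := by
  have habsorbed : ENNReal.ofReal A * ENNReal.ofReal t * I ≤ ENNReal.ofReal (ω / 2 * s) := by
    rw [mul_right_comm, mul_comm]
    refine (mul_le_mul_right hI _).trans ?_
    rw [← ENNReal.ofReal_mul ht]
    exact ENNReal.ofReal_le_ofReal hη
  have hhalf : ENNReal.ofReal (ω / 2 * s) ≤
      ENNReal.ofReal k * X + ENNReal.ofReal A * ENNReal.ofReal g * I := by
    refine (ENNReal.add_le_add_iff_right (ENNReal.ofReal_ne_top (r := ω / 2 * s))).1 ?_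
    rw [← ENNReal.ofReal_add (by positivity) (by positivity), ← add_mul, add_halves]
    refine h.trans ?_
    rw [mul_add, add_mul, ← add_assoc]
    gcongr
  calc ENNReal.ofReal s = ENNReal.ofReal (2 / ω) * ENNReal.ofReal (ω / 2 * s) := by
        rw [← ENNReal.ofReal_mul (by positivity)]
        congr 1
        field_simp
    _ ≤ ENNReal.ofReal (2 / ω) * (ENNReal.ofReal (max k A) * X +
          ENNReal.ofReal (max k A) * ENNReal.ofReal g * I) := by
        gcongr
        refine hhalf.trans ?_
        gcongr
        · exact le_max_left k A
        · exact le_max_right k A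
    _ = _ := by
        rw [ENNReal.ofReal_mul (by positivity)]
        ring

lemma IsSupersolution.exists_forall_ofReal_pow_le (hn : n ≠ 0) {lam Lam q : ℝ} (hlam : 0 < lam)
    (hLam : lam ≤ Lam) (hq : n < q) (B : ℝ) :
    ∃ M ≥ 1, ∃ H ≥ 0, ∃ C > 0, ∃ d₀ > 0, ∀ {Ω : Set (EuclideanSpace ℝ (Fin n))}
      {b u : EuclideanSpace ℝ (Fin n) → ℝ}, IsOpen Ω → IsSupersolution lam Lam Ω b u →
      ∫⁻ x in Ω, ENNReal.ofReal (b x ^ q) ≤ ENNReal.ofReal B → ∀ {g d : ℝ}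
        {x₀ x₁ : EuclideanSpace ℝ (Fin n)}, 0 < d → d ≤ d₀ → closedBall x₀ (3 / 2 * d) ⊆ Ω →
        x₁ ∈ contactSet Ω u 1 g → ‖x₁ - x₀‖ ≤ d →
        ENNReal.ofReal (d ^ n) ≤ ENNReal.ofReal C *
          (volume (contactSet Ω u M (g + H * d) ∩ ball x₀ d) +
            ENNReal.ofReal (g ^ n) *
              ∫⁻ x in closedBall x₀ (3 / 2 * d), ENNReal.ofReal (b x ^ n)) := by
  have hLam0 : 0 < Lam := hlam.trans_le hLam
  have hω : 0 < volume.real (ball (0 : EuclideanSpace ℝ (Fin n)) 1) / 4 ^ n :=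
    div_pos (ENNReal.toReal_pos (measure_ball_pos volume _ one_pos).ne'
      measure_ball_lt_top.ne) (by positivity)
  set ω := volume.real (ball (0 : EuclideanSpace ℝ (Fin n)) 1) / 4 ^ n with hω_def
  set P := (n * Lam + 1) / lam with hP
  set L := 2 * (n * Lam) * Real.exp (2 * P) with hL
  have hL0 : 0 < L := by positivity
  set k := 2 ^ (n - 1) * ((2 + L) * (n * Lam) / lam) ^ n
  set A := (2 ^ (n - 1)) ^ 2 / lam ^ n
  have hA : 0 < A := by positivity
  set H := 1 / 4 + 4 + 3 / 2 * L with hH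
  have hH0 : 0 < H := by positivity
  obtain ⟨ρ₀, hρ₀, hsmall⟩ := exists_forall_lintegral_closedBall_pow_le hn hq B
    (show 0 < ω / 2 / (A * H ^ n) by positivity)
  refine ⟨2 + L, by linarith, H, by positivity, 2 / ω * max k A, by positivity, 2 / 3 * ρ₀,
    by positivity, fun {Ω b u} hΩ hu hb {g d x₀ x₁} hd hdd₀ hball hx₁ hx₁₀ => ?_⟩
  have hI := hsmall Ω b hu.drift_nonneg hb x₀ (3 / 2 * d) (by positivity) (by linarith) hball
  have hvol := hu.volume_ball_le hΩ hn hlam hLam (by rw [hP]; field_simp; rfl) hL.ge hd hball hx₁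
    hx₁₀ (G' := g + H * d) (by rw [hH]; linarith)
  have hg : 0 ≤ g := (norm_nonneg _).trans hx₁.2.1
  refine ofReal_le_mul_add_of_le (t := (H * d) ^ n) (η := A * (ω / 2 / (A * H ^ n))) hω
    (by positivity) (by positivity) ?_ (le_of_eq ?_) ?_
  · rw [ENNReal.ofReal_mul (by positivity)]
    gcongr
  · rw [mul_pow]
    field_simp
  · rw [← ENNReal.ofReal_add (by positivity) (by positivity), ← ENNReal.ofReal_mul (by positivity)]
    rw [volume.addHaar_ball_of_pos _ (by positivity), finrank_euclideanSpace_fin, div_pow,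
      ← ofReal_measureReal measure_ball_lt_top.ne, ← ENNReal.ofReal_mul (by positivity)] at hvol
    calc ENNReal.ofReal (ω * d ^ n)
        = _ := by rw [hω_def]; ring_nf
      _ ≤ _ := hvol
      _ ≤ _ := add_le_add_right (mul_le_mul_left (ENNReal.ofReal_le_ofReal
          (two_pow_mul_add_div_pow_le hg (by positivity) hlam.le)) _) _

lemma IsSupersolution.exists_forall_densityEstimate (hn : n ≠ 0) {lam Lam q : ℝ} (hlam : 0 < lam)
    (hLam : lam ≤ Lam) (hq : n < q) (B : ℝ) :
    ∃ M ≥ 1, ∃ H ≥ 0, ∃ C > 0, ∃ d₀ > 0, ∀ {Ω : Set (EuclideanSpace ℝ (Fin n))}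
      {b u : EuclideanSpace ℝ (Fin n) → ℝ}, IsOpen Ω → IsSupersolution lam Lam Ω b u →
      ∫⁻ x in Ω, ENNReal.ofReal (b x ^ q) ≤ ENNReal.ofReal B → DensityEstimate M H C d₀ Ω b u := by
  obtain ⟨M, hM, H, hH, C, hC, d₀, hd₀, hest⟩ :=
    IsSupersolution.exists_forall_ofReal_pow_le hn hlam hLam hq B
  refine ⟨M, hM, H, hH, C, hC, d₀, hd₀,
    fun {Ω b u} hΩ hu hb a g d x₀ x₁ ha hd hdd₀ hball hx₁ hx₁₀ => ?_⟩
  have hscale (A G : ℝ) : contactSet Ω (a⁻¹ • u) A G = contactSet Ω u (A * a) (a * G) := by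
    rw [← contactSet_const_smul ha, smul_inv_smul₀ ha.ne', mul_comm a A]
  have hx₁' : x₁ ∈ contactSet Ω (a⁻¹ • u) 1 g := by rwa [hscale, one_mul]
  rw [← hscale]
  exact hest hΩ (hu.const_smul hΩ (inv_nonneg.2 ha.le)) hb hd hdd₀ hball hx₁' hx₁₀

end Density

section Covering

section Vitali

variable {α : Type*} [PseudoMetricSpace α] [TopologicalSpace.SeparableSpace α] [MeasurableSpace α]
  [OpensMeasurableSpace α] {μ ν : Measure α} {D : Set α} {C : ℝ≥0∞} {R : ℝ}

lemma measure_le_mul_of_forall_closedBall_le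
    (h : ∀ x ∈ D, ∃ y ρ, 0 < ρ ∧ ρ ≤ R ∧ x ∈ closedBall y ρ ∧
      μ (closedBall y (5 * ρ)) ≤ C * ν (closedBall y ρ)) : μ D ≤ C * ν Set.univ := by
  choose! y ρ hρ hρR hmem hle using h
  obtain ⟨I, hID, hdisj, hcover⟩ :=
    Vitali.exists_disjoint_subfamily_covering_enlargement_closedBall D y ρ R hρR 5 (by norm_num)
  have hI : I.Countable := hdisj.countable_of_nonempty_interior fun x hx =>
    ⟨y x, ball_subset_interior_closedBall (mem_ball_self (hρ x (hID hx)))⟩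
  calc μ D ≤ μ (⋃ x ∈ I, closedBall (y x) (5 * ρ x)) := by
        refine measure_mono fun x hx => ?_
        obtain ⟨p, hp, hsub⟩ := hcover x hx
        exact Set.mem_biUnion hp (hsub (hmem x hx))
    _ ≤ ∑' p : I, μ (closedBall (y p) (5 * ρ p)) := measure_biUnion_le μ hI _
    _ ≤ ∑' p : I, C * ν (closedBall (y p) (ρ p)) :=
        ENNReal.tsum_le_tsum fun p => hle p (hID p.2)
    _ = C * ν (⋃ x ∈ I, closedBall (y x) (ρ x)) := by
        rw [ENNReal.tsum_mul_left,
          measure_biUnion hI hdisj fun x _ => isClosed_closedBall.measurableSet]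
    _ ≤ C * ν Set.univ := by
        gcongr
        exact Set.subset_univ _

lemma measure_le_mul_add_of_forall_closedBall_le {A Ω : Set α} {c : ℝ≥0∞} {f : α → ℝ≥0∞}
    (h : ∀ x ∈ D, ∃ y ρ, 0 < ρ ∧ ρ ≤ R ∧ x ∈ closedBall y ρ ∧ μ (closedBall y (5 * ρ)) ≤
      C * (μ (closedBall y ρ ∩ A) + c * ∫⁻ z in closedBall y ρ ∩ Ω, f z ∂μ)) :
    μ D ≤ C * (μ A + c * ∫⁻ z in Ω, f z ∂μ) := by
  have hcover : μ D ≤ C * (μ.restrict A + c • (μ.restrict Ω).withDensity f) Set.univ := by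
    refine measure_le_mul_of_forall_closedBall_le (R := R) fun x hx => ?_
    obtain ⟨y, ρ, hρ, hρR, hxy, hle⟩ := h x hx
    refine ⟨y, ρ, hρ, hρR, hxy, hle.trans_eq ?_⟩
    rw [Measure.add_apply, Measure.smul_apply, Measure.restrict_apply measurableSet_closedBall,
      withDensity_apply _ measurableSet_closedBall,
      Measure.restrict_restrict measurableSet_closedBall, smul_eq_mul]
  simpa using hcover

end Vitali

lemma exists_mem_dist_eq_infDist {X : Type*} [PseudoMetricSpace X] [ProperSpace X] {Ω S : Set X}
    {y : X} (hS : closure S ∩ Ω ⊆ S) (hne : S.Nonempty) (hball : closedBall y (infDist y S) ⊆ Ω) :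
    ∃ z ∈ S, dist z y = infDist y S := by
  obtain ⟨z, hz, hzy⟩ := isClosed_closure.exists_infDist_eq_dist hne.closure y
  rw [infDist_closure, dist_comm] at hzy
  exact ⟨z, hS ⟨hz, hball hzy.ge⟩, hzy.symm⟩

variable {E : Type*} [NormedAddCommGroup E] [NormedSpace ℝ E] {Ω S : Set E} {p x : E} {κ σ : ℝ}

/- Move from `x` towards `p` until the distance to `S` equals `σt`, where `t` is the fraction of the
segment covered so far; convexity provides the larger ball inside `Ω`. -/
lemma exists_closedBall_subset_and_infDist_eq (hΩ : Convex ℝ Ω) (hS : closure S ∩ Ω ⊆ S)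
    (hσ : 0 < σ) (hball : closedBall p (κ * σ) ⊆ Ω) (hp : p ∈ S)
    (hx : x ∈ Ω \ S) :
    ∃ y d, 0 < d ∧ d ≤ σ ∧ closedBall y (κ * d) ⊆ Ω ∧ infDist y S = d ∧
      dist x y * σ = d * dist x p := by
  have hx0 : 0 < infDist x S :=
    (infDist_pos_iff_notMem_closure ⟨p, hp⟩).1 fun h => hx.2 (hS ⟨h, hx.1⟩)
  obtain ⟨t, ⟨ht0, ht1⟩, ht⟩ : (0 : ℝ) ∈
      (fun t : ℝ => infDist (AffineMap.lineMap x p t) S - t * σ) '' Set.Icc 0 1 := by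
    refine intermediate_value_Icc' zero_le_one (Continuous.continuousOn ?_) ⟨?_, ?_⟩
    · exact ((continuous_infDist_pt S).comp AffineMap.lineMap_continuous).sub (by fun_prop)
    · simpa [infDist_zero_of_mem hp] using hσ.le
    · simpa using hx0.le
  have hdist : infDist (AffineMap.lineMap x p t) S = t * σ := sub_eq_zero.1 ht
  have ht_pos : 0 < t := by
    refine ht0.lt_of_ne fun h => hx0.ne' ?_
    simpa [← h] using hdist
  refine ⟨AffineMap.lineMap x p t, t * σ, by positivity, mul_le_of_le_one_left hσ.le ht1, ?_,
    hdist, ?_⟩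
  · intro z hz
    have hw : p + t⁻¹ • (z - AffineMap.lineMap x p t) ∈ Ω := by
      refine hball ?_
      rw [mem_closedBall, dist_eq_norm] at hz ⊢
      rw [add_sub_cancel_left, norm_smul, Real.norm_of_nonneg (by positivity),
        inv_mul_le_iff₀ ht_pos]
      linarith
    convert hΩ.lineMap_mem hx.1 hw ⟨ht0, ht1⟩ using 1
    simp only [AffineMap.lineMap_apply_module', smul_sub, smul_add, smul_inv_smul₀ ht_pos.ne']
    abel
  · rw [dist_left_lineMap, Real.norm_of_nonneg ht0]
    ring

lemma exists_ball_subset_diff [ProperSpace E] (hΩ : Convex ℝ Ω) (hS : closure S ∩ Ω ⊆ S)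
    (hσ : 0 < σ) (hκ : 1 ≤ κ) (hball : closedBall p (κ * σ) ⊆ Ω) (hp : p ∈ S) (hx : x ∈ Ω \ S) :
    ∃ y d, 0 < d ∧ d ≤ σ ∧ closedBall y (κ * d) ⊆ Ω ∧ ball y d ⊆ Ω \ S ∧
      (∃ z ∈ S, dist z y = d) ∧ dist x y * σ = d * dist x p := by
  obtain ⟨y, d, hd, hdσ, hyΩ, hyS, hxy⟩ :=
    exists_closedBall_subset_and_infDist_eq hΩ hS hσ hball hp hx
  have hyd : closedBall y d ⊆ Ω :=
    (closedBall_subset_closedBall (le_mul_of_one_le_left hd.le hκ)).trans hyΩ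
  exact ⟨y, d, hd, hdσ, hyΩ,
    Set.subset_sdiff.2 ⟨ball_subset_closedBall.trans hyd, hyS ▸ disjoint_ball_infDist⟩,
    hyS ▸ exists_mem_dist_eq_infDist hS ⟨p, hp⟩ (hyS.symm ▸ hyd), hxy⟩

end Covering

section Decay

variable {n : ℕ} {Ω : Set (EuclideanSpace ℝ (Fin n))} {b u : EuclideanSpace ℝ (Fin n) → ℝ}
  {p : EuclideanSpace ℝ (Fin n)} {M H C d₀ a I : ℝ}

lemma DensityEstimate.volume_diff_le (hest : DensityEstimate M H C d₀ Ω b u)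
    (hΩ : IsOpen Ω) (hconv : Convex ℝ Ω) (hu : ContDiffOn ℝ 1 u Ω) (hH : 0 ≤ H) (hC : 0 ≤ C)
    {g σ θ R : ℝ} (ha : 0 < a) (hp : p ∈ contactSet Ω u a (a * g))
    (hσ : 0 < σ) (hσd₀ : σ ≤ d₀) (hball : closedBall p (3 / 2 * σ) ⊆ Ω)
    (hR : ∀ x ∈ Ω, dist x p ≤ R) (hσR : 3 / 2 * σ ≤ R)
    (hθ : ∀ y d, 0 < d → ball y d ⊆ Ω \ contactSet Ω u a (a * g) → d ≤ θ) :
    volume (Ω \ contactSet Ω u a (a * g)) ≤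
      ENNReal.ofReal ((5 * R / σ) ^ n * C) * volume (ball (0 : EuclideanSpace ℝ (Fin n)) 1) *
        (volume (contactSet Ω u (M * a) (a * (g + H * θ)) ∩ (Ω \ contactSet Ω u a (a * g))) +
          ENNReal.ofReal (g ^ n) * ∫⁻ x in Ω, ENNReal.ofReal (b x ^ n)) := by
  set S := contactSet Ω u a (a * g)
  set S' := contactSet Ω u (M * a) (a * (g + H * θ))
  have hS : closure S ∩ Ω ⊆ S := fun x hx => mem_contactSet_of_mem_closure hΩ hu hx.2 hx.1
  refine measure_le_mul_add_of_forall_closedBall_le (R := R) fun x hx => ?_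
  obtain ⟨y, d, hd, hdσ, hyΩ, hyD, ⟨x₁, hx₁, hx₁y⟩, hxy⟩ :=
    exists_ball_subset_diff hconv hS hσ (by norm_num) hball hp hx
  have hdρ : 3 / 2 * d ≤ R / σ * d := by
    rw [← le_div_iff₀ hσ] at hσR
    gcongr
  have hR0 : 0 < R := by linarith
  have hsub : contactSet Ω u (M * a) (a * (g + H * d)) ∩ ball y d ⊆
      closedBall y (R / σ * d) ∩ (S' ∩ (Ω \ S)) := fun z hz =>
    ⟨ball_subset_closedBall (ball_subset_ball (by linarith) hz.2),
      contactSet_mono le_rfl (by gcongr; exact hθ y d hd hyD) hz.1, hyD hz.2⟩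
  refine ⟨y, R / σ * d, by positivity, ?_, ?_, ?_⟩
  · rw [div_mul_eq_mul_div, div_le_iff₀ hσ]
    gcongr
  · rw [mem_closedBall, div_mul_eq_mul_div, le_div_iff₀ hσ, hxy, mul_comm]
    gcongr
    exact hR x hx.1
  rw [volume.addHaar_closedBall _ (by positivity), finrank_euclideanSpace_fin,
    show (5 * (R / σ * d)) ^ n = (5 * R / σ) ^ n * d ^ n by ring,
    ENNReal.ofReal_mul (by positivity), ENNReal.ofReal_mul' hC, mul_right_comm,
    mul_right_comm _ (ENNReal.ofReal C), mul_assoc _ (ENNReal.ofReal C)]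
  refine mul_le_mul_right ((hest ha hd (hdσ.trans hσd₀) hyΩ hx₁
    (dist_eq_norm x₁ y ▸ hx₁y.le)).trans ?_) _
  gcongr
  exact Set.subset_inter (closedBall_subset_closedBall hdρ) hyΩ

lemma le_of_ball_subset_of_measureReal_le (hn : n ≠ 0) {D : Set (EuclideanSpace ℝ (Fin n))}
    (hD : volume D ≠ ∞) {θ d : ℝ} {y : EuclideanSpace ℝ (Fin n)} (hd : 0 < d) (hθ : 0 ≤ θ)
    (hle : volume.real D ≤ volume.real (ball (0 : EuclideanSpace ℝ (Fin n)) 1) * θ ^ n)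
    (hsub : ball y d ⊆ D) : d ≤ θ := by
  have hv : 0 < volume.real (ball (0 : EuclideanSpace ℝ (Fin n)) 1) :=
    ENNReal.toReal_pos (measure_ball_pos volume _ one_pos).ne' measure_ball_lt_top.ne
  have hball : volume.real (ball y d) =
      volume.real (ball (0 : EuclideanSpace ℝ (Fin n)) 1) * d ^ n := by
    rw [measureReal_def, volume.addHaar_ball_of_pos y hd, finrank_euclideanSpace_fin,
      ENNReal.toReal_mul, ENNReal.toReal_ofReal (by positivity), mul_comm, measureReal_def]
  have hpow := hball ▸ (measureReal_mono hsub hD).trans hle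
  exact le_of_pow_le_pow_left₀ hn hθ (le_of_mul_le_mul_left hpow hv)

lemma measureReal_diff_contactSet_anti (hΩ : volume Ω ≠ ∞) {a' G G' : ℝ} (ha : a ≤ a')
    (hG : G ≤ G') :
    volume.real (Ω \ contactSet Ω u a' G') ≤ volume.real (Ω \ contactSet Ω u a G) :=
  measureReal_mono (Set.sdiff_subset_sdiff_right (contactSet_mono ha hG))
    (measure_ne_top_of_subset Set.sdiff_subset hΩ)

lemma DensityEstimate.measureReal_diff_le (hest : DensityEstimate M H C d₀ Ω b u) (hn : n ≠ 0)
    (hΩ : IsOpen Ω) (hconv : Convex ℝ Ω) (hΩv : volume Ω ≠ ∞) (hu : ContDiffOn ℝ 1 u Ω)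
    (hM : 1 ≤ M) (hH : 0 ≤ H) (hC : 0 ≤ C) (hI : 0 ≤ I)
    (hb : ∫⁻ x in Ω, ENNReal.ofReal (b x ^ n) ≤ ENNReal.ofReal I)
    {σ R c : ℝ} (hσ : 0 < σ) (hσd₀ : σ ≤ d₀) (hball : closedBall p (3 / 2 * σ) ⊆ Ω)
    (hR : ∀ x ∈ Ω, dist x p ≤ R) (hσR : 3 / 2 * σ ≤ R) (hc : 0 ≤ c)
    (hcκ : c * ((5 * R / σ) ^ n * C * volume.real (ball (0 : EuclideanSpace ℝ (Fin n)) 1)) ≤ 1)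
    {g θ : ℝ} (ha : 0 < a) (hp : p ∈ contactSet Ω u a (a * g)) (hθ : 0 ≤ θ)
    (hle : volume.real (Ω \ contactSet Ω u a (a * g)) ≤
      volume.real (ball (0 : EuclideanSpace ℝ (Fin n)) 1) * θ ^ n) :
    volume.real (Ω \ contactSet Ω u (M * a) (a * (g + H * θ))) ≤
      (1 - c) * volume.real (Ω \ contactSet Ω u a (a * g)) + g ^ n * I := by
  set D := Ω \ contactSet Ω u a (a * g) with hD
  set S' := contactSet Ω u (M * a) (a * (g + H * θ))
  have hg : 0 ≤ g := nonneg_of_mul_nonneg_right ((norm_nonneg _).trans hp.2.1) ha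
  have hDv : volume D ≠ ∞ := measure_ne_top_of_subset Set.sdiff_subset hΩv
  have hSv : volume (S' ∩ D) ≠ ∞ := measure_ne_top_of_subset Set.inter_subset_right hDv
  have hR0 : 0 ≤ R := by linarith
  have hsplit : volume.real D = volume.real (S' ∩ D) + volume.real (Ω \ S') := by
    have hS' : D \ S' = Ω \ S' := by
      rw [hD, Set.sdiff_sdiff, Set.union_eq_self_of_subset_left]
      exact contactSet_mono (le_mul_of_one_le_left ha.le hM) (by gcongr; nlinarith)
    rw [← measureReal_inter_add_sdiff (s := D) (measurableSet_contactSet hΩ hu) hDv, hS',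
      Set.inter_comm]
  have hcover := hest.volume_diff_le hΩ hconv hu hH hC ha hp hσ hσd₀ hball hR hσR
    fun y d hd => le_of_ball_subset_of_measureReal_le hn hDv hd hθ hle
  have hcover_real : volume.real D ≤ (5 * R / σ) ^ n * C *
      volume.real (ball (0 : EuclideanSpace ℝ (Fin n)) 1) *
        (volume.real (S' ∩ D) + g ^ n * I) := by
    refine (ENNReal.ofReal_le_ofReal_iff (by positivity)).1 ?_
    rw [ENNReal.ofReal_mul (by positivity), ENNReal.ofReal_mul (by positivity),
      ENNReal.ofReal_add (by positivity) (by positivity),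
      ENNReal.ofReal_mul (show 0 ≤ g ^ n by positivity),
      ofReal_measureReal hDv, ofReal_measureReal hSv, ofReal_measureReal measure_ball_lt_top.ne]
    exact hcover.trans (by gcongr)
  have hpos : 0 ≤ volume.real (S' ∩ D) + g ^ n * I := by positivity
  have := mul_le_mul_of_nonneg_left hcover_real hc
  have := mul_le_mul_of_nonneg_right hcκ hpos
  linarith

lemma measureReal_diff_contactSet_le {v c β J N : ℝ} (hΩ : volume Ω ≠ ∞) (hv : volume.real Ω ≤ v)
    (hH : 0 ≤ H) (ha : 0 < a) (hc : c ≤ 1) (hβ : 0 < β) (hβn : β ^ n = 1 - c / 2) (hJ : 0 < J)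
    (hJI : J ^ n * I ≤ c / 2 * v) (hMN : M ≤ N) (hN1 : 1 ≤ N) (hN : J + H ≤ N * (J * β))
    (hp : p ∈ contactSet Ω u a (a * J))
    (hstep : ∀ {a g θ : ℝ}, 0 < a → p ∈ contactSet Ω u a (a * g) → 0 ≤ θ →
      volume.real (Ω \ contactSet Ω u a (a * g)) ≤ v * θ ^ n →
        volume.real (Ω \ contactSet Ω u (M * a) (a * (g + H * θ))) ≤
          (1 - c) * volume.real (Ω \ contactSet Ω u a (a * g)) + g ^ n * I) (k : ℕ) :
    volume.real (Ω \ contactSet Ω u (a * N ^ k) (a * N ^ k * (J * β ^ k))) ≤ v * (β ^ k) ^ n := by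
  have hNβ : 1 ≤ N * β := le_of_mul_le_mul_left (by linarith) hJ
  have hp_mem (k : ℕ) : p ∈ contactSet Ω u (a * N ^ k) (a * N ^ k * (J * β ^ k)) := by
    refine contactSet_mono (le_mul_of_one_le_right ha.le (one_le_pow₀ hN1)) ?_ hp
    calc a * J ≤ a * J * (N * β) ^ k := le_mul_of_one_le_right (by positivity) (one_le_pow₀ hNβ)
      _ = a * N ^ k * (J * β ^ k) := by ring
  induction k with
  | zero => simpa using (measureReal_mono Set.sdiff_subset hΩ).trans hv
  | succ k ih =>
    calc volume.real (Ω \ contactSet Ω u (a * N ^ (k + 1)) (a * N ^ (k + 1) * (J * β ^ (k + 1))))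
        ≤ volume.real (Ω \ contactSet Ω u (M * (a * N ^ k))
            (a * N ^ k * (J * β ^ k + H * β ^ k))) := by
          refine measureReal_diff_contactSet_anti hΩ ?_ ?_
          · rw [pow_succ', mul_left_comm]
            gcongr
          · calc a * N ^ k * (J * β ^ k + H * β ^ k) = a * N ^ k * β ^ k * (J + H) := by ring
              _ ≤ a * N ^ k * β ^ k * (N * (J * β)) := by gcongr
              _ = a * N ^ (k + 1) * (J * β ^ (k + 1)) := by ring
      _ ≤ (1 - c) * volume.real (Ω \ contactSet Ω u (a * N ^ k) (a * N ^ k * (J * β ^ k))) +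
            (J * β ^ k) ^ n * I := hstep (by positivity) (hp_mem k) (by positivity) ih
      _ ≤ (1 - c) * (v * (β ^ k) ^ n) + (β ^ k) ^ n * (c / 2 * v) := by
          rw [mul_pow, mul_comm (J ^ n), mul_assoc ((β ^ k) ^ n)]
          have := sub_nonneg.2 hc
          gcongr
      _ = v * (β ^ (k + 1)) ^ n := by
          rw [pow_succ β k, mul_pow, hβn]
          ring

lemma exists_decay_constants (hn : n ≠ 0) {κ v I : ℝ} (hκ : 0 ≤ κ) (hv : 0 < v) (hI : 0 ≤ I) :
    ∃ c β J : ℝ, 0 < c ∧ c ≤ 1 ∧ c * κ ≤ 1 ∧ 0 < β ∧ β ≤ 1 ∧ β ^ n = 1 - c / 2 ∧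
      0 < J ∧ J ≤ 1 ∧ J ^ n * I ≤ c / 2 * v := by
  set c := 1 / (κ + 1)
  have hc : 0 < c := by positivity
  have hc1 : c ≤ 1 := by rw [div_le_one (by positivity)]; linarith
  have hcκ : c * κ ≤ 1 := by rw [one_div_mul_eq_div, div_le_one (by positivity)]; linarith
  set β := (1 - c / 2) ^ (n : ℝ)⁻¹
  have hβ : 0 < β := Real.rpow_pos_of_pos (by linarith) _
  have hβ1 : β ≤ 1 := Real.rpow_le_one (by linarith) (by linarith) (by positivity)
  have hβn : β ^ n = 1 - c / 2 := Real.rpow_inv_natCast_pow (by linarith) hn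
  set J := min 1 (c / 2 * v / (I + 1))
  have hJ : 0 < J := lt_min one_pos (by positivity)
  have hJ1 : J ≤ 1 := min_le_left _ _
  have hJI : J ^ n * I ≤ c / 2 * v :=
    calc J ^ n * I ≤ c / 2 * v / (I + 1) * (I + 1) := by
          gcongr
          · exact (pow_le_of_le_one hJ.le hJ1 hn).trans (min_le_right _ _)
          · linarith
      _ = c / 2 * v := by field_simp
  exact ⟨c, β, J, hc, hc1, hcκ, hβ, hβ1, hβn, hJ, hJ1, hJI⟩

lemma DensityEstimate.exists_forall_measureReal_diff_le (hn : n ≠ 0) (hM : 1 ≤ M) (hH : 0 ≤ H)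
    (hC : 0 ≤ C) (hd₀ : 0 < d₀) (hI : 0 ≤ I) {s : ℝ} (hs : s < 1) :
    ∃ N ≥ 1, ∃ γ > 0, γ < 1 ∧ ∃ L > 0, ∀ {b u : EuclideanSpace ℝ (Fin n) → ℝ},
      DensityEstimate M H C d₀ (ball 0 1) b u → ContDiffOn ℝ 1 u (ball 0 1) →
      ∫⁻ x in ball 0 1, ENNReal.ofReal (b x ^ n) ≤ ENNReal.ofReal I →
      ∀ {a : ℝ} {p : EuclideanSpace ℝ (Fin n)}, 0 < a → ‖p‖ ≤ s →
        p ∈ contactSet (ball 0 1) u a a → ∀ k : ℕ,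
          volume.real (ball 0 1 \ contactSet (ball 0 1) u (L * a * N ^ k) (L * a * N ^ k)) ≤
            volume.real (ball (0 : EuclideanSpace ℝ (Fin n)) 1) * γ ^ k := by
  set v := volume.real (ball (0 : EuclideanSpace ℝ (Fin n)) 1)
  have hv : 0 < v := ENNReal.toReal_pos (measure_ball_pos volume _ one_pos).ne'
    measure_ball_lt_top.ne
  set σ := min d₀ ((1 - s) / 2)
  have hσ : 0 < σ := lt_min hd₀ (by linarith)
  set κ := (5 * 2 / σ) ^ n * C * v
  obtain ⟨c, β, J, hc, hc1, hcκ, hβ, hβ1, hβn, hJ, hJ1, hJI⟩ :=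
    exists_decay_constants hn (show 0 ≤ κ by positivity) hv hI
  refine ⟨max M ((J + H) / (J * β)), hM.trans (le_max_left _ _), β ^ n, by positivity,
    by linarith, J⁻¹, inv_pos.2 hJ,
    fun {b u} hest hu hb {a p} ha hps hp k => ?_⟩
  have hpJ : p ∈ contactSet (ball 0 1) u (J⁻¹ * a) (J⁻¹ * a * J) := by
    rw [mul_right_comm, inv_mul_cancel₀ hJ.ne', one_mul]
    exact contactSet_mono (le_mul_of_one_le_left ha.le ((one_le_inv₀ hJ).2 hJ1)) le_rfl hp
  have hσs : σ ≤ (1 - s) / 2 := min_le_right _ _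
  have hball : closedBall p (3 / 2 * σ) ⊆ ball 0 1 := by
    refine closedBall_subset_ball' ?_
    rw [dist_zero_right]
    linarith
  have hR (x : EuclideanSpace ℝ (Fin n)) (hx : x ∈ ball 0 1) : dist x p ≤ 2 := by
    rw [mem_ball_zero_iff] at hx
    linarith [dist_le_norm_add_norm x p]
  have hσ2 : 3 / 2 * σ ≤ 2 := by linarith [norm_nonneg p]
  have hak : 0 ≤ J⁻¹ * a * max M ((J + H) / (J * β)) ^ k := by positivity
  calc volume.real (ball 0 1 \ contactSet (ball 0 1) u _ _) ≤ _ :=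
        measureReal_diff_contactSet_anti measure_ball_lt_top.ne le_rfl
          (mul_le_of_le_one_right hak (mul_le_one₀ hJ1 (by positivity) (pow_le_one₀ hβ.le hβ1)))
    _ ≤ v * (β ^ k) ^ n := measureReal_diff_contactSet_le measure_ball_lt_top.ne le_rfl hH
        (by positivity) hc1 hβ hβn hJ hJI (le_max_left _ _) (hM.trans (le_max_left _ _))
        ((div_le_iff₀ (by positivity)).1 (le_max_right _ _)) hpJ
        (hest.measureReal_diff_le hn isOpen_ball (convex_ball 0 1) measure_ball_lt_top.ne hu hM hH
          hC hI hb hσ (min_le_left _ _) hball hR hσ2 hc.le hcκ) k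
    _ = v * (β ^ n) ^ k := by rw [pow_right_comm]

end Decay

section LevelSets

variable {α : Type*} {S : ℕ → Set α} {A M : ℝ≥0∞} {ε : ℝ}

lemma mul_rpow_le_sq_rpow_add {s t : ℝ≥0∞} (hε : ε ≤ 1 / 2) (ht : 1 ≤ t) :
    s * t ^ ε ≤ s ^ 2 + t := by
  have ht_sq : (t ^ ε) ^ 2 ≤ t := by
    rw [← ENNReal.rpow_natCast, ← ENNReal.rpow_mul]
    refine (ENNReal.rpow_le_rpow_of_exponent_le ht ?_).trans_eq (ENNReal.rpow_one t)
    push_cast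
    linarith
  refine le_trans ?_ (add_le_add_right ht_sq _)
  rcases le_total s (t ^ ε) with h | h
  · exact le_add_left ((mul_le_mul_left h _).trans_eq (sq _).symm)
  · exact le_add_right ((mul_le_mul_right h _).trans_eq (sq _).symm)

lemma rpow_le_mul_add_of_le_mul_pow_mul {F h : ℝ≥0∞} {j : ℕ} (hε₀ : 0 ≤ ε) (hε : ε ≤ 1 / 2)
    (hh : 1 ≤ h) (hF : F ≤ A * M ^ (j + 1) * h) :
    F ^ ε ≤ (A * M) ^ ε * (h + ((M ^ ε) ^ 2) ^ j) :=
  calc F ^ ε ≤ (A * M * (M ^ j * h)) ^ ε := by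
        refine ENNReal.rpow_le_rpow (hF.trans_eq ?_) hε₀
        ring
    _ = (A * M) ^ ε * ((M ^ ε) ^ j * h ^ ε) := by
        simp only [ENNReal.mul_rpow_of_nonneg _ _ hε₀, ← ENNReal.rpow_natCast,
          ← ENNReal.rpow_mul, mul_comm ε]
    _ ≤ (A * M) ^ ε * (h + ((M ^ ε) ^ 2) ^ j) := by
        rw [add_comm, pow_right_comm]
        gcongr
        exact mul_rpow_le_sq_rpow_add hε hh

lemma tsum_indicator_compl_eq_top {x : α} {t : ℝ≥0∞} (ht : 1 ≤ t) (hx : ∀ k, x ∉ S k) :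
    ∑' k, (S k)ᶜ.indicator (fun _ => t ^ k) x = ∞ := by
  rw [← top_le_iff, ← ENNReal.tsum_const_eq_top_of_ne_zero (α := ℕ) one_ne_zero]
  refine ENNReal.tsum_le_tsum fun k => ?_
  rw [Set.indicator_of_mem (Set.mem_compl (hx k))]
  exact one_le_pow₀ ht

lemma rpow_le_mul_add_tsum_indicator {F h : ℝ≥0∞} {x : α} (hε₀ : 0 < ε) (hε : ε ≤ 1 / 2)
    (hA : A ≠ 0) (hM : 1 ≤ M) (hh : 1 ≤ h) (hF : ∀ k, x ∈ S k → F ≤ A * M ^ k * h) :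
    F ^ ε ≤ (A * M) ^ ε * (h + ∑' k, (S k)ᶜ.indicator (fun _ => ((M ^ ε) ^ 2) ^ k) x) := by
  by_cases hex : ∃ k, x ∈ S k
  · classical
    obtain ⟨k, hk, hmin⟩ : ∃ k, x ∈ S k ∧ ∀ j < k, x ∉ S j :=
      ⟨Nat.find hex, Nat.find_spec hex, fun j hj => Nat.find_min hex hj⟩
    cases k with
    | zero =>
      calc F ^ ε ≤ (A * M * h) ^ ε := by
            refine ENNReal.rpow_le_rpow ((hF 0 hk).trans ?_) hε₀.le
            gcongr
            simpa
        _ = (A * M) ^ ε * h ^ ε := ENNReal.mul_rpow_of_nonneg _ _ hε₀.le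
        _ ≤ _ := by
            gcongr
            exact le_add_right ((ENNReal.rpow_le_rpow_of_exponent_le hh
              (by linarith : ε ≤ 1)).trans_eq (ENNReal.rpow_one h))
    | succ j =>
      refine (rpow_le_mul_add_of_le_mul_pow_mul hε₀.le hε hh (hF _ hk)).trans ?_
      gcongr
      refine le_trans ?_ (ENNReal.le_tsum j)
      rw [Set.indicator_of_mem (Set.mem_compl (hmin j j.lt_succ_self))]
  · have hAM : (A * M) ^ ε ≠ 0 := by
      simp [ENNReal.rpow_eq_zero_iff, hA, (one_pos.trans_le hM).ne', hε₀.le]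
    rw [tsum_indicator_compl_eq_top (one_le_pow₀ (ENNReal.one_le_rpow hM hε₀))
      (not_exists.1 hex), add_top, ENNReal.mul_top hAM]
    exact le_top

lemma lintegral_rpow_le_of_forall_measure_compl_le [MeasurableSpace α] {μ : Measure α}
    {F h : α → ℝ≥0∞} {v γ : ℝ≥0∞} (hε₀ : 0 < ε) (hε : ε ≤ 1 / 2) (hA : A ≠ 0) (hA' : A ≠ ∞)
    (hM : 1 ≤ M) (hM' : M ≠ ∞) (hS : ∀ k, MeasurableSet (S k)) (hh : ∀ x, 1 ≤ h x)
    (hF : ∀ᵐ x ∂μ, ∀ k, x ∈ S k → F x ≤ A * M ^ k * h x) (hμ : ∀ k, μ (S k)ᶜ ≤ v * γ ^ k) :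
    ∫⁻ x, F x ^ ε ∂μ ≤ (A * M) ^ ε * (∫⁻ x, h x ∂μ + v * (1 - (M ^ ε) ^ 2 * γ)⁻¹) := by
  have hm (k : ℕ) : Measurable ((S k)ᶜ.indicator fun _ => ((M ^ ε) ^ 2) ^ k) :=
    measurable_const.indicator (hS k).compl
  calc ∫⁻ x, F x ^ ε ∂μ
      ≤ ∫⁻ x, (A * M) ^ ε *
          (h x + ∑' k, (S k)ᶜ.indicator (fun _ => ((M ^ ε) ^ 2) ^ k) x) ∂μ :=
        lintegral_mono_ae <| hF.mono fun x hx =>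
          rpow_le_mul_add_tsum_indicator hε₀ hε hA hM (hh x) hx
    _ = (A * M) ^ ε * (∫⁻ x, h x ∂μ + ∑' k, ((M ^ ε) ^ 2) ^ k * μ (S k)ᶜ) := by
        rw [lintegral_const_mul' _ _ (ENNReal.rpow_ne_top_of_nonneg hε₀.le
          (ENNReal.mul_ne_top hA' hM')), lintegral_add_right _ (Measurable.tsum hm),
          lintegral_tsum fun k => (hm k).aemeasurable]
        simp only [lintegral_indicator_const (hS _).compl]
    _ ≤ (A * M) ^ ε * (∫⁻ x, h x ∂μ + ∑' k, v * ((M ^ ε) ^ 2 * γ) ^ k) := by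
        gcongr _ * (_ + ∑' k, ?_) with k
        rw [mul_pow, mul_left_comm]
        gcongr
        exact hμ k
    _ = (A * M) ^ ε * (∫⁻ x, h x ∂μ + v * (1 - (M ^ ε) ^ 2 * γ)⁻¹) := by
        rw [ENNReal.tsum_mul_left, ENNReal.tsum_geometric]

lemma exists_rpow_sq_mul_lt_one {N γ : ℝ} (hN : 0 < N) (hγ : γ < 1) :
    ∃ ε > (0 : ℝ), ε ≤ 1 / 2 ∧ (N ^ ε) ^ 2 * γ < 1 := by
  have hlim : Tendsto (fun ε : ℝ => (N ^ ε) ^ 2 * γ) (𝓝[>] 0) (𝓝 γ) := by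
    refine tendsto_nhdsWithin_of_tendsto_nhds ?_
    exact Continuous.tendsto' (((Real.continuous_const_rpow hN.ne').pow 2).mul_const γ) _ _
      (by simp)
  obtain ⟨ε, ⟨hlt, hle⟩, hpos⟩ := ((hlim.eventually_lt_const hγ).and
    (nhdsWithin_le_nhds (ge_mem_nhds (one_half_pos (α := ℝ))))).and self_mem_nhdsWithin |>.exists
  exact ⟨ε, hpos, hle, hlt⟩

end LevelSets

section BasePoint

lemma exists_mem_closedBall_mem_contactSet {E : Type*} [NormedAddCommGroup E]
    [InnerProductSpace ℝ E] [ProperSpace E] {Ω : Set E} {u : E → ℝ} {x₀ : E} {a ρ : ℝ}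
    (hΩ : IsOpen Ω) (hu : DifferentiableOn ℝ u Ω) (hu₀ : ∀ x ∈ Ω, 0 ≤ u x) (ha : 0 < a)
    (hρ : 0 ≤ ρ) (hball : closedBall x₀ ρ ⊆ Ω) (hx₀ : u x₀ ≤ a * (ρ ^ 2 / 2)) :
    ∃ p ∈ closedBall x₀ ρ, p ∈ contactSet Ω u a (a * ρ) := by
  set w := u + a • halfSqDist x₀
  have hquad : Differentiable ℝ (a • halfSqDist x₀) :=
    ((contDiff_halfSqDist (k := 1) x₀).differentiable one_ne_zero).const_smul a
  obtain ⟨p, hp, -, hpc⟩ := exists_fderiv_eq_and_mem_contactSet hΩ (isCompact_closedBall x₀ ρ)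
    hball (hu.add hquad.differentiableOn) (mem_closedBall_self hρ) 0 fun z hz => by
      have hzρ : ρ ≤ ‖z - x₀‖ := by
        rw [← dist_eq_norm]
        exact (not_le.1 hz.2).le
      have hz₀ := hu₀ z hz.1
      simp only [Pi.add_apply, Pi.smul_apply, halfSqDist, sub_self, norm_zero, smul_eq_mul,
        _root_.zero_apply]
      calc _ ≤ a * (ρ ^ 2 / 2) := by simpa using hx₀
        _ ≤ a * (‖z - x₀‖ ^ 2 / 2) := by gcongr
        _ ≤ _ := by linarith
  have hpΩ := hball hp
  have hneg : p ∈ contactSet Ω (a • -halfSqDist x₀) (a * 1) (a * ‖p - x₀‖) := by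
    rw [contactSet_const_smul ha]
    exact mem_contactSet_neg_halfSqDist hpΩ
  have hwp : DifferentiableAt ℝ w p :=
    (hu.differentiableAt (hΩ.mem_nhds hpΩ)).add hquad.differentiableAt
  have hnegp : DifferentiableAt ℝ (a • -halfSqDist x₀) p := by
    simpa using hquad.differentiableAt.neg
  have hsum := add_mem_contactSet hwp hnegp hpc hneg
  rw [smul_neg, add_neg_cancel_right, norm_zero, zero_add, zero_add, mul_one] at hsum
  refine ⟨p, hp, contactSet_mono le_rfl ?_ hsum⟩
  gcongr
  exact mem_closedBall_iff_norm.1 hp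

end BasePoint

section Estimate

variable {n : ℕ} {lam Lam q : ℝ} {Ω : Set (EuclideanSpace ℝ (Fin n))}
  {b u : EuclideanSpace ℝ (Fin n) → ℝ}

lemma IsSupersolution.mul_norm_fderiv_sub_pucciMinus_le (hu : IsSupersolution lam Lam Ω b u)
    (hΩ : IsOpen Ω) (hlam : 0 ≤ lam) (hLam : lam ≤ Lam) {a : ℝ} (ha : 0 ≤ a)
    {x : EuclideanSpace ℝ (Fin n)} (hx : x ∈ contactSet Ω u a a) :
    b x * ‖fderiv ℝ u x‖ - pucciMinus n lam Lam (hess n u x) ≤ a * (n * Lam + b x) := by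
  have hpucci := neg_mul_le_pucciMinus hlam hLam ha
    (posSemidef_hess_add_smul_one hΩ (hu.contDiffAt hΩ hx.1) hx)
  have hdrift := mul_le_mul_of_nonneg_left hx.2.1 (hu.drift_nonneg x hx.1)
  linarith

lemma lintegral_rpow_le_measure_add {α : Type*} [MeasurableSpace α] {μ : Measure α} {p q : ℝ}
    {f : α → ℝ} {S : Set α} (hp : 0 ≤ p) (hpq : p ≤ q) (hS : MeasurableSet S)
    (hf : ∀ x ∈ S, 0 ≤ f x) :
    ∫⁻ x in S, ENNReal.ofReal (f x ^ p) ∂μ ≤ μ S + ∫⁻ x in S, ENNReal.ofReal (f x ^ q) ∂μ := by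
  simpa using lintegral_rpow_le_mul_add_mul hp hpq one_pos hS hf

lemma IsSupersolution.lintegral_le_of_measure_diff_contactSet_le
    (hu : IsSupersolution lam Lam Ω b u) (hΩ : IsOpen Ω) (hlam : 0 ≤ lam) (hLam : lam ≤ Lam)
    {A N ε : ℝ} {v γ : ℝ≥0∞} (hA : 0 < A) (hN : 1 ≤ N) (hε₀ : 0 < ε) (hε : ε ≤ 1 / 2)
    (hdecay : ∀ k : ℕ, volume (Ω \ contactSet Ω u (A * N ^ k) (A * N ^ k)) ≤ v * γ ^ k) :
    ∫⁻ x in Ω, ENNReal.ofReal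
        ((b x * ‖fderiv ℝ u x‖ - pucciMinus n lam Lam (hess n u x)) ^ ε) ≤
      ENNReal.ofReal (A * N) ^ ε *
        ((∫⁻ x in Ω, (ENNReal.ofReal (n * Lam + 1) + ENNReal.ofReal (b x))) +
          v * (1 - (ENNReal.ofReal N ^ ε) ^ 2 * γ)⁻¹) := by
  have hnLam : 0 ≤ n * Lam := by have := hlam.trans hLam; positivity
  have hrpow : ∀ x ∈ Ω, ENNReal.ofReal
      ((b x * ‖fderiv ℝ u x‖ - pucciMinus n lam Lam (hess n u x)) ^ ε) =
      ENNReal.ofReal (b x * ‖fderiv ℝ u x‖ - pucciMinus n lam Lam (hess n u x)) ^ ε :=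
    fun x hx => (ENNReal.ofReal_rpow_of_nonneg (sub_nonneg.2 (hu.pucciMinus_le x hx)) hε₀.le).symm
  rw [setLIntegral_congr_fun hΩ.measurableSet hrpow, ENNReal.ofReal_mul hA.le]
  refine lintegral_rpow_le_of_forall_measure_compl_le
    (S := fun k => contactSet Ω u (A * N ^ k) (A * N ^ k)) hε₀ hε
    (ENNReal.ofReal_pos.2 hA).ne' ENNReal.ofReal_ne_top (ENNReal.one_le_ofReal.2 hN)
    ENNReal.ofReal_ne_top
    (fun k => measurableSet_contactSet hΩ (hu.contDiffOn.of_le one_le_two))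
    (fun _ => le_add_right (ENNReal.one_le_ofReal.2 (by linarith)))
    (ae_of_all _ fun x k hx => ?_) fun k => ?_
  · have hb := hu.drift_nonneg x hx.1
    have hle := hu.mul_norm_fderiv_sub_pucciMinus_le hΩ hlam hLam (by positivity) hx
    rw [← ENNReal.ofReal_add (by positivity) hb, ← ENNReal.ofReal_pow (by positivity),
      ← ENNReal.ofReal_mul hA.le, ← ENNReal.ofReal_mul (by positivity)]
    refine ENNReal.ofReal_le_ofReal (hle.trans ?_)
    gcongr
    linarith
  · rw [Measure.restrict_apply (measurableSet_contactSet hΩ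
      (hu.contDiffOn.of_le one_le_two)).compl, Set.inter_comm, ← Set.sdiff_eq]
    exact hdecay k

lemma rpow_one_div_le_mul_rpow_of_le_rpow_mul {x y z : ℝ≥0∞} {ε : ℝ} (hε : 0 < ε)
    (h : x ≤ y ^ ε * z) : x ^ (1 / ε) ≤ y * z ^ (1 / ε) := by
  calc x ^ (1 / ε) ≤ (y ^ ε * z) ^ (1 / ε) := ENNReal.rpow_le_rpow h (by positivity)
    _ = y * z ^ (1 / ε) := by
        rw [ENNReal.mul_rpow_of_nonneg _ _ (by positivity), ← ENNReal.rpow_mul,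
          mul_one_div_cancel hε.ne', ENNReal.rpow_one]

lemma IsSupersolution.exists_forall_measure_diff_contactSet_le (hn : n ≠ 0) (hlam : 0 < lam)
    (hLam : lam ≤ Lam) (hq : n < q) (B : ℝ) {s : ℝ} (hs : s < 1) :
    ∃ N ≥ (1 : ℝ), ∃ γ > (0 : ℝ), γ < 1 ∧ ∃ L > 0, ∀ {b u : EuclideanSpace ℝ (Fin n) → ℝ},
      IsSupersolution lam Lam (ball 0 1) b u →
      ∫⁻ x in ball 0 1, ENNReal.ofReal (b x ^ q) ≤ ENNReal.ofReal B →
      ∀ {a : ℝ} {p : EuclideanSpace ℝ (Fin n)}, 0 < a → ‖p‖ ≤ s →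
        p ∈ contactSet (ball 0 1) u a a → ∀ k : ℕ,
          volume (ball 0 1 \ contactSet (ball 0 1) u (L * a * N ^ k) (L * a * N ^ k)) ≤
            volume (ball (0 : EuclideanSpace ℝ (Fin n)) 1) * ENNReal.ofReal γ ^ k := by
  obtain ⟨M, hM, H, hH, C, hC, d₀, hd₀, hest⟩ :=
    IsSupersolution.exists_forall_densityEstimate hn hlam hLam hq B
  have hv : volume (ball (0 : EuclideanSpace ℝ (Fin n)) 1) ≠ ∞ := measure_ball_lt_top.ne
  obtain ⟨N, hN, γ, hγ, hγ1, L, hL, hdecay⟩ :=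
    DensityEstimate.exists_forall_measureReal_diff_le hn hM hH hC.le hd₀
      (I := (volume (ball (0 : EuclideanSpace ℝ (Fin n)) 1) + ENNReal.ofReal B).toReal)
      ENNReal.toReal_nonneg hs
  refine ⟨N, hN, γ, hγ, hγ1, L, hL, fun {b u} hu hb {a p} ha hps hp k => ?_⟩
  have hbn : ∫⁻ x in ball 0 1, ENNReal.ofReal (b x ^ n) ≤
      volume (ball (0 : EuclideanSpace ℝ (Fin n)) 1) + ENNReal.ofReal B := by
    have h := lintegral_rpow_le_measure_add (μ := volume) n.cast_nonneg hq.le measurableSet_ball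
      hu.drift_nonneg
    simp only [Real.rpow_natCast] at h
    exact h.trans (add_le_add_right hb _)
  rw [← ofReal_measureReal (measure_ne_top_of_subset Set.sdiff_subset hv),
    ← ENNReal.ofReal_toReal hv, ← ENNReal.ofReal_pow hγ.le, ← ENNReal.ofReal_mul (by positivity)]
  refine ENNReal.ofReal_le_ofReal (hdecay (hest isOpen_ball hu hb)
    (hu.contDiffOn.of_le one_le_two) ?_ ha hps hp k)
  rwa [ENNReal.ofReal_toReal (by finiteness)]

lemma IsSupersolution.exists_forall_lintegral_rpow_le_of_mem_contactSet (hn : n ≠ 0)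
    (hlam : 0 < lam) (hLam : lam ≤ Lam) (hq : n < q) (B : ℝ) {s : ℝ} (hs : s < 1) :
    ∃ ε > (0 : ℝ), ∃ C : ℝ≥0, ∀ {b u : EuclideanSpace ℝ (Fin n) → ℝ},
      IsSupersolution lam Lam (ball 0 1) b u →
      ∫⁻ x in ball 0 1, ENNReal.ofReal (b x ^ q) ≤ ENNReal.ofReal B →
      ∀ {a : ℝ} {p : EuclideanSpace ℝ (Fin n)}, 0 < a → ‖p‖ ≤ s →
        p ∈ contactSet (ball 0 1) u a a →
        (∫⁻ x in ball 0 1, ENNReal.ofReal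
          ((b x * ‖fderiv ℝ u x‖ - pucciMinus n lam Lam (hess n u x)) ^ ε)) ^ (1 / ε) ≤
          C * ENNReal.ofReal a := by
  obtain ⟨N, hN, γ, _, hγ1, L, hL, hdecay⟩ :=
    exists_forall_measure_diff_contactSet_le hn hlam hLam hq B hs
  obtain ⟨ε, hε₀, hε, hεγ⟩ := exists_rpow_sq_mul_lt_one (one_pos.trans_le hN) hγ1
  have hratio : (ENNReal.ofReal N ^ ε) ^ 2 * ENNReal.ofReal γ < 1 := by
    rw [ENNReal.ofReal_rpow_of_pos (by positivity), ← ENNReal.ofReal_pow (by positivity),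
      ← ENNReal.ofReal_mul (by positivity)]
    exact ENNReal.ofReal_lt_one.2 hεγ
  set v := volume (ball (0 : EuclideanSpace ℝ (Fin n)) 1)
  set X := ENNReal.ofReal (n * Lam + 1) * v + (v + ENNReal.ofReal B) +
    v * (1 - (ENNReal.ofReal N ^ ε) ^ 2 * ENNReal.ofReal γ)⁻¹
  have hX : X ≠ ∞ := by
    have := ENNReal.inv_ne_top.2 (tsub_pos_of_lt hratio).ne'
    have : v ≠ ∞ := measure_ball_lt_top.ne
    finiteness
  refine ⟨ε, hε₀, (ENNReal.ofReal (L * N) * X ^ (1 / ε)).toNNReal,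
    fun {b u} hu hb {a p} ha hps hp => ?_⟩
  have hdrift : (∫⁻ x in ball 0 1, (ENNReal.ofReal (n * Lam + 1) + ENNReal.ofReal (b x))) ≤
      ENNReal.ofReal (n * Lam + 1) * v + (v + ENNReal.ofReal B) := by
    have hq1 : 1 ≤ q := (Nat.one_le_cast.2 (Nat.one_le_iff_ne_zero.2 hn)).trans hq.le
    have hb1 := lintegral_rpow_le_measure_add (μ := volume) zero_le_one hq1 measurableSet_ball
      hu.drift_nonneg
    simp only [Real.rpow_one] at hb1
    rw [lintegral_add_left measurable_const, setLIntegral_const]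
    exact add_le_add_right (hb1.trans (add_le_add_right hb _)) _
  have hint := hu.lintegral_le_of_measure_diff_contactSet_le isOpen_ball hlam.le hLam
    (by positivity) hN hε₀ hε (hdecay hu hb ha hps hp)
  have hle := rpow_one_div_le_mul_rpow_of_le_rpow_mul hε₀
    (hint.trans (mul_le_mul_right (add_le_add_left hdrift _) _))
  rwa [ENNReal.coe_toNNReal (by finiteness), mul_right_comm (ENNReal.ofReal _),
    ← ENNReal.ofReal_mul (by positivity), mul_right_comm L N a]

end Estimate

section PointwiseBound

variable {n : ℕ} {lam Lam q : ℝ}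

lemma lintegral_rpow_le_of_LpNormE_le {b : EuclideanSpace ℝ (Fin n) → ℝ}
    {Ω : Set (EuclideanSpace ℝ (Fin n))} {K : ℝ≥0∞} (hq : 0 < q) (hΩ : MeasurableSet Ω)
    (hb₀ : ∀ x ∈ Ω, 0 ≤ b x) (hb : LpNormE n q b Ω ≤ K) :
    ∫⁻ x in Ω, ENNReal.ofReal (b x ^ q) ≤ K ^ q := by
  have habs : ∀ x ∈ Ω, ENNReal.ofReal (|b x| ^ q) = ENNReal.ofReal (b x ^ q) := fun x hx => by
    rw [abs_of_nonneg (hb₀ x hx)]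
  rwa [LpNormE, one_div, ENNReal.rpow_inv_le_iff hq, setLIntegral_congr_fun hΩ habs] at hb

lemma IsSupersolution.exists_forall_lintegral_rpow_le_mul_apply (hn : n ≠ 0) (hlam : 0 < lam)
    (hLam : lam ≤ Lam) (hq : n < q) (B : ℝ) {r : ℝ} (hr : r < 1) :
    ∃ ε > (0 : ℝ), ∃ C : ℝ≥0, ∀ {b u : EuclideanSpace ℝ (Fin n) → ℝ},
      IsSupersolution lam Lam (ball 0 1) b u → (∀ x ∈ ball 0 1, 0 ≤ u x) →
      ∫⁻ x in ball 0 1, ENNReal.ofReal (b x ^ q) ≤ ENNReal.ofReal B → ∀ x₀ ∈ ball 0 r,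
        (∫⁻ x in ball 0 1, ENNReal.ofReal
          ((b x * ‖fderiv ℝ u x‖ - pucciMinus n lam Lam (hess n u x)) ^ ε)) ^ (1 / ε) ≤
          C * ENNReal.ofReal (u x₀) := by
  obtain ⟨ε, hε, C, hC⟩ := exists_forall_lintegral_rpow_le_of_mem_contactSet hn hlam hLam hq B
    (s := (1 + r) / 2) (by linarith)
  set ρ := (1 - r) / 2
  have hρ : 0 < ρ := half_pos (sub_pos.2 hr)
  set κ := (ρ ^ 2 / 2)⁻¹
  refine ⟨ε, hε, C * κ.toNNReal, fun {b u} hu hu₀ hb x₀ hx₀ => ?_⟩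
  have hx₀r : ‖x₀‖ < r := mem_ball_zero_iff.1 hx₀
  have hnorm : ∀ x ∈ closedBall x₀ ρ, ‖x‖ ≤ (1 + r) / 2 := fun x hx => by
    linarith [norm_le_of_mem_closedBall hx, show ρ = (1 - r) / 2 from rfl]
  have hball : closedBall x₀ ρ ⊆ ball 0 1 := fun x hx =>
    mem_ball_zero_iff.2 ((hnorm x hx).trans_lt (by linarith))
  have hρ1 : ρ ≤ 1 := by linarith [norm_nonneg x₀, show ρ = (1 - r) / 2 from rfl]
  have hμ₀ := hu₀ x₀ (hball (mem_closedBall_self hρ.le))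
  -- The opening of the paraboloid must be positive, whereas `u x₀` may vanish.
  have hμ : ∀ μ > u x₀, (∫⁻ x in ball 0 1, ENNReal.ofReal
      ((b x * ‖fderiv ℝ u x‖ - pucciMinus n lam Lam (hess n u x)) ^ ε)) ^ (1 / ε) ≤
      C * ENNReal.ofReal (μ * κ) := fun μ hμ => by
    have ha : 0 < μ * κ := mul_pos (hμ₀.trans_lt hμ) (by positivity)
    obtain ⟨p, hp, hpc⟩ := exists_mem_closedBall_mem_contactSet isOpen_ball
      (hu.contDiffOn.differentiableOn two_ne_zero) hu₀ ha hρ.le hball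
      (hμ.le.trans_eq (inv_mul_cancel_right₀ (by positivity) μ).symm)
    exact hC hu hb ha (hnorm p hp)
      (contactSet_mono le_rfl (mul_le_of_le_one_right ha.le hρ1) hpc)
  rw [ENNReal.coe_mul, mul_assoc, mul_comm (κ.toNNReal : ℝ≥0∞), ← ENNReal.ofReal,
    ← ENNReal.ofReal_mul hμ₀]
  have hlim : Tendsto (fun μ => C * ENNReal.ofReal (μ * κ)) (𝓝[>] u x₀)
      (𝓝 (C * ENNReal.ofReal (u x₀ * κ))) := by
    refine Tendsto.mono_left ?_ nhdsWithin_le_nhds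
    exact ENNReal.Tendsto.const_mul (ENNReal.tendsto_ofReal (tendsto_id.mul_const κ))
      (.inr ENNReal.coe_ne_top)
  exact ge_of_tendsto hlim (eventually_nhdsWithin_of_forall hμ)

end PointwiseBound

end QuantitativeMaximumPrinciple

open QuantitativeMaximumPrinciple in
theorem interior_quantitative_strong_maximum_principle_general {n : ℕ} (hn : n ≠ 0)
    {lam Lam : ℝ} (hlam : 0 < lam) (hLam : lam ≤ Lam) {q : ℝ} (hq : n < q) (K : NNReal)
    {r : ℝ} (hr0 : 0 < r) (hr1 : r < 1) :
    ∃ ε c : ℝ, 0 < ε ∧ 0 < c ∧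
      ∀ b u : EuclideanSpace ℝ (Fin n) → ℝ,
        (∀ x ∈ Metric.ball (0 : EuclideanSpace ℝ (Fin n)) 1, 0 ≤ b x) →
        LpNormE n q b (Metric.ball 0 1) ≤ K →
        ContDiffOn ℝ 2 u (Metric.ball 0 1) →
        (∀ x ∈ Metric.ball (0 : EuclideanSpace ℝ (Fin n)) 1, 0 ≤ u x) →
        (∀ x ∈ Metric.ball (0 : EuclideanSpace ℝ (Fin n)) 1,
          pucciMinus n lam Lam (hess n u x) - b x * gradNorm n u x ≤ 0) →
        ENNReal.ofReal c *
            (∫⁻ x in Metric.ball (0 : EuclideanSpace ℝ (Fin n)) 1,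
              ENNReal.ofReal
                ((-(pucciMinus n lam Lam (hess n u x) - b x * gradNorm n u x)) ^ ε)) ^ (1 / ε)
          ≤ ENNReal.ofReal (⨅ x : Metric.ball (0 : EuclideanSpace ℝ (Fin n)) r, u x.1) := by
  have hq₀ : 0 < q := n.cast_nonneg.trans_lt hq
  obtain ⟨ε, hε, C, hC⟩ := IsSupersolution.exists_forall_lintegral_rpow_le_mul_apply
    hn hlam hLam hq (K ^ q : NNReal) hr1
  refine ⟨ε, (C + 1)⁻¹, hε, by positivity, fun b u hb₀ hb hu hu₀ hg => ?_⟩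
  have hsuper : IsSupersolution lam Lam (Metric.ball 0 1) b u :=
    ⟨hu, hb₀, fun x hx => sub_nonpos.1 (hg x hx)⟩
  have hbq := lintegral_rpow_le_of_LpNormE_le hq₀ measurableSet_ball hb₀ hb
  rw [← ENNReal.coe_rpow_of_nonneg _ hq₀.le, ← ENNReal.ofReal_coe_nnreal] at hbq
  have : Nonempty (Metric.ball (0 : EuclideanSpace ℝ (Fin n)) r) :=
    ⟨⟨0, Metric.mem_ball_self hr0⟩⟩
  rw [ENNReal.ofReal_iInf]
  refine le_iInf fun x₀ => ?_
  simp only [neg_sub]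
  rw [ENNReal.ofReal_inv_of_pos (by positivity), ← NNReal.coe_one, ← NNReal.coe_add,
    ENNReal.ofReal_coe_nnreal, ENNReal.inv_mul_le_iff (by simp) ENNReal.coe_ne_top]
  refine (hC hsuper hu₀ hbq x₀ x₀.2).trans ?_
  gcongr
  exact le_self_add

/-- Interior quantitative strong maximum principle. -/
theorem interior_quantitative_strong_maximum_principle
    (n : ℕ) (hn : 2 ≤ n) (lam Lam : ℝ) (hlam : 0 < lam) (hLam : lam ≤ Lam)
    (q K : ℝ) (hq : (n : ℝ) < q) (hK : 0 < K)
    (r : ℝ) (hr0 : 0 < r) (hr1 : r < 1) :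
    ∃ ε c : ℝ, 0 < ε ∧ 0 < c ∧
      ∀ b u : EuclideanSpace ℝ (Fin n) → ℝ,
        ContinuousOn b (Metric.ball 0 1) →
        (∀ x ∈ Metric.ball (0 : EuclideanSpace ℝ (Fin n)) 1, 0 ≤ b x) →
        LpNormE n q b (Metric.ball 0 1) ≤ ENNReal.ofReal K →
        ContDiffOn ℝ 2 u (Metric.ball 0 1) →
        (∀ x ∈ Metric.ball (0 : EuclideanSpace ℝ (Fin n)) 1, 0 ≤ u x) →
        (∀ x ∈ Metric.ball (0 : EuclideanSpace ℝ (Fin n)) 1,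
          pucciMinus n lam Lam (hess n u x) - b x * gradNorm n u x ≤ 0) →
        ENNReal.ofReal c *
            (∫⁻ x in Metric.ball (0 : EuclideanSpace ℝ (Fin n)) 1,
              ENNReal.ofReal
                ((-(pucciMinus n lam Lam (hess n u x) - b x * gradNorm n u x)) ^ ε)) ^ (1 / ε)
          ≤ ENNReal.ofReal (⨅ x : Metric.ball (0 : EuclideanSpace ℝ (Fin n)) r, u x.1) := by
  obtain ⟨ε, c, hε, hc, h⟩ := interior_quantitative_strong_maximum_principle_general
    (by lia) hlam hLam hq K.toNNReal hr0 hr1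
  exact ⟨ε, c, hε, hc, fun b u _ => h b u⟩
end
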